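/- arXiv:2507.13029 — 2 statements merged into one kernel-verified Lean document; each statement's English description precedes it below -/
import Mathlib

section
/- There exists ε₀ > 0 such that for every ε ∈ (0, ε₀), every integer q ≥ 1, and every η₁ > 0, there exist η ∈ (0, η₁) and a bijection g : ℝ² → ℝ² such that: (i) g and g⁻¹ are C^∞ and g preserves 2-dimensional Lebesgue measure; (ii) g equals the identity outside a compact subset of the open punctured disk {x ∈ ℝ² : 0 < ‖x‖ < 1}; (iii) g commutes with the rotation of ℝ² by angle 2π/q about the origin; (iv) ‖g(x) − x‖ ≤ ε and ‖g⁻¹(x) − x‖ ≤ ε for all x ∈ ℝ²; and (v) for every y ∈ [−1+ε, 1−ε], (1/2)·Leb{ y' ∈ [−1, 1] : for every 1-Lipschitz f : ℝ² → ℝ, ∫ f d(g_*μ_y) − ∫ f d(g_*μ_{y'}) ≤ 3η } ≤ exp(−η^{−2+ε}). (Corollary 4.2, disk case.) -/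
open MeasureTheory Metric
open scoped ENNReal

/-- The measure-preserving polar-type parametrization of the unit disk by the cylinder:
`π_D(θ, y) = √((1+y)/2)·(cos(2πθ), sin(2πθ))`. -/
noncomputable def piD (θ y : ℝ) : EuclideanSpace ℝ (Fin 2) :=
  (EuclideanSpace.equiv (Fin 2) ℝ).symm
    ![Real.sqrt ((1 + y) / 2) * Real.cos (2 * Real.pi * θ),
      Real.sqrt ((1 + y) / 2) * Real.sin (2 * Real.pi * θ)]

/-- The uniform probability measure `μ_y` on the circle of radius `√((1+y)/2)` centered at the
origin of the plane: the pushforward of Lebesgue measure on `[0,1]` under `θ ↦ π_D(θ,y)`. -/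
noncomputable def diskCircleMeasure (y : ℝ) : Measure (EuclideanSpace ℝ (Fin 2)) :=
  Measure.map (fun θ => piD θ y) (volume.restrict (Set.Icc (0 : ℝ) 1))

/-- The rotation of the plane by angle `2πα` about the origin. -/
noncomputable def rotO (α : ℝ) (x : EuclideanSpace ℝ (Fin 2)) : EuclideanSpace ℝ (Fin 2) :=
  (EuclideanSpace.equiv (Fin 2) ℝ).symm
    ![Real.cos (2 * Real.pi * α) * x 0 - Real.sin (2 * Real.pi * α) * x 1,
      Real.sin (2 * Real.pi * α) * x 0 + Real.cos (2 * Real.pi * α) * x 1]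

/-!
On the cylinder of angles `θ` and heights `y`, conjugate the horizontal shear
`(θ, y) ↦ (θ + twist y, y)` by the vertical shear `(θ, y) ↦ (θ, y + rise θ)`, and transport the
result to the disk by `piD`. Both profiles are smoothed step functions.

The heights are cut into thin slots. A block of `2 ^ N` consecutive slots carries all the binary
words of length `N`, and the slot at height `y` is twisted by one cell of angles exactly if it
displays the digit `true`. Over the even cells, the vertical shear moves the slots by whole blocks,
so that a circle goes through all the digits of its word; over the odd cells, it reaches one of `M`
levels, so that a point over an even cell whose digit is `true` leaves its circle for a level that
depends on the cell. Two circles of the same block whose words differ in a fixed proportion of the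
digits thus have images that are far apart for the Kantorovich distance, on the scale `η ∼ 1 / M`.
By a Chernoff bound on Hamming balls, the circles whose images are pairwise close therefore fill
only a fraction `(25 / 28) ^ N` of each block. With `N = M ^ 2` digits this is `exp (-c * η ^ (-2))`
for some `c`, which is less than `exp (-η ^ (-2 + ε))` for small `η`.
-/

/-! ### Smooth step functions -/

section SmoothStep

/-- A smooth plateau: it vanishes outside `(0, 1)` and equals `1` on `[ρ, 1 - ρ]`. -/
noncomputable def plateau (ρ t : ℝ) : ℝ :=
  Real.smoothTransition (t / ρ) * Real.smoothTransition ((1 - t) / ρ)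

/-- A smooth version of the step function `x ↦ v ⌊x / w⌋`, which keeps the value `v n` on
`cellCore w ρ n` and descends to `0` at the ends of each cell. -/
noncomputable def smoothStep (w ρ : ℝ) (v : ℤ → ℝ) (x : ℝ) : ℝ :=
  v ⌊x / w⌋ * plateau ρ (Int.fract (x / w))

/-- The `n`-th cell `[w n, w (n + 1)]` of width `w`, with a margin of relative width `ρ` removed at
both ends. -/
def cellCore (w ρ : ℝ) (n : ℤ) : Set ℝ :=
  Set.Icc (w * (n + ρ)) (w * (n + 1 - ρ))

variable {w ρ t x : ℝ} {v : ℤ → ℝ} {n : ℤ}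

lemma plateau_mem_Icc : plateau ρ t ∈ Set.Icc 0 1 :=
  ⟨mul_nonneg (Real.smoothTransition.nonneg _) (Real.smoothTransition.nonneg _),
    mul_le_one₀ (Real.smoothTransition.le_one _) (Real.smoothTransition.nonneg _)
      (Real.smoothTransition.le_one _)⟩

lemma plateau_of_nonpos (hρ : 0 ≤ ρ) (ht : t ≤ 0) : plateau ρ t = 0 := by
  rw [plateau, Real.smoothTransition.zero_of_nonpos (div_nonpos_of_nonpos_of_nonneg ht hρ),
    zero_mul]

lemma plateau_of_one_le (hρ : 0 ≤ ρ) (ht : 1 ≤ t) : plateau ρ t = 0 := by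
  rw [plateau, Real.smoothTransition.zero_of_nonpos (x := (1 - t) / ρ)
    (div_nonpos_of_nonpos_of_nonneg (sub_nonpos.mpr ht) hρ), mul_zero]

lemma plateau_of_mem_Icc (hρ : 0 < ρ) (ht : t ∈ Set.Icc ρ (1 - ρ)) : plateau ρ t = 1 := by
  rw [plateau, Real.smoothTransition.one_of_one_le ((one_le_div hρ).mpr ht.1),
    Real.smoothTransition.one_of_one_le ((one_le_div hρ).mpr (by linarith [ht.2])), one_mul]

lemma contDiff_plateau {k : ℕ∞} : ContDiff ℝ k (plateau ρ) :=
  (Real.smoothTransition.contDiff.comp (by fun_prop)).mul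
    (Real.smoothTransition.contDiff.comp (by fun_prop))

lemma contDiff_smoothStep (hρ : 0 ≤ ρ) {k : ℕ∞} : ContDiff ℝ k (smoothStep w ρ v) := by
  refine contDiff_iff_contDiffAt.mpr fun x ↦ ?_
  set m := ⌊x / w⌋
  have near : ∀ᶠ y in nhds x, y / w ∈ Set.Ioo (m - 1 : ℝ) (m + 1) :=
    (continuous_id.div_const w).continuousAt.eventually_mem <|
      Ioo_mem_nhds ((sub_one_lt _).trans_le (Int.floor_le _)) (Int.lt_floor_add_one _)
  have eq : smoothStep w ρ v =ᶠ[nhds x] fun y ↦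
      v m * plateau ρ (y / w - m) + v (m - 1) * plateau ρ (y / w - (m - 1)) := by
    filter_upwards [near] with y hy
    rcases lt_or_ge (y / w) m with hlt | hge
    · have floor_eq : ⌊y / w⌋ = m - 1 := by
        rw [Int.floor_eq_iff]; push_cast; constructor <;> linarith [hy.1]
      rw [plateau_of_nonpos hρ (sub_nonpos.mpr hlt.le), smoothStep, Int.fract, floor_eq]
      push_cast
      ring
    · have floor_eq : ⌊y / w⌋ = m := Int.floor_eq_iff.mpr ⟨hge, hy.2⟩
      rw [plateau_of_one_le (t := y / w - (m - 1)) hρ (by linarith), smoothStep, Int.fract,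
        floor_eq]
      ring
  refine ContDiffAt.congr_of_eventuallyEq (ContDiff.contDiffAt ?_) eq
  exact (contDiff_const.mul (contDiff_plateau.comp (by fun_prop))).add
    (contDiff_const.mul (contDiff_plateau.comp (by fun_prop)))

lemma smoothStep_mem_Icc {C : ℝ} (hv : ∀ n, v n ∈ Set.Icc 0 C) :
    smoothStep w ρ v x ∈ Set.Icc 0 C :=
  ⟨mul_nonneg (hv _).1 plateau_mem_Icc.1,
    (mul_le_of_le_one_right (hv _).1 plateau_mem_Icc.2).trans (hv _).2⟩

lemma smoothStep_eq_zero (h : v ⌊x / w⌋ = 0) : smoothStep w ρ v x = 0 := by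
  rw [smoothStep, h, zero_mul]

lemma periodic_smoothStep (hw : w ≠ 0) {T : ℤ} (hv : v.Periodic T) :
    (smoothStep w ρ v).Periodic (w * T) := fun x ↦ by
  have shift : (x + w * T) / w = x / w + T := by field_simp
  simp only [smoothStep, shift, Int.floor_add_intCast, Int.fract_add_intCast, hv _]

lemma mul_floor_div_mem_Ioc (hw : 0 < w) (x : ℝ) : w * ⌊x / w⌋ ∈ Set.Ioc (x - w) x := by
  have lower := (div_lt_iff₀ hw).mp (Int.lt_floor_add_one (x / w))
  have upper := (le_div_iff₀ hw).mp (Int.floor_le (x / w))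
  constructor <;> linarith

lemma mem_cellCore (hw : 0 < w) : x ∈ cellCore w ρ n ↔ x / w ∈ Set.Icc (n + ρ) (n + 1 - ρ) := by
  rw [cellCore, Set.mem_Icc, Set.mem_Icc, le_div_iff₀ hw, div_le_iff₀ hw, mul_comm w, mul_comm w]

lemma floor_div_of_mem_cellCore (hw : 0 < w) (hρ : 0 < ρ) (hx : x ∈ cellCore w ρ n) :
    ⌊x / w⌋ = n := by
  obtain ⟨hl, hu⟩ := (mem_cellCore hw).mp hx
  exact Int.floor_eq_iff.mpr ⟨by linarith, by linarith⟩

lemma smoothStep_of_mem_cellCore (hw : 0 < w) (hρ : 0 < ρ) (hx : x ∈ cellCore w ρ n) :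
    smoothStep w ρ v x = v n := by
  obtain ⟨hl, hu⟩ := (mem_cellCore hw).mp hx
  rw [smoothStep, Int.fract, floor_div_of_mem_cellCore hw hρ hx,
    plateau_of_mem_Icc hρ ⟨by linarith, by linarith⟩, mul_one]

lemma add_mem_cellCore (hx : x ∈ cellCore w ρ n) (m : ℤ) : x + w * m ∈ cellCore w ρ (n + m) := by
  simp only [cellCore, Set.mem_Icc, Int.cast_add] at hx ⊢
  constructor <;> linarith [hx.1, hx.2]

lemma cellCore_subset_Icc (hw : 0 < w) (hρ : 0 ≤ ρ) :
    cellCore w ρ n ⊆ Set.Icc (w * n) (w * (n + 1)) :=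
  Set.Icc_subset_Icc (by gcongr; linarith) (by gcongr; linarith)

lemma pairwiseDisjoint_cellCore (hw : 0 < w) (hρ : 0 < ρ) (s : Set ℤ) :
    s.PairwiseDisjoint (cellCore w ρ) := fun _ _ _ _ hne ↦
  Set.disjoint_left.mpr fun _ hm hn ↦ hne <|
    (floor_div_of_mem_cellCore hw hρ hm).symm.trans (floor_div_of_mem_cellCore hw hρ hn)

lemma measurableSet_biUnion_cellCore (s : Finset ℤ) :
    MeasurableSet (⋃ n ∈ s, cellCore w ρ n) :=
  s.measurableSet_biUnion fun _ _ ↦ measurableSet_Icc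

lemma volume_real_biUnion_cellCore (hw : 0 < w) (hρ : 0 < ρ) (hρ' : ρ ≤ 1 / 2) (s : Finset ℤ) :
    volume.real (⋃ n ∈ s, cellCore w ρ n) = s.card * (w * (1 - 2 * ρ)) := by
  have core_volume (n : ℤ) : volume.real (cellCore w ρ n) = w * (1 - 2 * ρ) := by
    rw [cellCore, Real.volume_real_Icc_of_le (by gcongr; linarith)]
    ring
  rw [measureReal_biUnion_finset (pairwiseDisjoint_cellCore hw hρ _) (fun _ _ ↦ measurableSet_Icc)
    fun _ _ ↦ measure_Icc_lt_top.ne]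
  simp only [core_volume, Finset.sum_const, nsmul_eq_mul]

lemma biUnion_cellCore_subset_Icc (hw : 0 < w) (hρ : 0 ≤ ρ) {a b : ℤ} {s : Finset ℤ}
    (hs : s ⊆ Finset.Ico a b) : ⋃ n ∈ s, cellCore w ρ n ⊆ Set.Icc (w * a) (w * b) := by
  refine Set.iUnion₂_subset fun n hn ↦ (cellCore_subset_Icc hw hρ).trans ?_
  obtain ⟨ha, hb⟩ := Finset.mem_Ico.mp (hs hn)
  exact Set.Icc_subset_Icc (by gcongr) (by gcongr; exact_mod_cast hb)

lemma volume_real_Icc_diff_biUnion_cellCore (hw : 0 < w) (hρ : 0 < ρ) (hρ' : ρ ≤ 1 / 2) {a b : ℤ}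
    (hab : a ≤ b) :
    volume.real (Set.Icc (w * a) (w * b) \ ⋃ n ∈ Finset.Ico a b, cellCore w ρ n) =
      (b - a) * (2 * w * ρ) := by
  have length : volume.real (Set.Icc (w * a) (w * b)) = w * (b - a) := by
    rw [Real.volume_real_Icc_of_le (by gcongr)]
    ring
  have count : (((b - a).toNat : ℤ) : ℝ) = b - a := by
    rw [Int.toNat_of_nonneg (sub_nonneg.mpr hab)]
    push_cast
    rfl
  rw [measureReal_sdiff (biUnion_cellCore_subset_Icc hw hρ.le subset_rfl)
    (measurableSet_biUnion_cellCore _) measure_Icc_lt_top.ne,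
    volume_real_biUnion_cellCore hw hρ hρ', Int.card_Ico, length, ← Int.cast_natCast, count]
  ring

open scoped Classical in
lemma volume_real_le_card_cells_mul_add (hw : 0 < w) (hρ : 0 < ρ) (hρ' : ρ ≤ 1 / 2) {a b : ℤ}
    (hab : a ≤ b) {S : Set ℝ} (hS : S ⊆ Set.Icc (w * a) (w * b)) :
    volume.real S ≤
      {n ∈ Finset.Ico a b | (cellCore w ρ n ∩ S).Nonempty}.card * w + (b - a) * (2 * w * ρ) := by
  set met := {n ∈ Finset.Ico a b | (cellCore w ρ n ∩ S).Nonempty}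
  set margins := Set.Icc (w * a) (w * b) \ ⋃ n ∈ Finset.Ico a b, cellCore w ρ n
  have cover : S ⊆ (⋃ n ∈ met, cellCore w ρ n) ∪ margins := fun x hx ↦ by
    by_cases hcore : x ∈ ⋃ n ∈ Finset.Ico a b, cellCore w ρ n
    · obtain ⟨n, hn, hxn⟩ := Set.mem_iUnion₂.mp hcore
      exact .inl (Set.mem_biUnion (Finset.mem_filter.mpr ⟨hn, x, hxn, hx⟩) hxn)
    · exact .inr ⟨hS hx, hcore⟩
  have cover_finite : volume ((⋃ n ∈ met, cellCore w ρ n) ∪ margins) ≠ ∞ :=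
    (measure_union_lt_top (measure_biUnion_lt_top met.finite_toSet fun _ _ ↦ measure_Icc_lt_top)
      (measure_lt_top_of_subset Set.sdiff_subset measure_Icc_lt_top.ne)).ne
  calc volume.real S
    _ ≤ volume.real (⋃ n ∈ met, cellCore w ρ n) + volume.real margins :=
      (measureReal_mono cover cover_finite).trans (measureReal_union_le _ _)
    _ = met.card * (w * (1 - 2 * ρ)) + (b - a) * (2 * w * ρ) := by
      rw [volume_real_biUnion_cellCore hw hρ hρ',
        volume_real_Icc_diff_biUnion_cellCore hw hρ hρ' hab]
    _ ≤ met.card * w + (b - a) * (2 * w * ρ) := by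
      gcongr
      nlinarith

lemma card_le_mul_of_card_block_le {R : ℕ} {T : ℝ} (hR : 0 < R) {i j : ℤ} (hij : i ≤ j)
    {s : Finset ℤ} (hs : s ⊆ Finset.Ico (R * i : ℤ) (R * j))
    (hT : ∀ b : ℤ, ({n ∈ s | n / R = b}.card : ℝ) ≤ T) : s.card ≤ T * (j - i) := by
  have hR' : (0 : ℤ) < R := by exact_mod_cast hR
  have block_mem : ∀ n ∈ s, n / R ∈ Finset.Ico i j := fun n hn ↦ by
    obtain ⟨hi, hj⟩ := Finset.mem_Ico.mp (hs hn)
    rw [mul_comm] at hi hj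
    exact Finset.mem_Ico.mpr
      ⟨(Int.le_ediv_iff_mul_le hR').mpr hi, (Int.ediv_lt_iff_lt_mul hR').mpr hj⟩
  calc (s.card : ℝ)
    _ = ∑ b ∈ Finset.Ico i j, ({n ∈ s | n / R = b}.card : ℝ) := by
      rw [Finset.card_eq_sum_card_fiberwise block_mem, Nat.cast_sum]
    _ ≤ (Finset.Ico i j).card • T := Finset.sum_le_card_nsmul _ _ _ fun b _ ↦ hT b
    _ = T * (j - i) := by
      rw [Int.card_Ico, nsmul_eq_mul, ← Int.cast_natCast, Int.toNat_of_nonneg (sub_nonneg.mpr hij),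
        Int.cast_sub, mul_comm]

end SmoothStep

/-! ### Hamming balls -/

section Hamming

variable {ι : Type*} [Fintype ι]

lemma sum_pow_hammingDist {β : ι → Type*} [DecidableEq ι] [∀ i, Fintype (β i)]
    [∀ i, DecidableEq (β i)] (c₀ : ∀ i, β i) (x : ℝ) :
    ∑ c, x ^ hammingDist c c₀ = ∏ i, (1 + (Fintype.card (β i) - 1) * x) := by
  have factor (i : ι) : ∑ b, (if b ≠ c₀ i then x else 1) = 1 + (Fintype.card (β i) - 1) * x := by
    rw [← Finset.add_sum_erase _ _ (Finset.mem_univ (c₀ i)), if_neg (not_not.mpr rfl),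
      Finset.sum_congr rfl fun b hb ↦ if_pos (Finset.ne_of_mem_erase hb), Finset.sum_const,
      Finset.card_erase_of_mem (Finset.mem_univ _), nsmul_eq_mul, Finset.card_univ,
      Nat.cast_pred (Fintype.card_pos_iff.mpr ⟨c₀ i⟩)]
  simp only [← factor, Finset.prod_univ_sum, Fintype.piFinset_univ, Finset.prod_ite,
    Finset.prod_const, one_pow, mul_one, hammingDist]

lemma card_hammingBall_mul_pow_le {β : ι → Type*} [DecidableEq ι] [∀ i, Fintype (β i)]
    [∀ i, DecidableEq (β i)] (c₀ : ∀ i, β i) (k : ℕ) {x : ℝ} (hx : 0 ≤ x) (hx' : x ≤ 1) :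
    Finset.card {c | hammingDist c c₀ ≤ k} * x ^ k ≤ ∏ i, (1 + (Fintype.card (β i) - 1) * x) := by
  calc Finset.card {c | hammingDist c c₀ ≤ k} * x ^ k
    _ = ∑ c with hammingDist c c₀ ≤ k, x ^ k := by rw [Finset.sum_const, nsmul_eq_mul]
    _ ≤ ∑ c with hammingDist c c₀ ≤ k, x ^ hammingDist c c₀ :=
      Finset.sum_le_sum fun c hc ↦ pow_le_pow_of_le_one hx hx' (Finset.mem_filter.mp hc).2
    _ ≤ ∑ c, x ^ hammingDist c c₀ :=
      Finset.sum_le_univ_sum_of_nonneg fun c ↦ pow_nonneg hx _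
    _ = _ := sum_pow_hammingDist c₀ x

lemma card_quarter_hammingBall_le [DecidableEq ι] (c₀ : ι → Bool) :
    (Finset.card {c | 4 * hammingDist c c₀ < Fintype.card ι} : ℝ) ≤ (25 / 14) ^ Fintype.card ι := by
  set N := Fintype.card ι
  set B : Finset (ι → Bool) := {c | hammingDist c c₀ ≤ N / 4}
  have subset : ({c | 4 * hammingDist c c₀ < N} : Finset (ι → Bool)) ⊆ B := fun c hc ↦ by
    simp only [B, Finset.mem_filter, Finset.mem_univ, true_and] at hc ⊢
    lia
  have chernoff : (B.card : ℝ) * (1 / 4) ^ (N / 4) ≤ (5 / 4) ^ N :=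
    (card_hammingBall_mul_pow_le c₀ (N / 4) (by norm_num) (by norm_num)).trans_eq <| by
      rw [Finset.prod_const, Finset.card_univ, Fintype.card_bool]
      norm_num [N]
  have pow_le : ((7 : ℝ) / 10) ^ N ≤ (1 / 4) ^ (N / 4) :=
    calc ((7 : ℝ) / 10) ^ N ≤ (7 / 10) ^ (4 * (N / 4)) :=
          pow_le_pow_of_le_one (by norm_num) (by norm_num) (Nat.mul_div_le N 4)
      _ ≤ (1 / 4) ^ (N / 4) := by rw [pow_mul]; gcongr; norm_num
  calc _ ≤ (B.card : ℝ) := by exact_mod_cast Finset.card_le_card subset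
    _ ≤ (5 / 4) ^ N / (7 / 10) ^ N := by
      rw [le_div_iff₀ (by positivity)]
      exact (mul_le_mul_of_nonneg_left pow_le (Nat.cast_nonneg _)).trans chernoff
    _ = (25 / 14) ^ N := by rw [← div_pow]; norm_num

end Hamming

/-! ### Kantorovich distance -/

section Kantorovich

variable {Ω X : Type*} [MeasurableSpace Ω] [PseudoMetricSpace X] [MeasurableSpace X]

/-- The Kantorovich distance of `μ` and `ν` is at most `r`, in its dual form. -/
def KantorovichLE (μ ν : Measure X) (r : ℝ) : Prop :=
  ∀ f : X → ℝ, LipschitzWith 1 f → (∫ x, f x ∂μ) - ∫ x, f x ∂ν ≤ r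

namespace KantorovichLE

variable {μ ν ξ : Measure X} {r s : ℝ}

lemma symm (h : KantorovichLE μ ν r) : KantorovichLE ν μ r := fun f hf ↦ by
  have := h (fun x ↦ -f x) hf.neg
  simp only [integral_neg] at this
  linarith

lemma trans (hμν : KantorovichLE μ ν r) (hνξ : KantorovichLE ν ξ s) :
    KantorovichLE μ ξ (r + s) := fun f hf ↦ by
  linarith [hμν f hf, hνξ f hf]

end KantorovichLE

variable [OpensMeasurableSpace X] {κ : Measure Ω} [IsProbabilityMeasure κ]

lemma kantorovichLE_separation {F F' : Ω → X} {d D r : ℝ} {s t : Set Ω}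
    (hF : Measurable F) (hF' : Measurable F') (hs : MeasurableSet s) (ht : MeasurableSet t)
    (ht₀ : t.Nonempty) (hsep : ∀ x ∈ s, ∀ y ∈ t, d ≤ dist (F x) (F' y))
    (hD : ∀ x y, dist (F x) (F' y) ≤ D) (hD' : ∀ x y, dist (F' x) (F' y) ≤ D)
    (hr : KantorovichLE (κ.map F) (κ.map F') r) :
    κ.real s * d - κ.real tᶜ * D ≤ r := by
  obtain ⟨y₀, hy₀⟩ := ht₀
  set φ : X → ℝ := fun z ↦ infDist z (F' '' t)
  have hφ : LipschitzWith 1 φ := lipschitz_infDist_pt _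
  have hφ₀ (z : X) : 0 ≤ φ z := infDist_nonneg
  have φ_le (z : X) : φ z ≤ dist z (F' y₀) := infDist_le_dist_of_mem (Set.mem_image_of_mem _ hy₀)
  have integrable {G : Ω → X} (hG : Measurable G) (hb : ∀ x, dist (G x) (F' y₀) ≤ D) :
      Integrable (fun x ↦ φ (G x)) κ :=
    .of_mem_Icc 0 D (hφ.continuous.measurable.comp hG).aemeasurable
      (.of_forall fun x ↦ ⟨hφ₀ _, (φ_le _).trans (hb x)⟩)
  have lower : κ.real s * d ≤ ∫ x, φ (F x) ∂κ := by
    rw [← smul_eq_mul, ← integral_indicator_const d hs]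
    refine integral_mono ((integrable_const d).indicator hs) (integrable hF fun x ↦ hD x _)
      (Set.indicator_le' (fun x hx ↦ ?_) fun x _ ↦ hφ₀ _)
    refine (le_infDist ⟨_, Set.mem_image_of_mem _ hy₀⟩).mpr ?_
    rintro _ ⟨y, hy, rfl⟩
    exact hsep x hx y hy
  have upper : ∫ x, φ (F' x) ∂κ ≤ κ.real tᶜ * D := by
    rw [← smul_eq_mul, ← integral_indicator_const D ht.compl]
    refine integral_mono (integrable hF' fun x ↦ hD' x _)
      ((integrable_const D).indicator ht.compl) fun x ↦ ?_
    by_cases hx : x ∈ t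
    · rw [Set.indicator_of_notMem (by simpa using hx)]
      exact (infDist_zero_of_mem (Set.mem_image_of_mem _ hx)).le
    · rw [Set.indicator_of_mem hx]
      exact (φ_le _).trans (hD' x _)
  have := hr φ hφ
  rw [integral_map hF.aemeasurable hφ.continuous.measurable.aestronglyMeasurable,
    integral_map hF'.aemeasurable hφ.continuous.measurable.aestronglyMeasurable] at this
  linarith

end Kantorovich

/-! ### Local inverses, volume and shears -/

section Calculus

lemma contDiffAt_of_contDiffAt_comp {𝕜 E F G : Type*} [RCLike 𝕜] [NormedAddCommGroup E]
    [NormedSpace 𝕜 E] [CompleteSpace E] [NormedAddCommGroup F] [NormedSpace 𝕜 F]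
    [NormedAddCommGroup G] [NormedSpace 𝕜 G] {n : WithTop ℕ∞} (hn : n ≠ 0) {f : E → F}
    {f' : E ≃L[𝕜] F} {g : F → G} {x : E} (hf : ContDiffAt 𝕜 n f x)
    (hf' : HasFDerivAt f (f' : E →L[𝕜] F) x) (hgf : ContDiffAt 𝕜 n (g ∘ f) x) :
    ContDiffAt 𝕜 n g (f x) := by
  have right_inv : ∀ᶠ y in nhds (f x), f (hf.localInverse hf' hn y) = y :=
    (hf.hasStrictFDerivAt' hf' hn).eventually_right_inverse
  have comp_smooth : ContDiffAt 𝕜 n ((g ∘ f) ∘ hf.localInverse hf' hn) (f x) := by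
    refine ContDiffAt.comp _ ?_ (hf.to_localInverse hf' hn)
    rwa [hf.localInverse_apply_image hf' hn]
  refine comp_smooth.congr_of_eventuallyEq ?_
  filter_upwards [right_inv] with y hy
  rw [Function.comp_apply, Function.comp_apply, hy]

lemma measurePreserving_of_abs_det_fderiv_symm {E : Type*} [NormedAddCommGroup E] [NormedSpace ℝ E]
    [FiniteDimensional ℝ E] [MeasurableSpace E] [BorelSpace E] (μ : Measure E)
    [μ.IsAddHaarMeasure] {f : E ≃ E} (hf : Measurable f)
    (hf' : ∀ x, DifferentiableAt ℝ f.symm x) (hdet : ∀ x, |(fderiv ℝ f.symm x).det| = 1) :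
    MeasurePreserving f μ μ := by
  refine ⟨hf, Measure.ext fun s hs ↦ ?_⟩
  rw [Measure.map_apply hf hs, ← f.image_symm_eq_preimage,
    ← lintegral_abs_det_fderiv_eq_addHaar_image μ hs
      (fun x _ ↦ (hf' x).hasFDerivAt.hasFDerivWithinAt) f.symm.injective.injOn]
  simp only [hdet, ENNReal.ofReal_one, setLIntegral_one]

variable {E : Type*} [NormedAddCommGroup E] [NormedSpace ℝ E]

lemma det_fderiv_comp {g f : E → E} {x : E} (hg : DifferentiableAt ℝ g (f x))
    (hf : DifferentiableAt ℝ f x) :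
    (fderiv ℝ (g ∘ f) x).det = (fderiv ℝ g (f x)).det * (fderiv ℝ f x).det := by
  rw [fderiv_comp x hg hf]
  exact LinearMap.det_comp _ _

/-- The shear of `E` in direction `v` whose size on the level sets of `φ` is prescribed by `f`. -/
def shear (φ : E →L[ℝ] ℝ) (v : E) (f : ℝ → ℝ) (x : E) : E :=
  x + f (φ x) • v

variable {φ : E →L[ℝ] ℝ} {v : E} {f : ℝ → ℝ}

lemma shear_neg_shear (hv : φ v = 0) (x : E) : shear φ v (-f) (shear φ v f x) = x := by
  simp [shear, hv]

lemma contDiff_shear {n : WithTop ℕ∞} (hf : ContDiff ℝ n f) : ContDiff ℝ n (shear φ v f) :=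
  contDiff_id.add ((hf.comp φ.contDiff).smul contDiff_const)

lemma det_fderiv_shear [FiniteDimensional ℝ E] (hf : Differentiable ℝ f) (hv : φ v = 0) (x : E) :
    (fderiv ℝ (shear φ v f) x).det = 1 := by
  have deriv_eq : HasFDerivAt (shear φ v f)
      (.id ℝ E + (deriv f (φ x) • φ).smulRight v) x :=
    (hasFDerivAt_id x).add
      (((hf (φ x)).hasDerivAt.comp_hasFDerivAt x φ.hasFDerivAt).smul_const v)
  have transvection : ((.id ℝ E + (deriv f (φ x) • φ).smulRight v : E →L[ℝ] E) : E →ₗ[ℝ] E) =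
      LinearMap.transvection (deriv f (φ x) • (φ : E →ₗ[ℝ] ℝ)) v := by
    ext y
    simp [LinearMap.transvection.apply]
  rw [deriv_eq.fderiv, ContinuousLinearMap.det, transvection, LinearMap.transvection.det]
  simp [hv]

end Calculus

/-! ### Polar coordinates on the plane -/

section Plane

/-- The Euclidean plane, which also carries the cylinder coordinates `(θ, y)`. -/
abbrev Plane := EuclideanSpace ℝ (Fin 2)

variable {θ θ' y y' : ℝ}

@[simp]
lemma piD_apply_zero : piD θ y 0 = √((1 + y) / 2) * Real.cos (2 * Real.pi * θ) := rfl

@[simp]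
lemma piD_apply_one : piD θ y 1 = √((1 + y) / 2) * Real.sin (2 * Real.pi * θ) := rfl

lemma piD_eq_smul : piD θ y = √((1 + y) / 2) • !₂[Real.cos (2 * Real.pi * θ),
    Real.sin (2 * Real.pi * θ)] := by
  ext i
  fin_cases i <;> simp

lemma norm_piD : ‖piD θ y‖ = √((1 + y) / 2) := by
  rw [piD_eq_smul, norm_smul, EuclideanSpace.norm_eq]
  simp [abs_of_nonneg (Real.sqrt_nonneg _)]

lemma norm_piD_sq (hy : -1 ≤ y) : ‖piD θ y‖ ^ 2 = (1 + y) / 2 := by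
  rw [norm_piD, Real.sq_sqrt (by linarith)]

lemma norm_piD_sub_piD_sq : ‖piD θ y - piD θ' y'‖ ^ 2 =
    (√((1 + y) / 2) - √((1 + y') / 2)) ^ 2 +
      4 * (√((1 + y) / 2) * √((1 + y') / 2)) * Real.sin (Real.pi * (θ - θ')) ^ 2 := by
  have half_angle : Real.cos (2 * Real.pi * θ) * Real.cos (2 * Real.pi * θ') +
      Real.sin (2 * Real.pi * θ) * Real.sin (2 * Real.pi * θ') =
      1 - 2 * Real.sin (Real.pi * (θ - θ')) ^ 2 := by
    rw [← Real.cos_sub, ← mul_sub, mul_assoc, Real.cos_two_mul, Real.cos_sq']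
    ring
  rw [EuclideanSpace.norm_sq_eq, Fin.sum_univ_two]
  simp only [PiLp.sub_apply, piD_apply_zero, piD_apply_one, Real.norm_eq_abs, sq_abs]
  linear_combination √((1 + y) / 2) ^ 2 * Real.sin_sq_add_cos_sq (2 * Real.pi * θ)
    + √((1 + y') / 2) ^ 2 * Real.sin_sq_add_cos_sq (2 * Real.pi * θ')
    - 2 * √((1 + y) / 2) * √((1 + y') / 2) * half_angle

lemma piD_add_intCast (k : ℤ) : piD (θ + k) y = piD θ y := by
  have angle : 2 * Real.pi * (θ + k) = 2 * Real.pi * θ + k * (2 * Real.pi) := by ring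
  simp only [piD, angle, Real.cos_add_int_mul_two_pi, Real.sin_add_int_mul_two_pi]

lemma eq_and_exists_intCast_of_piD_eq (hy : -1 < y) (hy' : -1 ≤ y') (h : piD θ y = piD θ' y') :
    y = y' ∧ ∃ k : ℤ, θ = θ' + k := by
  have height : y = y' := by
    have := norm_piD_sq (θ := θ) hy.le
    rw [h, norm_piD_sq hy'] at this
    linarith
  subst height
  have radius_pos : 0 < √((1 + y) / 2) := Real.sqrt_pos.mpr (by linarith)
  have dist_zero := norm_piD_sub_piD_sq (θ := θ) (θ' := θ') (y := y) (y' := y)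
  rw [h, sub_self, norm_zero, sub_self, zero_pow two_ne_zero, zero_add, eq_comm,
    mul_eq_zero_iff_left (by positivity), sq_eq_zero_iff, Real.sin_eq_zero_iff] at dist_zero
  obtain ⟨k, hk⟩ := dist_zero
  rw [mul_comm, mul_right_inj' Real.pi_ne_zero] at hk
  exact ⟨rfl, k, by linarith⟩

lemma rotO_piD (α : ℝ) : rotO α (piD θ y) = piD (θ + α) y := by
  have angle : 2 * Real.pi * (θ + α) = 2 * Real.pi * θ + 2 * Real.pi * α := by ring
  ext i
  fin_cases i
  · simp only [rotO, Fin.zero_eta, piD_apply_zero, piD_apply_one, angle, Real.cos_add]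
    simp
    ring
  · simp only [rotO, Fin.mk_one, piD_apply_zero, piD_apply_one, angle, Real.sin_add]
    simp
    ring

lemma abs_sub_le_four_mul_abs_sqrt_sub (hy : y ∈ Set.Icc (-1) 1) (hy' : y' ∈ Set.Icc (-1) 1) :
    |y - y'| ≤ 4 * |√((1 + y) / 2) - √((1 + y') / 2)| := by
  have hr : √((1 + y) / 2) ^ 2 = (1 + y) / 2 := Real.sq_sqrt (by linarith [hy.1])
  have hr' : √((1 + y') / 2) ^ 2 = (1 + y') / 2 := Real.sq_sqrt (by linarith [hy'.1])
  have r_le : √((1 + y) / 2) ≤ 1 := Real.sqrt_le_one.mpr (by linarith [hy.2])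
  have r_le' : √((1 + y') / 2) ≤ 1 := Real.sqrt_le_one.mpr (by linarith [hy'.2])
  set r := √((1 + y) / 2)
  set r' := √((1 + y') / 2)
  calc |y - y'| = |2 * (r + r') * (r - r')| := by congr 1; linear_combination 2 * hr' - 2 * hr
    _ = 2 * (r + r') * |r - r'| := by rw [abs_mul, abs_of_nonneg (by positivity)]
    _ ≤ 4 * |r - r'| := by gcongr; linarith

lemma abs_sub_le_four_mul_norm_piD_sub (hy : y ∈ Set.Icc (-1) 1) (hy' : y' ∈ Set.Icc (-1) 1) :
    |y - y'| ≤ 4 * ‖piD θ y - piD θ' y'‖ := by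
  refine (abs_sub_le_four_mul_abs_sqrt_sub hy hy').trans ?_
  rw [← norm_piD (θ := θ), ← norm_piD (θ := θ')]
  gcongr
  exact abs_norm_sub_norm_le _ _

lemma two_mul_le_abs_sin_pi_mul {x t : ℝ} (h : ∀ k : ℤ, t ≤ |x - k|) :
    2 * t ≤ |Real.sin (Real.pi * x)| := by
  set u := x - round x
  have reduce : |Real.sin (Real.pi * x)| = |Real.sin (Real.pi * u)| := by
    rw [mul_sub, mul_comm Real.pi (round x : ℝ), Real.sin_sub_int_mul_pi, abs_mul, abs_zpow,
      abs_neg, abs_one, one_zpow, one_mul]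
  have small : |Real.pi * u| ≤ Real.pi / 2 := by
    rw [abs_mul, abs_of_pos Real.pi_pos, div_eq_mul_inv]
    exact mul_le_mul_of_nonneg_left ((abs_sub_round x).trans_eq (one_div 2)) Real.pi_pos.le
  calc 2 * t ≤ 2 * |u| := by gcongr; exact h _
    _ = 2 / Real.pi * |Real.pi * u| := by
      rw [abs_mul, abs_of_pos Real.pi_pos]
      field_simp
    _ ≤ |Real.sin (Real.pi * x)| := by
      rw [reduce]
      exact Real.mul_abs_le_abs_sin small

lemma four_mul_le_norm_piD_sub {r t : ℝ} (hr : 0 ≤ r) (ht : 0 ≤ t) (hy : 2 * r ^ 2 - 1 ≤ y)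
    (hy' : 2 * r ^ 2 - 1 ≤ y') (h : ∀ k : ℤ, t ≤ |θ - θ' - k|) :
    4 * r * t ≤ ‖piD θ y - piD θ' y'‖ := by
  have radius : r ≤ √((1 + y) / 2) := Real.le_sqrt_of_sq_le (by linarith)
  have radius' : r ≤ √((1 + y') / 2) := Real.le_sqrt_of_sq_le (by linarith)
  rw [← sq_le_sq₀ (by positivity) (norm_nonneg _), norm_piD_sub_piD_sq]
  calc (4 * r * t) ^ 2 = 0 + 4 * (r * r) * (2 * t) ^ 2 := by ring
    _ ≤ _ := by
      rw [← sq_abs (Real.sin _)]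
      gcongr
      · positivity
      · exact two_mul_le_abs_sin_pi_mul h

lemma norm_piD_sub_le {δ s : ℝ} (hy : y ∈ Set.Icc (-1) 1) (hy' : -1 ≤ y') (hs : |θ' - θ| ≤ s)
    (hδ : |y' - y| ≤ δ) : ‖piD θ' y' - piD θ y‖ ≤ √(δ / 2) + 2 * Real.pi * s := by
  have radial : ‖piD θ' y' - piD θ' y‖ ≤ √(δ / 2) := by
    have h := Real.sq_sqrt (show 0 ≤ (1 + y) / 2 by linarith [hy.1])
    have h' := Real.sq_sqrt (show 0 ≤ (1 + y') / 2 by linarith)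
    refine Real.le_sqrt_of_sq_le ?_
    rw [norm_piD_sub_piD_sq, sub_self, mul_zero, Real.sin_zero]
    obtain ⟨hl, hu⟩ := abs_le.mp hδ
    have := Real.sqrt_nonneg ((1 + y) / 2)
    have := Real.sqrt_nonneg ((1 + y') / 2)
    rcases le_total √((1 + y) / 2) √((1 + y') / 2) with hle | hle <;> nlinarith
  have angular : ‖piD θ' y - piD θ y‖ ≤ 2 * Real.pi * s := by
    have radius : √((1 + y) / 2) * √((1 + y) / 2) ≤ 1 := by
      rw [Real.mul_self_sqrt (by linarith [hy.1])]
      linarith [hy.2]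
    have sin_le : |Real.sin (Real.pi * (θ' - θ))| ≤ Real.pi * s := by
      refine Real.abs_sin_le_abs.trans ?_
      rw [abs_mul, abs_of_pos Real.pi_pos]
      exact mul_le_mul_of_nonneg_left hs Real.pi_pos.le
    have s_nonneg : 0 ≤ s := (abs_nonneg _).trans hs
    rw [← sq_le_sq₀ (norm_nonneg _) (by positivity), norm_piD_sub_piD_sq, sub_self,
      ← sq_abs (Real.sin _)]
    calc _ ≤ 0 ^ 2 + 4 * 1 * (Real.pi * s) ^ 2 := by gcongr
      _ = (2 * Real.pi * s) ^ 2 := by ring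
  exact (norm_sub_le_norm_sub_add_norm_sub _ (piD θ' y) _).trans (add_le_add radial angular)

end Plane

section PolarMap

/-- The parametrization `piD` as a map from the cylinder, in coordinates `(θ, y)`, to the plane. -/
noncomputable def polarMap (p : Plane) : Plane :=
  piD (p 0) (p 1)

/-- A section of `polarMap`, with values in the half-plane `-1 ≤ y` where `polarMap` is honest
(below it, the junk value of the square root collapses everything to the origin). -/
noncomputable def polarSection (x : Plane) : Plane :=
  !₂[Complex.arg ⟨x 0, x 1⟩ / (2 * Real.pi), 2 * ‖x‖ ^ 2 - 1]

variable {p : Plane}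

lemma polarSection_apply_one (x : Plane) : polarSection x 1 = 2 * ‖x‖ ^ 2 - 1 := rfl

lemma neg_one_le_polarSection (x : Plane) : -1 ≤ polarSection x 1 := by
  simp [polarSection_apply_one]

lemma neg_one_lt_polarSection {x : Plane} (hx : x ≠ 0) : -1 < polarSection x 1 := by
  simpa [polarSection_apply_one] using pow_pos (norm_pos_iff.mpr hx) 2

lemma polarMap_polarSection (x : Plane) : polarMap (polarSection x) = x := by
  set z : ℂ := ⟨x 0, x 1⟩
  have radius : √((1 + (2 * ‖x‖ ^ 2 - 1)) / 2) = ‖z‖ := by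
    rw [EuclideanSpace.real_norm_sq_eq, Complex.norm_def, Complex.normSq_mk, Fin.sum_univ_two]
    ring_nf
  have angle : 2 * Real.pi * (z.arg / (2 * Real.pi)) = z.arg := by field_simp
  ext i
  fin_cases i
  · exact congr($radius * Real.cos $angle).trans (Complex.norm_mul_cos_arg z)
  · exact congr($radius * Real.sin $angle).trans (Complex.norm_mul_sin_arg z)

lemma polarMap_eq_zero (hp : p 1 ≤ -1) : polarMap p = 0 := by
  rw [← norm_eq_zero, polarMap, norm_piD, Real.sqrt_eq_zero_of_nonpos (by linarith)]

lemma polarMap_add_single (α : ℝ) :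
    polarMap (p + EuclideanSpace.single 0 α) = rotO α (polarMap p) := by
  simp [polarMap, rotO_piD]

lemma rotO_intCast (k : ℤ) (x : Plane) : rotO k x = x := by
  rw [← polarMap_polarSection x, polarMap, rotO_piD, piD_add_intCast]

lemma exists_polarSection_polarMap_eq (hp : -1 < p 1) :
    ∃ k : ℤ, polarSection (polarMap p) = p + EuclideanSpace.single 0 (k : ℝ) := by
  have section_eq := (polarMap_polarSection (polarMap p)).symm
  obtain ⟨height, k, angle⟩ :=
    eq_and_exists_intCast_of_piD_eq hp (neg_one_le_polarSection _) section_eq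
  refine ⟨-k, ?_⟩
  ext i
  fin_cases i <;> simp [height, angle]

lemma contDiffAt_polarMap {n : WithTop ℕ∞} (hp : -1 < p 1) : ContDiffAt ℝ n polarMap p := by
  have coord (i : Fin 2) : ContDiffAt ℝ n (fun p : Plane ↦ p i) p :=
    contDiffAt_euclidean.mp contDiffAt_id i
  have radius : ContDiffAt ℝ n (fun p : Plane ↦ √((1 + p 1) / 2)) p :=
    ((contDiffAt_const.add (coord 1)).div_const 2).sqrt (by linarith)
  have angle : ContDiffAt ℝ n (fun p : Plane ↦ 2 * Real.pi * p 0) p :=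
    contDiffAt_const.mul (coord 0)
  refine contDiffAt_euclidean.mpr fun i ↦ ?_
  fin_cases i
  · exact radius.mul angle.cos
  · exact radius.mul angle.sin

lemma det_plane (A : Plane →L[ℝ] Plane) :
    A.det = A (EuclideanSpace.single 0 1) 0 * A (EuclideanSpace.single 1 1) 1 -
      A (EuclideanSpace.single 1 1) 0 * A (EuclideanSpace.single 0 1) 1 := by
  rw [ContinuousLinearMap.det,
    ← LinearMap.det_toMatrix (EuclideanSpace.basisFun (Fin 2) ℝ).toBasis, Matrix.det_fin_two]
  simp [LinearMap.toMatrix_apply]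

lemma fderiv_radius_mul_apply (hp : -1 < p 1) {c : ℝ → ℝ} {c' : ℝ}
    (hc : HasDerivAt c c' (2 * Real.pi * p 0)) (v : Plane) :
    fderiv ℝ (fun p : Plane ↦ √((1 + p 1) / 2) * c (2 * Real.pi * p 0)) p v =
      √((1 + p 1) / 2) * c' * (2 * Real.pi) * v 0 +
        c (2 * Real.pi * p 0) / (4 * √((1 + p 1) / 2)) * v 1 := by
  have coord (i : Fin 2) : HasFDerivAt
      (fun p : Plane ↦ p i) (EuclideanSpace.proj i : Plane →L[ℝ] ℝ) p :=
    (EuclideanSpace.proj i : Plane →L[ℝ] ℝ).hasFDerivAt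
  have radius : HasDerivAt (fun y : ℝ ↦ √((1 + y) / 2)) (1 / 2 / (2 * √((1 + p 1) / 2))) (p 1) :=
    (((hasDerivAt_id (p 1)).const_add 1).div_const 2).sqrt
      (div_pos (neg_lt_iff_pos_add'.mp hp) two_pos).ne'
  have angle : HasDerivAt (fun t : ℝ ↦ c (2 * Real.pi * t)) (c' * (2 * Real.pi)) (p 0) :=
    hc.comp (p 0) (by simpa using (hasDerivAt_id (p 0)).const_mul (2 * Real.pi))
  have product := (radius.comp_hasFDerivAt p (coord 1)).mul (angle.comp_hasFDerivAt p (coord 0))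
  refine congr($(product.fderiv) v).trans ?_
  simp only [add_apply, FunLike.coe_smul, Pi.smul_apply, Function.comp_apply, smul_eq_mul,
    PiLp.proj_apply]
  ring

lemma det_fderiv_polarMap (hp : -1 < p 1) : (fderiv ℝ polarMap p).det = -(Real.pi / 2) := by
  have radius_ne : √((1 + p 1) / 2) ≠ 0 :=
    (Real.sqrt_pos.mpr (div_pos (neg_lt_iff_pos_add'.mp hp) two_pos)).ne'
  have coord (i : Fin 2) (v : Plane) :
      fderiv ℝ polarMap p v i = fderiv ℝ (fun p ↦ polarMap p i) p v := by
    have := (EuclideanSpace.proj i : Plane →L[ℝ] ℝ).hasFDerivAt.comp p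
      ((contDiffAt_polarMap (n := 1) hp).differentiableAt one_ne_zero).hasFDerivAt
    exact congr($(this.fderiv.symm) v)
  have coord_zero (v : Plane) : fderiv ℝ polarMap p v 0 = _ :=
    (coord 0 v).trans (fderiv_radius_mul_apply hp (Real.hasDerivAt_cos _) v)
  have coord_one (v : Plane) : fderiv ℝ polarMap p v 1 = _ :=
    (coord 1 v).trans (fderiv_radius_mul_apply hp (Real.hasDerivAt_sin _) v)
  rw [det_plane, coord_zero, coord_zero, coord_one, coord_one]
  generalize √((1 + p 1) / 2) = r at radius_ne
  simp only [PiLp.single_apply, if_true, one_ne_zero, zero_ne_one, if_false, mul_one, mul_zero,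
    add_zero, zero_add]
  field_simp
  linear_combination -4 * Real.sin_sq_add_cos_sq (2 * Real.pi * p 0)

end PolarMap

/-! ### Conjugating a twist by a vertical shear -/

/-- The profiles of a horizontal shear `(θ, y) ↦ (θ + twist y, y)` and of a vertical shear
`(θ, y) ↦ (θ, y + rise θ)` of the cylinder. The twist is supported far enough from the ends of the
cylinder for its conjugate by the vertical shear to be supported away from the ends as well. -/
structure ShearPair where
  /-- The profile of the horizontal shear. -/
  twist : ℝ → ℝ
  /-- The profile of the vertical shear. -/
  rise : ℝ → ℝ
  /-- A bound for the vertical shear. -/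
  δ : ℝ
  δ_pos : 0 < δ
  contDiff_twist : ContDiff ℝ (⊤ : ℕ∞) twist
  contDiff_rise : ContDiff ℝ (⊤ : ℕ∞) rise
  rise_mem : ∀ θ, rise θ ∈ Set.Icc 0 δ
  periodic_rise : rise.Periodic 1
  twist_eq_zero : ∀ y, y ∉ Set.Ioo (-1 + 2 * δ) (1 - δ) → twist y = 0

namespace ShearPair

/-- The shear pair with the opposite twist, which defines the inverse maps. -/
def symm (S : ShearPair) : ShearPair where
  __ := S
  twist := -S.twist
  contDiff_twist := S.contDiff_twist.neg
  twist_eq_zero y hy := neg_eq_zero.mpr (S.twist_eq_zero y hy)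

lemma symm_symm (S : ShearPair) : S.symm.symm = S := by
  simp [symm]

/-- The vertical shear of the cylinder with the given profile. -/
noncomputable def vertical (f : ℝ → ℝ) : Plane → Plane :=
  shear (EuclideanSpace.proj 0) (EuclideanSpace.single 1 1) f

/-- The horizontal shear of the cylinder with the given profile. -/
noncomputable def horizontal (f : ℝ → ℝ) : Plane → Plane :=
  shear (EuclideanSpace.proj 1) (EuclideanSpace.single 0 1) f

/-- The horizontal shear conjugated by the vertical one, in cylinder coordinates. -/
noncomputable def cylinderMap (S : ShearPair) : Plane → Plane :=
  vertical (-S.rise) ∘ horizontal S.twist ∘ vertical S.rise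

/-- The map of the plane that `ShearPair.cylinderMap` induces through `polarMap`. -/
noncomputable def planeMap (S : ShearPair) (x : Plane) : Plane :=
  polarMap (S.cylinderMap (polarSection x))

variable (S : ShearPair) {p : Plane}

lemma cylinderMap_apply_zero : S.cylinderMap p 0 = p 0 + S.twist (p 1 + S.rise (p 0)) := by
  simp [cylinderMap, vertical, horizontal, shear]

lemma cylinderMap_apply_one :
    S.cylinderMap p 1 = p 1 + S.rise (p 0) - S.rise (S.cylinderMap p 0) := by
  simp [cylinderMap, vertical, horizontal, shear, sub_eq_add_neg]

lemma cylinderMap_eq_self_of_twist_eq_zero (h : S.twist (p 1 + S.rise (p 0)) = 0) :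
    S.cylinderMap p = p := by
  have angle : S.cylinderMap p 0 = p 0 := by rw [cylinderMap_apply_zero, h, add_zero]
  ext i
  fin_cases i
  · exact angle
  · simpa [angle] using S.cylinderMap_apply_one (p := p)

lemma cylinderMap_eq_self (hp : p 1 ∉ Set.Ioo (-1 + S.δ) (1 - S.δ)) : S.cylinderMap p = p := by
  refine S.cylinderMap_eq_self_of_twist_eq_zero (S.twist_eq_zero _ fun h ↦ hp ?_)
  obtain ⟨hl, hu⟩ := S.rise_mem (p 0)
  exact ⟨by linarith [h.1], by linarith [h.2]⟩

lemma neg_one_lt_cylinderMap (hp : -1 < p 1) : -1 < S.cylinderMap p 1 := by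
  by_cases h : p 1 + S.rise (p 0) ∈ Set.Ioo (-1 + 2 * S.δ) (1 - S.δ)
  · rw [cylinderMap_apply_one]
    linarith [h.1, (S.rise_mem (S.cylinderMap p 0)).2, S.δ_pos]
  · rwa [S.cylinderMap_eq_self_of_twist_eq_zero (S.twist_eq_zero _ h)]

lemma cylinderMap_le_one (hp : p 1 ≤ 1) : S.cylinderMap p 1 ≤ 1 := by
  by_cases h : p 1 + S.rise (p 0) ∈ Set.Ioo (-1 + 2 * S.δ) (1 - S.δ)
  · rw [cylinderMap_apply_one]
    linarith [h.2, (S.rise_mem (S.cylinderMap p 0)).1, S.δ_pos]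
  · rwa [S.cylinderMap_eq_self_of_twist_eq_zero (S.twist_eq_zero _ h)]

lemma cylinderMap_add_single {α : ℝ} (hα : S.rise.Periodic α) :
    S.cylinderMap (p + EuclideanSpace.single 0 α) =
      S.cylinderMap p + EuclideanSpace.single 0 α := by
  have angle : S.cylinderMap (p + EuclideanSpace.single 0 α) 0 = S.cylinderMap p 0 + α := by
    simp [cylinderMap_apply_zero, hα _, add_right_comm]
  ext i
  fin_cases i
  · simpa using angle
  · simp [cylinderMap_apply_one, angle, hα _]

lemma cylinderMap_symm_cylinderMap : S.symm.cylinderMap (S.cylinderMap p) = p := by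
  have cancel_vertical (f : ℝ → ℝ) (p : Plane) : vertical (-f) (vertical f p) = p :=
    shear_neg_shear (by simp) p
  have cancel_horizontal (f : ℝ → ℝ) (p : Plane) : horizontal (-f) (horizontal f p) = p :=
    shear_neg_shear (by simp) p
  have := cancel_vertical (-S.rise) (horizontal S.twist (vertical S.rise p))
  rw [neg_neg] at this
  simp only [cylinderMap, symm, Function.comp_apply, this, cancel_horizontal, cancel_vertical]

lemma contDiff_cylinderMap : ContDiff ℝ (⊤ : ℕ∞) S.cylinderMap :=
  (contDiff_shear S.contDiff_rise.neg).comp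
    ((contDiff_shear S.contDiff_twist).comp (contDiff_shear S.contDiff_rise))

lemma det_fderiv_cylinderMap : (fderiv ℝ S.cylinderMap p).det = 1 := by
  have diff_twist := S.contDiff_twist.differentiable (by simp)
  have diff_rise := S.contDiff_rise.differentiable (by simp)
  have diff_shear {φ : Plane →L[ℝ] ℝ} {v : Plane} {f : ℝ → ℝ} (hf : Differentiable ℝ f) :
      Differentiable ℝ (shear φ v f) :=
    differentiable_id.add ((hf.comp φ.differentiable).smul_const v)
  rw [cylinderMap, vertical, horizontal, vertical,
    det_fderiv_comp (diff_shear diff_rise.neg _)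
      (((diff_shear diff_twist).comp (diff_shear diff_rise)) _),
    det_fderiv_comp (diff_shear diff_twist _) (diff_shear diff_rise _),
    det_fderiv_shear diff_rise.neg (by simp), det_fderiv_shear diff_twist (by simp),
    det_fderiv_shear diff_rise (by simp), one_mul, one_mul]

lemma planeMap_polarMap (hp : -1 ≤ p 1) : S.planeMap (polarMap p) = polarMap (S.cylinderMap p) := by
  rcases hp.eq_or_lt with heq | hlt
  · have fixed {p : Plane} (hp : p 1 = -1) : S.cylinderMap p = p :=
      S.cylinderMap_eq_self fun h ↦ by linarith [h.1, S.δ_pos]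
    have center : polarSection 0 1 = -1 := by simp [polarSection_apply_one]
    rw [fixed heq.symm, polarMap_eq_zero heq.ge, planeMap, fixed center, polarMap_polarSection]
  · obtain ⟨k, hk⟩ := exists_polarSection_polarMap_eq hlt
    have periodic : S.rise.Periodic (k : ℝ) := by simpa using S.periodic_rise.int_mul k
    rw [planeMap, hk, S.cylinderMap_add_single periodic, polarMap_add_single, rotO_intCast]

lemma planeMap_piD {θ y : ℝ} (hy : -1 ≤ y) :
    S.planeMap (piD θ y) = polarMap (S.cylinderMap !₂[θ, y]) :=
  S.planeMap_polarMap (p := !₂[θ, y]) hy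

lemma planeMap_eq_self {x : Plane} (hx : polarSection x 1 ∉ Set.Ioo (-1 + S.δ) (1 - S.δ)) :
    S.planeMap x = x := by
  rw [planeMap, S.cylinderMap_eq_self hx, polarMap_polarSection]

lemma planeMap_eventuallyEq_id : S.planeMap =ᶠ[nhds 0] id := by
  have near : ∀ᶠ x : Plane in nhds 0, 2 * ‖x‖ ^ 2 - 1 < -1 + S.δ :=
    ContinuousAt.eventually_lt (by fun_prop) continuousAt_const (by simp [S.δ_pos])
  filter_upwards [near] with x hx
  exact S.planeMap_eq_self fun h ↦ hx.not_gt h.1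

lemma planeMap_comp_polarMap_eventuallyEq (hp : -1 < p 1) :
    S.planeMap ∘ polarMap =ᶠ[nhds p] polarMap ∘ S.cylinderMap := by
  have near : ∀ᶠ z : Plane in nhds p, -1 < z 1 :=
    continuousAt_const.eventually_lt (by fun_prop) hp
  filter_upwards [near] with z hz
  exact S.planeMap_polarMap hz.le

lemma contDiff_planeMap : ContDiff ℝ (⊤ : ℕ∞) S.planeMap := by
  refine contDiff_iff_contDiffAt.mpr fun x ↦ ?_
  by_cases hx : x = 0
  · exact hx ▸ contDiffAt_id.congr_of_eventuallyEq S.planeMap_eventuallyEq_id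
  have hp := neg_one_lt_polarSection hx
  have polar_smooth : ContDiffAt ℝ (⊤ : ℕ∞) polarMap (polarSection x) := contDiffAt_polarMap hp
  have polar_det : (fderiv ℝ polarMap (polarSection x)).det ≠ 0 := by
    rw [det_fderiv_polarMap hp]
    exact neg_ne_zero.mpr (by positivity)
  have comp_smooth : ContDiffAt ℝ (⊤ : ℕ∞) (S.planeMap ∘ polarMap) (polarSection x) :=
    ((contDiffAt_polarMap (S.neg_one_lt_cylinderMap hp)).comp _
      S.contDiff_cylinderMap.contDiffAt).congr_of_eventuallyEq
      (S.planeMap_comp_polarMap_eventuallyEq hp)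
  rw [← polarMap_polarSection x]
  refine contDiffAt_of_contDiffAt_comp (by simp) polar_smooth
    (f' := (fderiv ℝ polarMap _).toContinuousLinearEquivOfDetNeZero polar_det) ?_ comp_smooth
  simpa using (polar_smooth.differentiableAt (by simp)).hasFDerivAt

lemma det_fderiv_planeMap (x : Plane) : (fderiv ℝ S.planeMap x).det = 1 := by
  by_cases hx : x = 0
  · rw [hx, S.planeMap_eventuallyEq_id.fderiv_eq, fderiv_id]
    exact LinearMap.det_id
  have hp := neg_one_lt_polarSection hx
  have hp' := S.neg_one_lt_cylinderMap hp
  have polar_diff {p : Plane} (hp : -1 < p 1) : DifferentiableAt ℝ polarMap p :=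
    (contDiffAt_polarMap (n := 1) hp).differentiableAt one_ne_zero
  have det_eq := congr(ContinuousLinearMap.det
    $((S.planeMap_comp_polarMap_eventuallyEq hp).fderiv_eq (𝕜 := ℝ)))
  rw [det_fderiv_comp (S.contDiff_planeMap.differentiable (by simp) _) (polar_diff hp),
    det_fderiv_comp (polar_diff hp') (S.contDiff_cylinderMap.differentiable (by simp) _),
    det_fderiv_polarMap hp, det_fderiv_polarMap hp', det_fderiv_cylinderMap,
    polarMap_polarSection, mul_comm, mul_right_inj' (neg_ne_zero.mpr (by positivity))] at det_eq
  exact det_eq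

lemma planeMap_symm_planeMap (x : Plane) : S.symm.planeMap (S.planeMap x) = x := by
  by_cases hx : x = 0
  · have fixed (S : ShearPair) : S.planeMap 0 = 0 := S.planeMap_eventuallyEq_id.eq_of_nhds
    rw [hx, fixed, fixed]
  · have image : S.planeMap x = polarMap (S.cylinderMap (polarSection x)) := rfl
    rw [image, planeMap_polarMap _ (S.neg_one_lt_cylinderMap (neg_one_lt_polarSection hx)).le,
      cylinderMap_symm_cylinderMap, polarMap_polarSection]

/-- The map of the plane induced by a shear pair, as a bijection. -/
noncomputable def planeEquiv : Plane ≃ Plane where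
  toFun := S.planeMap
  invFun := S.symm.planeMap
  left_inv := S.planeMap_symm_planeMap
  right_inv x := by
    simpa only [symm_symm] using S.symm.planeMap_symm_planeMap x

lemma measurePreserving_planeEquiv : MeasurePreserving S.planeEquiv :=
  measurePreserving_of_abs_det_fderiv_symm volume S.contDiff_planeMap.continuous.measurable
    (fun x ↦ S.symm.contDiff_planeMap.differentiable (by simp) x)
    fun x ↦ by rw [planeEquiv, Equiv.coe_fn_symm_mk, det_fderiv_planeMap, abs_one]

lemma exists_isCompact_planeMap_eq_self :
    ∃ K : Set Plane, IsCompact K ∧ K ⊆ {x | 0 < ‖x‖ ∧ ‖x‖ < 1} ∧ ∀ x ∉ K, S.planeMap x = x := by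
  have := S.δ_pos
  refine ⟨{x | 2 * ‖x‖ ^ 2 - 1 ∈ Set.Icc (-1 + S.δ) (1 - S.δ)}, ?_, fun x hx ↦ ?_, fun x hx ↦
    S.planeMap_eq_self fun h ↦ hx (Set.Ioo_subset_Icc_self h)⟩
  · refine (isCompact_closedBall (0 : Plane) 1).of_isClosed_subset
      (isClosed_Icc.preimage (by fun_prop)) fun x hx ↦ mem_closedBall_zero_iff.mpr ?_
    exact (sq_le_one_iff₀ (norm_nonneg _)).mp (by linarith [hx.2])
  · exact ⟨(norm_nonneg x).lt_of_ne' (sq_pos_iff.mp (by linarith [hx.1])),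
      (sq_lt_one_iff₀ (norm_nonneg _)).mp (by linarith [hx.2])⟩

lemma norm_planeMap_le_one {x : Plane} (hx : ‖x‖ ≤ 1) : ‖S.planeMap x‖ ≤ 1 := by
  have height : polarSection x 1 ≤ 1 := by
    rw [polarSection_apply_one]
    nlinarith [norm_nonneg x]
  rw [planeMap, polarMap, norm_piD, Real.sqrt_le_one]
  linarith [S.cylinderMap_le_one height]

lemma planeMap_rotO {α : ℝ} (hα : S.rise.Periodic α) (x : Plane) :
    S.planeMap (rotO α x) = rotO α (S.planeMap x) := by
  have hx := polarMap_polarSection x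
  set p := polarSection x
  rw [← hx, ← polarMap_add_single, S.planeMap_polarMap, S.planeMap_polarMap,
    S.cylinderMap_add_single hα, polarMap_add_single]
  · exact neg_one_le_polarSection x
  · simpa using neg_one_le_polarSection x

lemma norm_planeMap_sub_le {s : ℝ} (hs : ∀ y, |S.twist y| ≤ s) (x : Plane) :
    ‖S.planeMap x - x‖ ≤ √(S.δ / 2) + 2 * Real.pi * s := by
  by_cases hx : polarSection x 1 ∈ Set.Ioo (-1 + S.δ) (1 - S.δ)
  · have := S.δ_pos
    set p := polarSection x
    have angle : |S.cylinderMap p 0 - p 0| ≤ s := by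
      simpa [cylinderMap_apply_zero] using hs _
    have height : |S.cylinderMap p 1 - p 1| ≤ S.δ := by
      rw [cylinderMap_apply_one, add_sub_assoc, add_sub_cancel_left]
      exact abs_sub_le_of_nonneg_of_le (S.rise_mem _).1 (S.rise_mem _).2 (S.rise_mem _).1
        (S.rise_mem _).2
    have bound := norm_piD_sub_le ⟨by linarith [hx.1], by linarith [hx.2]⟩
      (S.neg_one_lt_cylinderMap (by linarith [hx.1])).le angle height
    rwa [← polarMap, ← polarMap, ← planeMap, polarMap_polarSection] at bound
  · rw [S.planeMap_eq_self hx, sub_self, norm_zero]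
    have := (abs_nonneg _).trans (hs 0)
    positivity

end ShearPair

/-! ### Images of the circles -/

section CircleMeasure

instance isProbabilityMeasure_restrict_Icc_zero_one :
    IsProbabilityMeasure (volume.restrict (Set.Icc (0 : ℝ) 1)) :=
  ⟨by simp⟩

lemma card_mul_sub_le_of_kantorovichLE_map {X : Type*} [PseudoMetricSpace X] [MeasurableSpace X]
    [OpensMeasurableSpace X] {F F' : ℝ → X} (hF : Measurable F) (hF' : Measurable F')
    {w ρ d D r : ℝ} {J : ℕ} (hw : w * J = 1) (hρ : 0 < ρ) (hρ' : ρ ≤ 1 / 2) {s : Finset ℤ}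
    (hs : s ⊆ Finset.Ico (0 : ℤ) J)
    (hsep : ∀ n ∈ s, ∀ θ ∈ cellCore w ρ n, ∀ n', ∀ θ' ∈ cellCore w ρ n', d ≤ dist (F θ) (F' θ'))
    (hD : ∀ θ θ', dist (F θ) (F' θ') ≤ D) (hD' : ∀ θ θ', dist (F' θ) (F' θ') ≤ D)
    (hr : KantorovichLE ((volume.restrict (Set.Icc 0 1)).map F)
      ((volume.restrict (Set.Icc 0 1)).map F') r) :
    s.card * (w * (1 - 2 * ρ)) * d - 2 * ρ * D ≤ r := by
  have hJ : (0 : ℝ) < J := Nat.cast_pos.mpr (Nat.pos_of_ne_zero fun h ↦ by simp [h] at hw)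
  have hw₀ : 0 < w := pos_of_mul_pos_left (hw ▸ one_pos) hJ.le
  have unit : Set.Icc (w * (0 : ℤ)) (w * (J : ℤ)) = Set.Icc 0 1 := by simp [hw]
  set t := ⋃ n ∈ Finset.Ico (0 : ℤ) J, cellCore w ρ n
  have volume_s : (volume.restrict (Set.Icc (0 : ℝ) 1)).real (⋃ n ∈ s, cellCore w ρ n) =
      s.card * (w * (1 - 2 * ρ)) := by
    rw [measureReal_restrict_apply (measurableSet_biUnion_cellCore s),
      Set.inter_eq_self_of_subset_left (unit ▸ biUnion_cellCore_subset_Icc hw₀ hρ.le hs),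
      volume_real_biUnion_cellCore hw₀ hρ hρ']
  have volume_t : (volume.restrict (Set.Icc (0 : ℝ) 1)).real tᶜ = 2 * ρ := by
    rw [measureReal_restrict_apply (measurableSet_biUnion_cellCore _).compl, Set.inter_comm,
      ← Set.sdiff_eq, ← unit, volume_real_Icc_diff_biUnion_cellCore hw₀ hρ hρ' (by positivity)]
    push_cast
    linear_combination 2 * ρ * hw
  have ht₀ : t.Nonempty := ⟨w * (0 + ρ), Set.mem_biUnion (x := 0)
    (by simpa using hJ) ⟨by simp, by gcongr; push_cast; linarith⟩⟩
  rw [← volume_s, ← volume_t]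
  refine kantorovichLE_separation hF hF' (measurableSet_biUnion_cellCore s)
    (measurableSet_biUnion_cellCore _) ht₀ (fun θ hθ θ' hθ' ↦ ?_) hD hD' hr
  obtain ⟨n, hn, hθn⟩ := Set.mem_iUnion₂.mp hθ
  obtain ⟨n', -, hθn'⟩ := Set.mem_iUnion₂.mp hθ'
  exact hsep n hn θ hθn n' θ' hθn'

variable {g : Plane → Plane} {y y' κ r : ℝ}

lemma continuous_piD (y : ℝ) : Continuous fun θ ↦ piD θ y := by
  simp only [piD_eq_smul]
  fun_prop

lemma map_diskCircleMeasure (hg : Measurable g) (y : ℝ) :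
    (diskCircleMeasure y).map g =
      (volume.restrict (Set.Icc (0 : ℝ) 1)).map fun θ ↦ g (piD θ y) :=
  Measure.map_map hg (continuous_piD y).measurable

lemma abs_integral_norm_map_diskCircleMeasure_sub_le (hg : Measurable g)
    (hκ : ∀ x, ‖g x - x‖ ≤ κ) (y : ℝ) :
    |(∫ x, ‖x‖ ∂(diskCircleMeasure y).map g) - √((1 + y) / 2)| ≤ κ := by
  have displacement (θ : ℝ) : |‖g (piD θ y)‖ - √((1 + y) / 2)| ≤ κ := by
    rw [← norm_piD (θ := θ)]
    exact (abs_norm_sub_norm_le _ _).trans (hκ _)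
  have hF : Measurable fun θ ↦ g (piD θ y) := hg.comp (continuous_piD y).measurable
  have integrable : Integrable (fun θ ↦ ‖g (piD θ y)‖) (volume.restrict (Set.Icc (0 : ℝ) 1)) :=
    .of_mem_Icc (√((1 + y) / 2) - κ) (√((1 + y) / 2) + κ) hF.norm.aemeasurable
      (.of_forall fun θ ↦ Set.mem_Icc_iff_abs_le.mp (by rw [abs_sub_comm]; exact displacement θ))
  rw [map_diskCircleMeasure hg, integral_map hF.aemeasurable (by fun_prop)]
  calc |(∫ θ in Set.Icc (0 : ℝ) 1, ‖g (piD θ y)‖) - √((1 + y) / 2)|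
    _ = ‖∫ θ in Set.Icc (0 : ℝ) 1, (‖g (piD θ y)‖ - √((1 + y) / 2))‖ := by
      rw [integral_sub integrable (integrable_const _), integral_const, probReal_univ, one_smul,
        Real.norm_eq_abs]
    _ ≤ κ * (volume.restrict (Set.Icc (0 : ℝ) 1)).real Set.univ :=
      norm_integral_le_of_norm_le_const (.of_forall displacement)
    _ = κ := by rw [probReal_univ, mul_one]

lemma abs_sub_le_of_kantorovichLE (hg : Measurable g) (hκ : ∀ x, ‖g x - x‖ ≤ κ)
    (hy : y ∈ Set.Icc (-1) 1) (hy' : y' ∈ Set.Icc (-1) 1)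
    (h : KantorovichLE ((diskCircleMeasure y).map g) ((diskCircleMeasure y').map g) r) :
    |y - y'| ≤ 4 * (r + 2 * κ) := by
  have close := abs_integral_norm_map_diskCircleMeasure_sub_le hg hκ y
  have close' := abs_integral_norm_map_diskCircleMeasure_sub_le hg hκ y'
  refine (abs_sub_le_four_mul_abs_sqrt_sub hy hy').trans ?_
  rw [abs_le] at close close'
  gcongr
  rw [abs_le]
  have upper := h _ lipschitzWith_one_norm
  have lower := h.symm _ lipschitzWith_one_norm
  constructor <;> linarith

end CircleMeasure

/-! ### The coding diffeomorphisms -/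

/-- The integer parameters of the coding construction: the order `q` of its rotational symmetry, the
inverse `A` of the size of the vertical shear, and the number `M` of levels reached by that shear
over the odd cells. -/
structure CodingParams where
  /-- The order of the rotational symmetry. -/
  q : ℕ
  /-- The inverse of the size of the vertical shear. -/
  A : ℕ
  /-- The number of levels. -/
  M : ℕ
  q_pos : 0 < q
  A_pos : 0 < A
  M_pos : 0 < M

namespace CodingParams

variable (P : CodingParams)

/-- The length of the binary words assigned to the heights. -/
def wordLength : ℕ := P.M ^ 2

/-- The number of binary words, which is also the number of slots in a block. -/
def numWords : ℕ := 2 ^ P.wordLength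

/-- The width of the cells that subdivide the circle of angles. -/
noncomputable def cellWidth : ℝ := 1 / (2 * P.wordLength * P.q)

/-- The largest rise of the vertical shear. -/
noncomputable def maxRise : ℝ := 1 / P.A

/-- The height difference between consecutive levels. -/
noncomputable def levelGap : ℝ := P.maxRise / P.M

/-- The width of the slots that subdivide the heights. A block of `numWords` slots is so thin that
`wordLength` blocks fill only an eighth of the gap between two levels. -/
noncomputable def slotWidth : ℝ := P.levelGap / (8 * P.wordLength * P.numWords)

/-- A lower bound for the distance between the images of two points that a digit tells apart. -/
noncomputable def sepScale : ℝ := P.levelGap / (8 * P.q)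

/-- The relative width of the margins in which the smooth steps interpolate. -/
noncomputable def margin : ℝ := (25 / 28) ^ P.wordLength * P.sepScale / 1000

/-- The scale `η` at which the emergence is measured. -/
noncomputable def resolution : ℝ := P.sepScale / 128

/-- The heights whose circles the coding diffeomorphism distinguishes. -/
def window : Set ℝ := Set.Icc (-1 + 4 * P.maxRise) (1 - 3 * P.maxRise)

/-- The word of the `n`-th slot: the `numWords` slots of a block carry all the binary words. -/
def word (n : ℤ) (z : ZMod P.wordLength) : Bool :=
  (n % P.numWords).toNat.testBit z.val

/-- The digit displayed by the `n`-th slot, namely the digit of its word whose position is the index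
of the block. -/
def digit (n : ℤ) : Bool := P.word n ((n / P.numWords : ℤ) : ZMod P.wordLength)

/-- The vertical shear over the `n`-th cell, in slots. Over the even cells it moves the slots by
whole blocks, which brings up the digits of their words one after the other; over the odd cells it
reaches one of the `M` levels. -/
def level (n : ℤ) : ℤ :=
  if Even n then P.numWords * (n / 2 % P.wordLength)
  else 8 * P.wordLength * P.numWords * (n / 2 % P.M + 1)

/-- The vertical shear over the `n`-th cell. -/
noncomputable def lift (n : ℤ) : ℝ := P.slotWidth * P.level n

instance neZero_wordLength : NeZero P.wordLength := ⟨(pow_pos P.M_pos 2).ne'⟩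

lemma wordLength_pos : 0 < P.wordLength := Nat.pos_of_neZero _

lemma numWords_pos : 0 < P.numWords := Nat.two_pow_pos _

lemma cellWidth_pos : 0 < P.cellWidth := by
  have := P.wordLength_pos
  have := P.q_pos
  unfold cellWidth
  positivity

lemma maxRise_pos : 0 < P.maxRise := one_div_pos.mpr (by exact_mod_cast P.A_pos)

lemma maxRise_le_one : P.maxRise ≤ 1 :=
  div_le_one_of_le₀ (by exact_mod_cast P.A_pos) (by positivity)

lemma levelGap_pos : 0 < P.levelGap := by
  have := P.maxRise_pos
  have := P.M_pos
  unfold levelGap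
  positivity

lemma slotWidth_pos : 0 < P.slotWidth := by
  have := P.levelGap_pos
  have := P.wordLength_pos
  have := P.numWords_pos
  unfold slotWidth
  positivity

lemma sepScale_pos : 0 < P.sepScale := by
  have := P.levelGap_pos
  have := P.q_pos
  unfold sepScale
  positivity

lemma margin_pos : 0 < P.margin := by
  have := P.sepScale_pos
  unfold margin
  positivity

lemma sepScale_le : P.sepScale ≤ P.levelGap / 8 := by
  have : (1 : ℝ) ≤ P.q := by exact_mod_cast P.q_pos
  have := P.levelGap_pos
  unfold sepScale
  gcongr
  linarith

lemma levelGap_le : P.levelGap ≤ P.maxRise :=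
  div_le_self P.maxRise_pos.le (by exact_mod_cast P.M_pos)

lemma sepScale_lt_one : P.sepScale < 1 := by
  linarith [P.sepScale_le, P.levelGap_le, P.levelGap_pos, P.maxRise_le_one]

lemma margin_le_sepScale : P.margin ≤ P.sepScale / 1000 := by
  unfold margin
  gcongr
  exact mul_le_of_le_one_left P.sepScale_pos.le (pow_le_one₀ (by norm_num) (by norm_num))

lemma margin_le_pow : P.margin ≤ (25 / 28) ^ P.wordLength / 1000 := by
  unfold margin
  gcongr
  exact mul_le_of_le_one_right (by positivity) P.sepScale_lt_one.le

lemma cellWidth_mul : P.cellWidth * (2 * P.wordLength * P.q : ℕ) = 1 := by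
  have := P.wordLength_pos
  have := P.q_pos
  unfold cellWidth
  push_cast
  field_simp

lemma slotWidth_mul : P.slotWidth * (8 * P.wordLength * P.numWords) = P.levelGap := by
  have := P.wordLength_pos
  have := P.numWords_pos
  unfold slotWidth
  field_simp

lemma M_mul_levelGap : P.M * P.levelGap = P.maxRise :=
  mul_div_cancel₀ _ (by exact_mod_cast P.M_pos.ne')

lemma slotWidth_mul_numWords_le : P.slotWidth * P.numWords ≤ P.levelGap / 8 := by
  have : (1 : ℝ) ≤ P.wordLength := by exact_mod_cast P.wordLength_pos
  have : 0 < P.slotWidth * P.numWords :=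
    mul_pos P.slotWidth_pos (by exact_mod_cast P.numWords_pos)
  nlinarith [P.slotWidth_mul]

variable {m m' : ℤ}

lemma eq_of_word_eq (hm : m / P.numWords = m' / P.numWords) (h : P.word m = P.word m') :
    m = m' := by
  have numWords_pos : (0 : ℤ) < P.numWords := by exact_mod_cast P.numWords_pos
  have lt (n : ℤ) : (n % P.numWords).toNat < 2 ^ P.wordLength := by
    have := Int.emod_lt_of_pos n numWords_pos
    unfold numWords at this ⊢
    omega
  have index : (m % P.numWords).toNat = (m' % P.numWords).toNat := by
    refine Nat.eq_of_testBit_eq fun i ↦ ?_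
    rcases lt_or_ge i P.wordLength with hi | hi
    · simpa only [word, ZMod.val_cast_of_lt hi] using congr_fun h (i : ZMod P.wordLength)
    · have le := Nat.pow_le_pow_right two_pos hi
      rw [Nat.testBit_lt_two_pow ((lt m).trans_le le),
        Nat.testBit_lt_two_pow ((lt m').trans_le le)]
  have nonneg (n : ℤ) : 0 ≤ n % P.numWords := Int.emod_nonneg n numWords_pos.ne'
  rw [← Int.natCast_inj, Int.toNat_of_nonneg (nonneg m), Int.toNat_of_nonneg (nonneg m')] at index
  rw [← Int.mul_ediv_add_emod m P.numWords, ← Int.mul_ediv_add_emod m' P.numWords, hm, index]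

lemma level_even (e : ℤ) : P.level (2 * e) = P.numWords * (e % P.wordLength) := by
  rw [level, if_pos (even_two_mul e), Int.mul_ediv_cancel_left _ two_ne_zero]

lemma level_odd (e : ℤ) :
    P.level (2 * e + 1) = 8 * P.wordLength * P.numWords * (e % P.M + 1) := by
  rw [level, if_neg (by simp), show (2 * e + 1) / 2 = e by omega]

lemma periodic_level : P.level.Periodic (2 * P.wordLength : ℕ) := fun n ↦ by
  have half : (n + (2 * P.wordLength : ℕ)) / 2 = n / 2 + P.wordLength := by omega
  simp only [level, half, Int.add_emod_right]
  simp [wordLength, Int.even_add, sq]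

lemma digit_add_level_even (m e : ℤ) :
    P.digit (m + P.level (2 * e)) = P.word m ((m / P.numWords + e : ℤ)) := by
  have numWords_ne : (P.numWords : ℤ) ≠ 0 := by exact_mod_cast P.numWords_pos.ne'
  simp [digit, word, level_even, Int.add_mul_ediv_left _ _ numWords_ne]

lemma lift_even_mem (e : ℤ) : P.lift (2 * e) ∈ Set.Icc 0 (P.levelGap / 8) := by
  have wordLength_pos : (0 : ℤ) < P.wordLength := by exact_mod_cast P.wordLength_pos
  have nonneg : (0 : ℝ) ≤ (e % P.wordLength : ℤ) := by
    exact_mod_cast Int.emod_nonneg e wordLength_pos.ne'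
  have le : ((e % P.wordLength : ℤ) : ℝ) ≤ P.wordLength := by
    exact_mod_cast (Int.emod_lt_of_pos e wordLength_pos).le
  have := P.slotWidth_pos
  rw [lift, level_even, ← P.slotWidth_mul, Int.cast_mul, Int.cast_natCast]
  refine ⟨by positivity, ?_⟩
  calc P.slotWidth * (P.numWords * (e % P.wordLength : ℤ))
    _ ≤ P.slotWidth * (P.numWords * P.wordLength) := by gcongr
    _ = P.slotWidth * (8 * P.wordLength * P.numWords) / 8 := by ring

lemma lift_odd (e : ℤ) : P.lift (2 * e + 1) = ((e % P.M : ℤ) + 1) * P.levelGap := by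
  rw [lift, level_odd, ← P.slotWidth_mul]
  push_cast
  ring

lemma lift_mem (n : ℤ) : P.lift n ∈ Set.Icc 0 P.maxRise := by
  rcases Int.even_or_odd' n with ⟨e, rfl | rfl⟩
  · have := P.levelGap_pos
    exact Set.Icc_subset_Icc_right (by linarith [P.levelGap_le]) (P.lift_even_mem e)
  · have M_pos : (0 : ℤ) < P.M := by exact_mod_cast P.M_pos
    have nonneg : (0 : ℝ) ≤ (e % P.M : ℤ) := by exact_mod_cast Int.emod_nonneg e M_pos.ne'
    have le : ((e % P.M : ℤ) : ℝ) + 1 ≤ P.M := by exact_mod_cast Int.emod_lt_of_pos e M_pos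
    have := P.levelGap_pos
    rw [lift_odd, ← P.M_mul_levelGap]
    exact ⟨by positivity, by gcongr⟩

lemma periodic_smoothStep_lift :
    (smoothStep P.cellWidth P.margin P.lift).Periodic (1 / P.q : ℝ) := by
  have periodic_lift : P.lift.Periodic (2 * P.wordLength : ℕ) := fun n ↦ by
    rw [lift, P.periodic_level, lift]
  have period : P.cellWidth * ((2 * P.wordLength : ℕ) : ℤ) = 1 / P.q := by
    rw [eq_div_iff (by exact_mod_cast P.q_pos.ne'), ← P.cellWidth_mul]
    push_cast
    ring
  exact period ▸ periodic_smoothStep P.cellWidth_pos.ne' periodic_lift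

/-- The twist over the `n`-th slot: within the support, a slot that displays the digit `true` moves
by one cell. -/
noncomputable def turn (n : ℤ) : ℝ :=
  if P.slotWidth * n ∈ Set.Icc (-1 + 3 * P.maxRise) (1 - 2 * P.maxRise) ∧ P.digit n then P.cellWidth
  else 0

lemma turn_mem (n : ℤ) : P.turn n ∈ Set.Icc 0 P.cellWidth := by
  unfold turn
  split_ifs
  exacts [⟨P.cellWidth_pos.le, le_rfl⟩, ⟨le_rfl, P.cellWidth_pos.le⟩]

lemma slotWidth_lt : P.slotWidth < P.maxRise := by
  have : (1 : ℝ) ≤ P.numWords := by exact_mod_cast P.numWords_pos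
  nlinarith [P.slotWidth_mul_numWords_le, P.levelGap_le, P.levelGap_pos, P.slotWidth_pos]

/-- The shear pair of the coding diffeomorphism. -/
noncomputable def shearPair : ShearPair where
  δ := P.maxRise
  rise := smoothStep P.cellWidth P.margin P.lift
  twist := smoothStep P.slotWidth P.margin P.turn
  δ_pos := P.maxRise_pos
  contDiff_twist := contDiff_smoothStep P.margin_pos.le
  contDiff_rise := contDiff_smoothStep P.margin_pos.le
  rise_mem _ := smoothStep_mem_Icc P.lift_mem
  periodic_rise := by
    have := P.periodic_smoothStep_lift.nat_mul P.q
    rwa [mul_one_div_cancel (by exact_mod_cast P.q_pos.ne')] at this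
  twist_eq_zero y hy := smoothStep_eq_zero <| if_neg fun h ↦ hy <| by
    have := P.slotWidth_lt
    have := P.slotWidth_pos
    obtain ⟨hl, hu⟩ := mul_floor_div_mem_Ioc P.slotWidth_pos y
    obtain ⟨⟨hl', hu'⟩, -⟩ := h
    constructor <;> linarith

lemma abs_twist_le (y : ℝ) : |P.shearPair.twist y| ≤ P.cellWidth := by
  have mem : P.shearPair.twist y ∈ Set.Icc 0 P.cellWidth := smoothStep_mem_Icc P.turn_mem
  exact (abs_of_nonneg mem.1).trans_le mem.2

lemma rise_of_mem_cellCore {θ : ℝ} {n : ℤ} (hθ : θ ∈ cellCore P.cellWidth P.margin n) :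
    P.shearPair.rise θ = P.lift n :=
  smoothStep_of_mem_cellCore P.cellWidth_pos P.margin_pos hθ

variable {y θ : ℝ} {n : ℤ}

lemma twist_add_lift (hy : y ∈ P.window) (hm : y ∈ cellCore P.slotWidth P.margin m) (n : ℤ) :
    P.shearPair.twist (y + P.lift n) = if P.digit (m + P.level n) then P.cellWidth else 0 := by
  have slot : y + P.lift n ∈ cellCore P.slotWidth P.margin (m + P.level n) :=
    add_mem_cellCore hm (P.level n)
  have inside : P.slotWidth * (m + P.level n : ℤ) ∈
      Set.Icc (-1 + 3 * P.maxRise) (1 - 2 * P.maxRise) := by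
    obtain ⟨hl, hu⟩ := cellCore_subset_Icc P.slotWidth_pos P.margin_pos.le slot
    obtain ⟨lift_nonneg, lift_le⟩ := P.lift_mem n
    have := P.slotWidth_lt
    constructor <;> linarith [hy.1, hy.2]
  calc P.shearPair.twist (y + P.lift n)
    _ = P.turn (m + P.level n) := smoothStep_of_mem_cellCore P.slotWidth_pos P.margin_pos slot
    _ = if P.digit (m + P.level n) then P.cellWidth else 0 :=
      if_congr (and_iff_right inside) rfl rfl

lemma planeMap_piD_of_mem_cellCore (hy : y ∈ P.window)
    (hm : y ∈ cellCore P.slotWidth P.margin m) (hn : θ ∈ cellCore P.cellWidth P.margin n) :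
    P.shearPair.planeMap (piD θ y) =
      if P.digit (m + P.level n) then piD (θ + P.cellWidth) (y + P.lift n - P.lift (n + 1))
      else piD θ y := by
  have hy_ge : -1 ≤ y := by linarith [hy.1, P.maxRise_pos]
  have twist : P.shearPair.twist (y + P.shearPair.rise θ) =
      if P.digit (m + P.level n) then P.cellWidth else 0 := by
    rw [P.rise_of_mem_cellCore hn, P.twist_add_lift hy hm]
  rw [ShearPair.planeMap_piD _ hy_ge]
  split_ifs with h <;> simp only [h, if_true, reduceIte, Bool.false_eq_true] at twist
  · have next : θ + P.cellWidth ∈ cellCore P.cellWidth P.margin (n + 1) := by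
      simpa using add_mem_cellCore hn 1
    have angle : P.shearPair.cylinderMap !₂[θ, y] 0 = θ + P.cellWidth := by
      simp [ShearPair.cylinderMap_apply_zero, twist]
    have height : P.shearPair.cylinderMap !₂[θ, y] 1 = y + P.lift n - P.lift (n + 1) := by
      rw [ShearPair.cylinderMap_apply_one, angle, P.rise_of_mem_cellCore next]
      simp [P.rise_of_mem_cellCore hn]
    rw [polarMap, angle, height]
  · rw [ShearPair.cylinderMap_eq_self_of_twist_eq_zero _ (by simpa using twist)]
    rfl

end CodingParams

/-! ### Separation of the coded circles -/

namespace CodingParams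

variable {P : CodingParams} {m m' : ℤ} {y y' θ θ' : ℝ}

lemma abs_sub_le_of_block_eq (hm : y ∈ cellCore P.slotWidth P.margin m)
    (hm' : y' ∈ cellCore P.slotWidth P.margin m') (h : m / P.numWords = m' / P.numWords) :
    |y - y'| ≤ P.levelGap / 8 := by
  have in_block {n : ℤ} {x : ℝ} (hn : x ∈ cellCore P.slotWidth P.margin n) :
      x ∈ Set.Icc (P.slotWidth * (P.numWords * (n / P.numWords : ℤ)))
        (P.slotWidth * (P.numWords * (n / P.numWords : ℤ) + P.numWords)) := by
    have numWords_pos : (0 : ℤ) < P.numWords := by exact_mod_cast P.numWords_pos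
    refine Set.Icc_subset_Icc ?_ ?_ (cellCore_subset_Icc P.slotWidth_pos P.margin_pos.le hn)
    · exact mul_le_mul_of_nonneg_left
        (by exact_mod_cast Int.mul_ediv_self_le numWords_pos.ne') P.slotWidth_pos.le
    · exact mul_le_mul_of_nonneg_left
        (by exact_mod_cast Int.lt_mul_ediv_self_add numWords_pos) P.slotWidth_pos.le
  obtain ⟨hl, hu⟩ := in_block hm
  obtain ⟨hl', hu'⟩ := in_block hm'
  rw [← h] at hl' hu'
  rw [abs_le]
  constructor <;> linarith [P.slotWidth_mul_numWords_le]

lemma add_lift_sub_lift_mem (hy : y ∈ P.window) (n : ℤ) :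
    y + P.lift n - P.lift (n + 1) ∈ Set.Icc (-1 + 3 * P.maxRise) (1 - 2 * P.maxRise) := by
  obtain ⟨_, _⟩ := P.lift_mem n
  obtain ⟨_, _⟩ := P.lift_mem (n + 1)
  constructor <;> linarith [hy.1, hy.2]

lemma sepScale_le_dist_of_levels_ne {i i' : ℤ} (hi : i ≠ i') (hy : y ∈ Set.Icc (-1) 1)
    (hy' : y' ∈ Set.Icc (-1) 1)
    (h : |(y + i * P.levelGap) - (y' + i' * P.levelGap)| ≤ P.levelGap / 2) :
    P.sepScale ≤ dist (piD θ y) (piD θ' y') := by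
  have gap_le : P.levelGap ≤ |(i - i') * P.levelGap| := by
    rw [abs_mul, abs_of_pos P.levelGap_pos]
    exact le_mul_of_one_le_left P.levelGap_pos.le
      (by exact_mod_cast Int.one_le_abs (sub_ne_zero.mpr hi))
  have triangle := abs_sub ((y + i * P.levelGap) - (y' + i' * P.levelGap)) (y - y')
  rw [show (y + i * P.levelGap) - (y' + i' * P.levelGap) - (y - y') = (i - i') * P.levelGap by
    ring] at triangle
  rw [dist_eq_norm]
  linarith [abs_sub_le_four_mul_norm_piD_sub (θ := θ) (θ' := θ') hy hy', P.sepScale_le]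

lemma M_mul_cellWidth_le_abs_sub {e e' : ℤ} (hM : e % P.M = e' % P.M)
    (hN : e % P.wordLength ≠ e' % P.wordLength) (hθ : θ ∈ cellCore P.cellWidth P.margin (2 * e))
    (hθ' : θ' ∈ cellCore P.cellWidth P.margin (2 * e')) (k : ℤ) :
    P.M * P.cellWidth ≤ |θ - θ' - k| := by
  set d := e - e' - P.wordLength * (P.q * k) with hd
  have M_dvd : (P.M : ℤ) ∣ d :=
    (Int.ModEq.dvd hM.symm).sub (dvd_mul_of_dvd_left (by simp [wordLength, sq]) _)
  have d_ne : d ≠ 0 := fun h ↦ hN <| by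
    rw [eq_add_of_sub_eq (sub_eq_zero.mp h), add_comm, Int.add_mul_emod_self_left]
  have M_le : (P.M : ℝ) ≤ |(d : ℝ)| := by
    exact_mod_cast Int.le_of_dvd (abs_pos.mpr d_ne) ((dvd_abs _ _).mpr M_dvd)
  have one_le_M : (1 : ℝ) ≤ P.M := by exact_mod_cast P.M_pos
  obtain ⟨hl, hu⟩ := cellCore_subset_Icc P.cellWidth_pos P.margin_pos.le hθ
  obtain ⟨hl', hu'⟩ := cellCore_subset_Icc P.cellWidth_pos P.margin_pos.le hθ'
  have displacement : |2 * P.cellWidth * d - (θ - θ' - k)| ≤ P.cellWidth := by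
    have unit := P.cellWidth_mul
    push_cast [hd] at unit hl hu hl' hu' ⊢
    have expand : 2 * P.cellWidth * (e - e' - P.wordLength * (P.q * k)) - (θ - θ' - k) =
        (P.cellWidth * (2 * e) - θ) - (P.cellWidth * (2 * e') - θ') := by
      linear_combination -k * unit
    rw [expand, abs_le]
    constructor <;> linarith
  have triangle := abs_sub_abs_le_abs_sub (2 * P.cellWidth * d) (θ - θ' - k)
  rw [abs_mul, abs_of_pos (mul_pos two_pos P.cellWidth_pos)] at triangle
  nlinarith [P.cellWidth_pos]

lemma sepScale_le_dist_of_angles (hy : -1 + 3 * P.maxRise ≤ y) (hy' : -1 + 3 * P.maxRise ≤ y')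
    (h : ∀ k : ℤ, P.M * P.cellWidth ≤ |θ - θ' - k|) : P.sepScale ≤ dist (piD θ y) (piD θ' y') := by
  have maxRise_pos := P.maxRise_pos
  have maxRise_le := P.maxRise_le_one
  have separation := four_mul_le_norm_piD_sub (r := P.maxRise) (y := y) (y' := y')
    maxRise_pos.le
    (mul_nonneg P.M.cast_nonneg P.cellWidth_pos.le) (by nlinarith) (by nlinarith) h
  rw [dist_eq_norm]
  refine separation.trans' ?_
  have := P.levelGap_pos
  have := P.q_pos
  have := P.M_pos
  calc P.sepScale ≤ 2 * P.levelGap / P.q := by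
        unfold sepScale
        rw [div_le_div_iff₀ (by positivity) (by positivity)]
        nlinarith [show 0 < P.levelGap * P.q by positivity]
    _ = 4 * P.maxRise * (P.M * P.cellWidth) := by
        rw [← P.M_mul_levelGap, cellWidth, wordLength]
        push_cast
        field_simp
        norm_num

/-- The first point moves to a level that the second circle reaches only from the even cells of the
same residue modulo `M`. Those of the same residue modulo `wordLength` do not move on that circle,
since they display the digit `false`, and the other ones are too far away in angle. -/
lemma sepScale_le_dist_planeMap {e n : ℤ} (hy : y ∈ P.window) (hy' : y' ∈ P.window)
    (hm : y ∈ cellCore P.slotWidth P.margin m) (hm' : y' ∈ cellCore P.slotWidth P.margin m')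
    (hmm' : m / P.numWords = m' / P.numWords)
    (hθ : θ ∈ cellCore P.cellWidth P.margin (2 * e)) (hθ' : θ' ∈ cellCore P.cellWidth P.margin n)
    (hd : P.digit (m + P.level (2 * e)) = true) (hd' : P.digit (m' + P.level (2 * e)) = false) :
    P.sepScale ≤ dist (P.shearPair.planeMap (piD θ y)) (P.shearPair.planeMap (piD θ' y')) := by
  have close := abs_le.mp (abs_sub_le_of_block_eq hm hm' hmm')
  have maxRise_pos := P.maxRise_pos
  have unit {Y : ℝ} (hY : Y ∈ Set.Icc (-1 + 3 * P.maxRise) (1 - 2 * P.maxRise)) :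
      Y ∈ Set.Icc (-1) 1 := ⟨by linarith [hY.1], by linarith [hY.2]⟩
  have moved := P.add_lift_sub_lift_mem hy (2 * e)
  have moved' := P.add_lift_sub_lift_mem hy' n
  have lift_even := P.lift_even_mem e
  rw [P.planeMap_piD_of_mem_cellCore hy hm hθ, if_pos hd,
    P.planeMap_piD_of_mem_cellCore hy' hm' hθ']
  have level_pos (e : ℤ) : 0 < e % P.M + 1 := by
    have := Int.emod_nonneg e (by exact_mod_cast P.M_pos.ne' : (P.M : ℤ) ≠ 0)
    omega
  split_ifs with hn
  · rcases Int.even_or_odd' n with ⟨e', rfl | rfl⟩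
    · by_cases hM : e % P.M = e' % P.M
      · refine sepScale_le_dist_of_angles moved.1 moved'.1 fun k ↦ ?_
        rw [add_sub_add_right_eq_sub]
        refine M_mul_cellWidth_le_abs_sub hM (fun hN ↦ ?_) hθ hθ' k
        rw [level_even, hN, ← level_even, hn] at hd'
        contradiction
      · have lift_even' := P.lift_even_mem e'
        refine sepScale_le_dist_of_levels_ne (i := e % P.M + 1) (i' := e' % P.M + 1)
          (by simpa using hM) (unit moved) (unit moved') ?_
        simp only [P.lift_odd]
        push_cast
        rw [abs_le]
        constructor <;> linarith [lift_even.1, lift_even.2, lift_even'.1, lift_even'.2]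
    · have lift_even' := P.lift_even_mem (e' + 1)
      refine sepScale_le_dist_of_levels_ne (i := e % P.M + 1) (i' := -(e' % P.M + 1))
        (by linarith [level_pos e, level_pos e']) (unit moved) (unit moved') ?_
      rw [show 2 * e' + 1 + 1 = 2 * (e' + 1) by ring, P.lift_odd, P.lift_odd]
      push_cast
      rw [abs_le]
      constructor <;> linarith [lift_even.1, lift_even.2, lift_even'.1, lift_even'.2]
  · refine sepScale_le_dist_of_levels_ne (i := e % P.M + 1) (i' := 0) (level_pos e).ne'
      (unit moved) ⟨by linarith [hy'.1], by linarith [hy'.2]⟩ ?_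
    rw [P.lift_odd]
    push_cast
    rw [abs_le]
    constructor <;> linarith [lift_even.1, lift_even.2]

end CodingParams

/-! ### Counting the words of nearby circles -/

lemma card_filter_intCast_add_Ico (N q : ℕ) [NeZero N] (a : ℤ) (p : ZMod N → Prop)
    [DecidablePred p] :
    {e ∈ Finset.Ico (0 : ℤ) (N * q) | p ((a + e : ℤ) : ZMod N)}.card =
      q * Finset.card {z | p z} := by
  have fiber (z : ZMod N) :
      {e ∈ Finset.Ico (0 : ℤ) (N * q) | ((a + e : ℤ) : ZMod N) = z}.card = q := by
    have N_ne : (N : ℚ) ≠ 0 := by simp [NeZero.ne N]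
    have residue (e : ℤ) : ((a + e : ℤ) : ZMod N) = z ↔ e ≡ z.val - a [ZMOD N] := by
      rw [← ZMod.intCast_eq_intCast_iff, Int.cast_sub, eq_sub_iff_add_eq', Int.cast_add,
        Int.cast_natCast, ZMod.natCast_zmod_val]
    rw [Finset.filter_congr fun e _ ↦ residue e, ← Int.natCast_inj,
      Int.Ico_filter_modEq_card _ _ (Nat.cast_pos.mpr (Nat.pos_of_neZero N))]
    have shift (x : ℚ) : ((N * q : ℤ) - x) / (N : ℤ) = ((0 : ℤ) - x) / (N : ℤ) + (q : ℤ) := by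
      push_cast
      field_simp
      ring
    rw [shift, Int.ceil_add_intCast, add_sub_cancel_left, max_eq_left (by positivity)]
  have fiber_of_mem {z : ZMod N} (hz : p z) : {e ∈ {e ∈ Finset.Ico (0 : ℤ) (N * q) |
      p ((a + e : ℤ) : ZMod N)} | ((a + e : ℤ) : ZMod N) = z}.card = q := by
    rw [Finset.filter_filter, Finset.filter_congr fun e _ ↦ and_iff_right_of_imp (· ▸ hz), fiber]
  rw [Finset.card_eq_sum_card_fiberwise (t := Finset.univ.filter p)
    (f := fun e : ℤ ↦ ((a + e : ℤ) : ZMod N)) fun e he ↦ by simpa using (Finset.mem_filter.mp he).2,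
    Finset.sum_const_nat fun z hz ↦ fiber_of_mem (Finset.mem_filter.mp hz).2, mul_comm]

namespace CodingParams

variable {P : CodingParams} {m m' : ℤ} {y y' : ℝ}

lemma dist_planeMap_piD_le_two (hy : y ∈ P.window) (hy' : y' ∈ P.window) (θ θ' : ℝ) :
    dist (P.shearPair.planeMap (piD θ y)) (P.shearPair.planeMap (piD θ' y')) ≤ 2 := by
  have in_disk {y : ℝ} (hy : y ∈ P.window) (θ : ℝ) : ‖P.shearPair.planeMap (piD θ y)‖ ≤ 1 := by
    refine P.shearPair.norm_planeMap_le_one ?_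
    rw [norm_piD, Real.sqrt_le_one]
    linarith [hy.2, P.maxRise_pos]
  exact (dist_le_norm_add_norm _ _).trans (by linarith [in_disk hy θ, in_disk hy' θ'])

lemma eight_mul_card_true_false_lt (hy : y ∈ P.window) (hy' : y' ∈ P.window)
    (hm : y ∈ cellCore P.slotWidth P.margin m) (hm' : y' ∈ cellCore P.slotWidth P.margin m')
    (hmm' : m / P.numWords = m' / P.numWords)
    (hK : KantorovichLE ((diskCircleMeasure y).map P.shearPair.planeMap)
      ((diskCircleMeasure y').map P.shearPair.planeMap) (6 * P.resolution)) :
    8 * Finset.card {z | P.word m z = true ∧ P.word m' z = false} < P.wordLength := by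
  classical
  set T : Finset (ZMod P.wordLength) := {z | P.word m z = true ∧ P.word m' z = false}
  set block := m / P.numWords
  set s := {e ∈ Finset.Ico (0 : ℤ) (P.wordLength * P.q) |
    P.word m ((block + e : ℤ)) = true ∧ P.word m' ((block + e : ℤ)) = false}.image (2 * ·)
  have card_s : s.card = P.q * T.card := by
    rw [Finset.card_image_of_injective _ (mul_right_injective₀ two_ne_zero)]
    exact card_filter_intCast_add_Ico _ _ _ fun z ↦ P.word m z = true ∧ P.word m' z = false
  have hs : s ⊆ Finset.Ico (0 : ℤ) (2 * P.wordLength * P.q : ℕ) := by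
    refine Finset.image_subset_iff.mpr fun e he ↦ ?_
    have := Finset.mem_Ico.mp (Finset.mem_filter.mp he).1
    rw [Finset.mem_Ico]
    push_cast
    constructor <;> linarith
  have hsep : ∀ n ∈ s, ∀ θ ∈ cellCore P.cellWidth P.margin n, ∀ n',
      ∀ θ' ∈ cellCore P.cellWidth P.margin n',
        P.sepScale ≤ dist (P.shearPair.planeMap (piD θ y)) (P.shearPair.planeMap (piD θ' y')) := by
    intro n hn θ hθ n' θ' hθ'
    obtain ⟨e, he, rfl⟩ := Finset.mem_image.mp hn
    obtain ⟨-, hd, hd'⟩ := Finset.mem_filter.mp he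
    refine sepScale_le_dist_planeMap hy hy' hm hm' hmm' hθ hθ' ?_ ?_
    · rwa [digit_add_level_even]
    · rwa [digit_add_level_even, ← hmm']
  have measurable := P.shearPair.contDiff_planeMap.continuous.measurable
  rw [map_diskCircleMeasure measurable, map_diskCircleMeasure measurable] at hK
  have sepScale_pos := P.sepScale_pos
  have sepScale_lt := P.sepScale_lt_one
  have margin_le := P.margin_le_sepScale
  have bound := card_mul_sub_le_of_kantorovichLE_map (measurable.comp (continuous_piD y).measurable)
    (measurable.comp (continuous_piD y').measurable) P.cellWidth_mul P.margin_pos (by linarith)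
    hs hsep (dist_planeMap_piD_le_two hy hy') (dist_planeMap_piD_le_two hy' hy') hK
  by_contra! hle
  have sixteenth : 1 / 16 ≤ s.card * P.cellWidth := by
    have hle : (P.wordLength : ℝ) ≤ 8 * T.card := by exact_mod_cast hle
    have unit := P.cellWidth_mul
    have := P.cellWidth_pos
    rw [card_s]
    push_cast at unit ⊢
    nlinarith [show 0 ≤ P.q * P.cellWidth by positivity]
  have gain : P.sepScale / 16 * (1 - 2 * P.margin) ≤
      s.card * (P.cellWidth * (1 - 2 * P.margin)) * P.sepScale := by
    nlinarith [mul_nonneg sepScale_pos.le (show 0 ≤ 1 - 2 * P.margin by linarith)]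
  rw [resolution] at bound
  nlinarith [P.margin_pos]

lemma four_mul_hammingDist_lt (hy : y ∈ P.window) (hy' : y' ∈ P.window)
    (hm : y ∈ cellCore P.slotWidth P.margin m) (hm' : y' ∈ cellCore P.slotWidth P.margin m')
    (hmm' : m / P.numWords = m' / P.numWords)
    (hK : KantorovichLE ((diskCircleMeasure y).map P.shearPair.planeMap)
      ((diskCircleMeasure y').map P.shearPair.planeMap) (6 * P.resolution)) :
    4 * hammingDist (P.word m) (P.word m') < P.wordLength := by
  have disagreements : ({z | P.word m z ≠ P.word m' z} : Finset (ZMod P.wordLength)) ⊆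
      ({z | P.word m z = true ∧ P.word m' z = false} : Finset _) ∪
        ({z | P.word m' z = true ∧ P.word m z = false} : Finset _) := fun z ↦ by
    cases h : P.word m z <;> cases h' : P.word m' z <;> simp [h, h']
  have card_le := (Finset.card_le_card disagreements).trans (Finset.card_union_le _ _)
  have := eight_mul_card_true_false_lt hy hy' hm hm' hmm' hK
  have := eight_mul_card_true_false_lt hy' hy hm' hm hmm'.symm hK.symm
  rw [hammingDist]
  omega

open scoped Classical in
lemma card_filter_block_le {S : Set ℝ} (hS : S ⊆ P.window)
    (hK : ∀ y ∈ S, ∀ y' ∈ S, KantorovichLE ((diskCircleMeasure y).map P.shearPair.planeMap)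
      ((diskCircleMeasure y').map P.shearPair.planeMap) (6 * P.resolution))
    {s : Finset ℤ} (hs : ∀ n ∈ s, (cellCore P.slotWidth P.margin n ∩ S).Nonempty) (b : ℤ) :
    ({n ∈ s | n / P.numWords = b}.card : ℝ) ≤ (25 / 14) ^ P.wordLength := by
  rcases {n ∈ s | n / P.numWords = b}.eq_empty_or_nonempty with h | ⟨n₀, hn₀⟩
  · rw [h, Finset.card_empty, Nat.cast_zero]
    positivity
  obtain ⟨n₀_mem, rfl⟩ := Finset.mem_filter.mp hn₀
  obtain ⟨y₀, hm₀, hy₀⟩ := hs n₀ n₀_mem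
  have in_ball : ∀ n ∈ ({n ∈ s | n / P.numWords = n₀ / P.numWords} : Finset ℤ), P.word n ∈
      ({c | 4 * hammingDist c (P.word n₀) < Fintype.card (ZMod P.wordLength)} : Finset _) := by
    intro n hn
    obtain ⟨hn, block_eq⟩ := Finset.mem_filter.mp hn
    obtain ⟨y, hm, hy⟩ := hs n hn
    rw [Finset.mem_filter_univ, ZMod.card]
    exact four_mul_hammingDist_lt (hS hy) (hS hy₀) hm hm₀ block_eq (hK y hy y₀ hy₀)
  have injOn : Set.InjOn P.word ({n ∈ s | n / P.numWords = n₀ / P.numWords} : Finset ℤ) := by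
    intro n hn n' hn' h
    exact P.eq_of_word_eq ((Finset.mem_filter.mp hn).2.trans (Finset.mem_filter.mp hn').2.symm) h
  have card_le := Finset.card_le_card_of_injOn P.word in_ball injOn
  have ball_card := card_quarter_hammingBall_le (P.word n₀)
  rw [ZMod.card] at ball_card card_le
  exact ball_card.trans' (by exact_mod_cast card_le)

/-- A block retains at most `(25 / 14) ^ wordLength` of its `2 ^ wordLength` slots. -/
lemma volume_real_le {S : Set ℝ} (hS : S ⊆ P.window)
    (hK : ∀ y ∈ S, ∀ y' ∈ S, KantorovichLE ((diskCircleMeasure y).map P.shearPair.planeMap)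
      ((diskCircleMeasure y').map P.shearPair.planeMap) (6 * P.resolution)) :
    volume.real S ≤ 4 * (25 / 28) ^ P.wordLength := by
  classical
  have maxRise_pos := P.maxRise_pos
  set B : ℤ := 8 * P.A * P.M * P.wordLength
  have B_nonneg : 0 ≤ B := by positivity
  have unit : P.slotWidth * (P.numWords * B : ℤ) = 1 := by
    have A_mul : P.A * P.maxRise = 1 := mul_one_div_cancel (by exact_mod_cast P.A_pos.ne')
    push_cast [B]
    linear_combination P.A * P.M * P.slotWidth_mul + P.A * P.M_mul_levelGap + A_mul
  have cells := volume_real_le_card_cells_mul_add P.slotWidth_pos P.margin_pos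
    (by linarith [P.margin_le_sepScale, P.sepScale_lt_one])
    (a := P.numWords * -B) (b := P.numWords * B) (by gcongr; omega) (S := S)
    (hS.trans (Set.Icc_subset_Icc (by push_cast at unit ⊢; linarith) (by linarith)))
  have card_le := card_le_mul_of_card_block_le P.numWords_pos (i := -B) (j := B) (by omega)
    (Finset.filter_subset _ _) (card_filter_block_le hS hK fun n hn ↦ (Finset.mem_filter.mp hn).2)
  have retained : (25 / 14 : ℝ) ^ P.wordLength = P.numWords * (25 / 28) ^ P.wordLength := by
    rw [numWords, Nat.cast_pow, ← mul_pow]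
    norm_num
  have := P.slotWidth_pos
  push_cast at cells card_le unit
  calc volume.real S
    _ ≤ (25 / 14) ^ P.wordLength * (B - -B) * P.slotWidth +
        (P.numWords * B - P.numWords * -B) * (2 * P.slotWidth * P.margin) := by
      refine cells.trans ?_
      gcongr
    _ = 2 * (25 / 28) ^ P.wordLength + 4 * P.margin := by
      rw [retained]
      linear_combination (2 * (25 / 28) ^ P.wordLength + 4 * P.margin) * unit
    _ ≤ 4 * (25 / 28) ^ P.wordLength := by
      linarith [P.margin_le_pow, show (0 : ℝ) < (25 / 28) ^ P.wordLength by positivity]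

end CodingParams

/-! ### The choice of the parameters -/

open Filter Topology in
lemma eventually_mul_pow_sq_le_exp_neg_rpow {b c C ε : ℝ} (hb : 0 < b) (hb' : b < 1) (hc : 0 < c)
    (hC : 0 < C) (hε : 0 < ε) :
    ∀ᶠ M : ℕ in atTop, C * b ^ (M ^ 2) ≤ Real.exp (-(c / M) ^ (-2 + ε)) := by
  have small : Tendsto (fun M : ℕ ↦ c ^ (-2 + ε) * (M : ℝ) ^ (-ε) + Real.log C / (M : ℝ) ^ 2)
      atTop (𝓝 0) := by
    have power := ((tendsto_rpow_neg_atTop hε).comp tendsto_natCast_atTop_atTop).const_mul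
      (c ^ (-2 + ε))
    have constant := (tendsto_pow_atTop two_ne_zero).comp
      (tendsto_natCast_atTop_atTop (R := ℝ)) |>.const_div_atTop (Real.log C)
    simpa using power.add constant
  filter_upwards [small.eventually_lt_const (neg_pos.mpr (Real.log_neg hb hb')),
    eventually_gt_atTop 0] with M hM M_pos
  have M_pos : (0 : ℝ) < M := by exact_mod_cast M_pos
  have rpow_eq : (c / M) ^ (-2 + ε) = c ^ (-2 + ε) * (M : ℝ) ^ (-ε) * M ^ 2 := by
    rw [Real.div_rpow hc.le M_pos.le, mul_assoc, ← Real.rpow_natCast, ← Real.rpow_add M_pos,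
      div_eq_mul_inv, ← Real.rpow_neg M_pos.le]
    congr 2
    push_cast
    ring
  rw [← Real.log_le_iff_le_exp (by positivity), Real.log_mul hC.ne' (by positivity), Real.log_pow,
    rpow_eq]
  have := mul_lt_mul_of_pos_right hM (pow_pos M_pos 2)
  rw [add_mul, div_mul_cancel₀ _ (by positivity)] at this
  push_cast
  linarith

namespace CodingParams

variable {P : CodingParams} {ε : ℝ}

lemma resolution_eq : P.resolution = 1 / (1024 * P.q * P.A) / P.M := by
  unfold resolution sepScale levelGap maxRise
  field_simp
  norm_num

lemma cellWidth_le : P.cellWidth ≤ 1 / P.M := by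
  have : (1 : ℝ) ≤ P.q := by exact_mod_cast P.q_pos
  have : (1 : ℝ) ≤ P.M := by exact_mod_cast P.M_pos
  unfold cellWidth wordLength
  push_cast
  gcongr
  nlinarith

open Filter in
lemma exists_codingParams {q : ℕ} (hq : 1 ≤ q) (hε : 0 < ε) (hε' : ε < 1) {η₁ : ℝ} (hη₁ : 0 < η₁) :
    ∃ P : CodingParams, P.q = q ∧ 8 * P.maxRise ≤ ε ∧
      √(P.maxRise / 2) + 2 * Real.pi * P.cellWidth ≤ ε / 32 ∧ P.resolution < η₁ ∧
      2 * (25 / 28) ^ P.wordLength ≤ Real.exp (-P.resolution ^ (-2 + ε)) := by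
  obtain ⟨A, hA⟩ := exists_nat_gt (2048 / ε ^ 2)
  have A_pos : (0 : ℝ) < A := hA.trans' (by positivity)
  have rise_le : 1 / (A : ℝ) ≤ ε ^ 2 / 2048 := by
    rw [one_div_le A_pos (by positivity), one_div_div]
    exact hA.le
  have : (0 : ℝ) < q := by exact_mod_cast hq
  have eventually_small : ∀ᶠ M : ℕ in atTop, 2 * Real.pi / M < ε / 64 :=
    (tendsto_const_div_atTop_nhds_zero_nat _).eventually_lt_const (by positivity)
  have eventually_fine : ∀ᶠ M : ℕ in atTop, 1 / (1024 * q * A : ℝ) / M < η₁ :=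
    (tendsto_const_div_atTop_nhds_zero_nat _).eventually_lt_const hη₁
  obtain ⟨M, small, fine, emergent, M_pos⟩ := (eventually_small.and <| eventually_fine.and <|
    (eventually_mul_pow_sq_le_exp_neg_rpow (b := 25 / 28) (c := 1 / (1024 * q * A)) (C := 2)
      (by norm_num) (by norm_num) (by positivity) two_pos hε).and <| eventually_gt_atTop 0).exists
  let P : CodingParams := ⟨q, A, M, hq, by exact_mod_cast A_pos, M_pos⟩
  refine ⟨P, rfl, ?_, ?_, P.resolution_eq.trans_lt fine, ?_⟩
  · have : P.maxRise ≤ ε ^ 2 / 2048 := rise_le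
    nlinarith
  · have sqrt_le : √(P.maxRise / 2) ≤ ε / 64 := by
      refine (Real.sqrt_le_left (by positivity)).mpr ?_
      have : P.maxRise ≤ ε ^ 2 / 2048 := rise_le
      linarith
    have twist_le : 2 * Real.pi * P.cellWidth ≤ 2 * Real.pi / M := by
      rw [← mul_one_div]
      gcongr
      exact P.cellWidth_le
    linarith
  · rw [P.resolution_eq]
    exact emergent

/-! ### The emergence estimate -/

variable {y : ℝ}

lemma mem_window_of_kantorovichLE {y' : ℝ} (hε : 8 * P.maxRise ≤ ε)
    (hε' : √(P.maxRise / 2) + 2 * Real.pi * P.cellWidth ≤ ε / 32)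
    (hy : y ∈ Set.Icc (-1 + ε) (1 - ε)) (hy' : y' ∈ Set.Icc (-1) 1)
    (hK : KantorovichLE ((diskCircleMeasure y).map P.shearPair.planeMap)
      ((diskCircleMeasure y').map P.shearPair.planeMap) (3 * P.resolution)) : y' ∈ P.window := by
  have maxRise_pos := P.maxRise_pos
  have close := abs_le.mp <| abs_sub_le_of_kantorovichLE
    P.shearPair.contDiff_planeMap.continuous.measurable
    (fun x ↦ (P.shearPair.norm_planeMap_sub_le P.abs_twist_le x).trans hε')
    ⟨by linarith [hy.1], by linarith [hy.2]⟩ hy' hK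
  have resolution_le : P.resolution ≤ P.maxRise / 1024 := by
    unfold resolution
    linarith [P.sepScale_le, P.levelGap_le]
  constructor <;> linarith [hy.1, hy.2]

lemma half_volume_kantorovichLE_le (hε : 8 * P.maxRise ≤ ε)
    (hε' : √(P.maxRise / 2) + 2 * Real.pi * P.cellWidth ≤ ε / 32)
    (hy : y ∈ Set.Icc (-1 + ε) (1 - ε)) :
    (1 / 2 : ℝ≥0∞) * volume {y' ∈ Set.Icc (-1 : ℝ) 1 |
      KantorovichLE ((diskCircleMeasure y).map P.shearPair.planeMap)
        ((diskCircleMeasure y').map P.shearPair.planeMap) (3 * P.resolution)} ≤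
      ENNReal.ofReal (2 * (25 / 28) ^ P.wordLength) := by
  set S := {y' ∈ Set.Icc (-1 : ℝ) 1 |
    KantorovichLE ((diskCircleMeasure y).map P.shearPair.planeMap)
      ((diskCircleMeasure y').map P.shearPair.planeMap) (3 * P.resolution)}
  have subset_window : S ⊆ P.window := fun y' hy' ↦
    mem_window_of_kantorovichLE hε hε' hy hy'.1 hy'.2
  have volume_le := volume_real_le subset_window fun y₁ hy₁ y₂ hy₂ ↦ by
    convert hy₁.2.symm.trans hy₂.2 using 1
    ring
  have finite : volume S ≠ ∞ := (measure_lt_top_of_subset subset_window measure_Icc_lt_top.ne).ne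
  calc (1 / 2 : ℝ≥0∞) * volume S
    _ = ENNReal.ofReal (1 / 2 * volume.real S) := by
      rw [ENNReal.ofReal_mul (by norm_num), ofReal_measureReal finite]
      simp
    _ ≤ ENNReal.ofReal (2 * (25 / 28) ^ P.wordLength) := ENNReal.ofReal_le_ofReal (by linarith)

end CodingParams

/-- **Corollary 4.2 (disk case): the emergence lemma on the disk.** There is `ε₀ > 0` such that
for every `ε ∈ (0, ε₀)`, `q ≥ 1` and `η₁ > 0`, there are `η ∈ (0, η₁)` and a `C^∞`, Lebesgue
measure-preserving diffeomorphism `g` of `ℝ²`, equal to the identity outside a compact subset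
of the punctured open unit disk, commuting with the rotation by `2π/q` about the origin,
`ε`-`C⁰`-close to the identity together with its inverse, and such that for every
`y ∈ [−1+ε, 1−ε]`, the normalized measure of the set of heights `y'` with
`d_K(g_*μ_y, g_*μ_{y'}) ≤ 3η` is at most `exp(−η^{−2+ε})`. -/
theorem disk_emergence_lemma :
    ∃ ε₀ > (0 : ℝ), ∀ ε : ℝ, 0 < ε → ε < ε₀ → ∀ q : ℕ, 1 ≤ q → ∀ η₁ : ℝ, 0 < η₁ →
      ∃ η : ℝ, 0 < η ∧ η < η₁ ∧
      ∃ g : EuclideanSpace ℝ (Fin 2) ≃ EuclideanSpace ℝ (Fin 2),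
        ContDiff ℝ (⊤ : ℕ∞) ⇑g ∧ ContDiff ℝ (⊤ : ℕ∞) ⇑g.symm ∧
        MeasurePreserving g volume volume ∧
        (∃ K : Set (EuclideanSpace ℝ (Fin 2)), IsCompact K ∧
          K ⊆ {x : EuclideanSpace ℝ (Fin 2) | 0 < ‖x‖ ∧ ‖x‖ < 1} ∧
          ∀ x ∉ K, g x = x) ∧
        (∀ x : EuclideanSpace ℝ (Fin 2), g (rotO (1 / q) x) = rotO (1 / q) (g x)) ∧
        (∀ x : EuclideanSpace ℝ (Fin 2), ‖g x - x‖ ≤ ε ∧ ‖g.symm x - x‖ ≤ ε) ∧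
        ∀ y ∈ Set.Icc (-1 + ε) (1 - ε),
          (1 / 2 : ℝ≥0∞) * (volume : Measure ℝ) {y' ∈ Set.Icc (-1 : ℝ) 1 |
              ∀ f : EuclideanSpace ℝ (Fin 2) → ℝ, LipschitzWith 1 f →
                (∫ x, f x ∂(Measure.map g (diskCircleMeasure y))) -
                    (∫ x, f x ∂(Measure.map g (diskCircleMeasure y'))) ≤ 3 * η} ≤
            ENNReal.ofReal (Real.exp (-η ^ (-2 + ε))) := by
  refine ⟨1, one_pos, fun ε hε hε' q hq η₁ hη₁ ↦ ?_⟩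
  obtain ⟨P, rfl, maxRise_le, displacement_le, resolution_lt, emergent⟩ :=
    CodingParams.exists_codingParams hq hε hε' hη₁
  have displacement (x : EuclideanSpace ℝ (Fin 2)) : ‖P.shearPair.planeEquiv x - x‖ ≤ ε :=
    (P.shearPair.norm_planeMap_sub_le P.abs_twist_le x).trans (displacement_le.trans (by linarith))
  refine ⟨P.resolution, div_pos P.sepScale_pos (by norm_num), resolution_lt,
    P.shearPair.planeEquiv, P.shearPair.contDiff_planeMap, P.shearPair.symm.contDiff_planeMap,
    P.shearPair.measurePreserving_planeEquiv, P.shearPair.exists_isCompact_planeMap_eq_self,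
    P.shearPair.planeMap_rotO P.periodic_smoothStep_lift, fun x ↦ ⟨displacement x, ?_⟩,
    fun y hy ↦ (CodingParams.half_volume_kantorovichLE_le maxRise_le displacement_le hy).trans
      (ENNReal.ofReal_le_ofReal emergent)⟩
  simpa [norm_sub_rev] using displacement (P.shearPair.planeEquiv.symm x)
end

section
/- Let H : ℝ² → ℝ² be a homeomorphism that preserves 2-dimensional Lebesgue measure, satisfies H(x+1, y) = H(x, y) + (1, 0) for all (x,y), and equals the identity whenever |y| ≥ 1 (so H is the lift of an area-preserving homeomorphism of the cylinder (ℝ/ℤ)×[−1,1] equal to the identity on the boundary). Then for every ε > 0 and every integer q ≥ 1, there exists a measure-preserving C^∞ diffeomorphism H̃ : ℝ² → ℝ² with H̃(x + 1/q, y) = H̃(x, y) + (1/q, 0) for all (x,y) and H̃ = id whenever |y| ≥ 1 − δ for some δ > 0, such that the composition Ĥ := H ∘ H̃ satisfies: for every y ∈ [−1 + ε/8, 1 − ε/8] and every 1-Lipschitz function φ : ℝ² → ℝ with φ(x+1, s) = φ(x, s) for all (x,s), |∫₀¹ φ(Ĥ(t, y)) dt − (1/2)∫_{−1}^{1} ∫₀¹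 φ(t, s) dt ds| ≤ ε/8. (The key construction step in Proposition 3.2: composing a given conjugacy with a Lemma 3.1 map sends almost every horizontal circle measure ε/8-close to the area measure in the Kantorovich distance.) -/
open MeasureTheory

/-- The Euclidean distance on the plane `ℝ × ℝ`. -/
noncomputable def euclDist (a b : ℝ × ℝ) : ℝ :=
  Real.sqrt ((a.1 - b.1) ^ 2 + (a.2 - b.2) ^ 2)

/-!
A smooth foliation of the cylinder by graphs over the circle can be straightened to the foliation by
horizontal circles by an area-preserving diffeomorphism, which sends each leaf to the circle at its
mean height. Choose the leaf with label `Y` close to height `-1` where `4Y ≤ cos (2πx)` and close to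
height `1` where `4Y ≥ cos (2πx) + κ`, with a steep climb in between. The segment
`{x} × [-1 + η, 1 - η]` then meets only leaves whose labels lie in an interval of length `κ/4` above
`cos (2πx) / 4`. Two such leaves can be far apart only over the set of `t` with `cos (2πt)` close to
`cos (2πx)`, which has small measure, so their mean heights nearly agree and straightening sends the
segment into a thin horizontal band.

Conjugating by the dilation `x ↦ N x` makes the map `1/N`-periodic and shrinks its horizontal
displacement to at most `1/N`, so every such segment is sent into a set of small diameter. Hence a
continuous function has nearly the same average over the images of all circles at heights in
`[-1 + η, 1 - η]`, and area preservation forces the common value to be close to the average over the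
cylinder. The functions `φ ∘ H` are equicontinuous, their increments being dominated by the
distances between the values of `H`, so one `N` serves all of them.
-/

section EquidistributingMap

open Set Filter Function
open scoped ContDiff Topology

section ParametricIntegral

universe u

variable {E F : Type u} [NormedAddCommGroup E] [NormedSpace ℝ E] [ProperSpace E]
  [NormedAddCommGroup F] [NormedSpace ℝ F]

lemma hasFDerivAt_intervalIntegral_of_contDiff {f : E × ℝ → F} (hf : ContDiff ℝ 1 f) (a b : ℝ)
    (x : E) :
    HasFDerivAt (fun x => ∫ t in a..b, f (x, t))
      (∫ t in a..b, (fderiv ℝ f (x, t)).comp (ContinuousLinearMap.inl ℝ E ℝ)) x := by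
  have hf' : Continuous fun p : E × ℝ => (fderiv ℝ f p).comp (ContinuousLinearMap.inl ℝ E ℝ) :=
    (hf.continuous_fderiv one_ne_zero).clm_comp continuous_const
  obtain ⟨C, hC⟩ := ((isCompact_closedBall x 1).prod
    (isCompact_uIcc (a := a) (b := b))).exists_bound_of_continuousOn hf'.continuousOn
  refine intervalIntegral.hasFDerivAt_integral_of_dominated_of_fderiv_le (𝕜 := ℝ)
    (F := fun x t => f (x, t)) (s := Metric.ball x 1) (bound := fun _ => C)
    (F' := fun x t => (fderiv ℝ f (x, t)).comp (ContinuousLinearMap.inl ℝ E ℝ))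
    (Metric.ball_mem_nhds x one_pos)
    (Eventually.of_forall fun y => (hf.continuous.comp (by fun_prop)).aestronglyMeasurable)
    ((hf.continuous.comp (by fun_prop)).intervalIntegrable _ _)
    (hf'.comp (by fun_prop)).aestronglyMeasurable
    (Eventually.of_forall fun t ht y hy => ?_) intervalIntegrable_const
    (Eventually.of_forall fun t _ y _ => ?_)
  · exact hC (y, t) ⟨Metric.ball_subset_closedBall hy, uIoc_subset_uIcc ht⟩
  · have hfy : HasFDerivAt f (fderiv ℝ f (y, t)) (y, t) :=
      (hf.differentiable one_ne_zero).differentiableAt.hasFDerivAt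
    exact hfy.comp y (hasFDerivAt_prodMk_left y t)

lemma contDiff_intervalIntegral_nat (n : ℕ) (a b : ℝ) :
    ∀ {F : Type u} [NormedAddCommGroup F] [NormedSpace ℝ F] {f : E × ℝ → F},
      ContDiff ℝ n f → ContDiff ℝ n fun x => ∫ t in a..b, f (x, t) := by
  induction n with
  | zero =>
    intro F _ _ f hf
    simp only [Nat.cast_zero, contDiff_zero] at hf ⊢
    exact intervalIntegral.continuous_parametric_intervalIntegral_of_continuous'
      (f := fun x t => f (x, t)) hf a b
  | succ n ih =>
    intro F _ _ f hf
    push_cast at hf ⊢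
    have hderiv := hasFDerivAt_intervalIntegral_of_contDiff
      (hf.of_le (by exact_mod_cast Nat.le_add_left 1 n)) a b
    refine contDiff_succ_iff_fderiv.2 ⟨fun x => (hderiv x).differentiableAt, by simp, ?_⟩
    rw [funext fun x => (hderiv x).fderiv]
    exact ih ((hf.fderiv_right le_rfl).clm_comp contDiff_const)

lemma contDiff_intervalIntegral {n : ℕ∞} {f : E × ℝ → F} (hf : ContDiff ℝ n f) (a b : ℝ) :
    ContDiff ℝ n fun x => ∫ t in a..b, f (x, t) :=
  contDiff_iff_forall_nat_le.2 fun m hm =>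
    contDiff_intervalIntegral_nat m a b (hf.of_le (by exact_mod_cast hm))

end ParametricIntegral

section Jacobian

variable {E : Type*} [NormedAddCommGroup E] [NormedSpace ℝ E] [FiniteDimensional ℝ E]

lemma contDiff_symm_of_det_fderiv_ne_zero {n : WithTop ℕ∞} {e : E ≃ E} (he : ContDiff ℝ n e)
    (hn : n ≠ 0) (hdet : ∀ z, (fderiv ℝ e z).det ≠ 0) : ContDiff ℝ n e.symm := by
  have : CompleteSpace E := FiniteDimensional.complete ℝ E
  let e' (z : E) : E ≃L[ℝ] E := (fderiv ℝ e z).toContinuousLinearEquivOfDetNeZero (hdet z)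
  have he' (z : E) : HasStrictFDerivAt e (e' z : E →L[ℝ] E) z :=
    he.contDiffAt.hasStrictFDerivAt hn
  exact (e.toHomeomorphOfContinuousOpen he.continuous
    (isOpenMap_of_hasStrictFDerivAt_equiv he')).contDiff_symm (fun z => (he' z).hasFDerivAt) he

variable [MeasurableSpace E] [BorelSpace E] (μ : Measure E) [μ.IsAddHaarMeasure]

lemma map_withDensity_abs_det_fderiv_equiv {e : E ≃ E} (he : Differentiable ℝ e) :
    (μ.withDensity fun z => ENNReal.ofReal |(fderiv ℝ e z).det|).map e = μ := by
  simpa [e.surjective.range_eq] using map_withDensity_abs_det_fderiv_eq_addHaar μ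
    MeasurableSet.univ.nullMeasurableSet (fun z _ => (he z).hasFDerivAt.hasFDerivWithinAt)
    e.injective.injOn

lemma measurePreserving_symm_trans_of_abs_det_fderiv_eq {e₁ e₂ : E ≃ E}
    (he₁ : Differentiable ℝ e₁) (he₁_symm : Measurable e₁.symm) (he₂ : Differentiable ℝ e₂)
    (hdet : ∀ z, |(fderiv ℝ e₁ z).det| = |(fderiv ℝ e₂ z).det|) :
    MeasurePreserving (e₁.symm.trans e₂) μ μ := by
  have hmeas₁ : Measurable e₁ := he₁.continuous.measurable
  have hmeas₂ : Measurable e₂ := he₂.continuous.measurable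
  refine ⟨hmeas₂.comp he₁_symm, ?_⟩
  rw [Equiv.coe_trans, ← Measure.map_map hmeas₂ he₁_symm]
  conv_lhs => rw [← map_withDensity_abs_det_fderiv_equiv μ he₁]
  rw [Measure.map_map he₁_symm hmeas₁, e₁.symm_comp_self, Measure.map_id]
  simp only [hdet]
  exact map_withDensity_abs_det_fderiv_equiv μ he₂

lemma measurePreserving_linear_conj (S : E ≃L[ℝ] E) {f : E → E} (hf : MeasurePreserving f μ μ) :
    MeasurePreserving (S.symm ∘ f ∘ S) μ μ := by
  have hS : MeasurePreserving S.toHomeomorph.toMeasurableEquiv μ (μ.map S) :=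
    S.continuous.measurable.measurePreserving μ
  have hmap : μ.map S = _ :=
    Measure.map_linearMap_addHaar_eq_smul_addHaar μ (f := (S : E →ₗ[ℝ] E))
      S.toLinearEquiv.isUnit_det'.ne_zero
  have hf' : MeasurePreserving f (μ.map S) (μ.map S) := by
    rw [hmap]
    exact hf.smul_measure _
  exact (hS.symm _).comp (hf'.comp hS)

end Jacobian

section Plane

lemma linearMap_det_prod {R : Type*} [CommRing R] (L : R × R →ₗ[R] R × R) :
    L.det = (L (1, 0)).1 * (L (0, 1)).2 - (L (0, 1)).1 * (L (1, 0)).2 := by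
  rw [← LinearMap.det_toMatrix (Module.Basis.finTwoProd R), Matrix.det_fin_two]
  simp [LinearMap.toMatrix_apply]

variable {𝕜 E : Type*} [NontriviallyNormedField 𝕜] [NormedAddCommGroup E] [NormedSpace 𝕜 E]
  {f : 𝕜 × 𝕜 → E} {x y : 𝕜}

lemma hasDerivAt_partial_fst (hf : DifferentiableAt 𝕜 f (x, y)) :
    HasDerivAt (fun t => f (t, y)) (fderiv 𝕜 f (x, y) (1, 0)) x :=
  hf.hasFDerivAt.comp_hasDerivAt x ((hasDerivAt_id x).prodMk (hasDerivAt_const x y))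

lemma hasDerivAt_partial_snd (hf : DifferentiableAt 𝕜 f (x, y)) :
    HasDerivAt (fun t => f (x, t)) (fderiv 𝕜 f (x, y) (0, 1)) y :=
  hf.hasFDerivAt.comp_hasDerivAt y ((hasDerivAt_const y x).prodMk (hasDerivAt_id y))

lemma det_fderiv_of_hasDerivAt_partial {f : 𝕜 × 𝕜 → 𝕜 × 𝕜} {u v : 𝕜 × 𝕜}
    (hf : DifferentiableAt 𝕜 f (x, y)) (hu : HasDerivAt (fun t => f (t, y)) u x)
    (hv : HasDerivAt (fun t => f (x, t)) v y) :
    (fderiv 𝕜 f (x, y)).det = u.1 * v.2 - v.1 * u.2 := by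
  rw [hu.unique (hasDerivAt_partial_fst hf), hv.unique (hasDerivAt_partial_snd hf)]
  exact linearMap_det_prod _

end Plane

/-- Lifts to the plane of area-preserving smooth diffeomorphisms of the cylinder
`(ℝ/ℤ) × [-1, 1]` that are the identity near the boundary and commute with the rotation by `c`.
They are extended to the plane by the identity. -/
structure IsCylinderDiffeo (c : ℝ) (F : ℝ × ℝ ≃ ℝ × ℝ) : Prop where
  contDiff : ContDiff ℝ ∞ F
  contDiff_symm : ContDiff ℝ ∞ F.symm
  measurePreserving : MeasurePreserving F volume volume
  map_add : ∀ x y, F (x + c, y) = F (x, y) + (c, 0)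
  exists_eq_id : ∃ δ > 0, ∀ x y, 1 - δ ≤ |y| → F (x, y) = (x, y)

/-- A smooth foliation of the cylinder by graphs, horizontal near the boundary: the leaves are the
graphs of `fun x => height (x, Y)`, labelled by `Y`. -/
structure GraphFoliation where
  height : ℝ × ℝ → ℝ
  contDiff : ContDiff ℝ ∞ height
  periodic : ∀ x Y, height (x + 1, Y) = height (x, Y)
  fderiv_pos : ∀ p, 0 < fderiv ℝ height p (0, 1)
  exists_eq_id : ∃ δ > 0, ∀ x Y, 1 - δ ≤ |Y| → height (x, Y) = Y

lemma surjective_of_eq_id {f : ℝ → ℝ} (hf : Continuous f) {r : ℝ} (h : ∀ y, r ≤ |y| → f y = y) :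
    Surjective f := by
  refine hf.surjective (tendsto_id.congr' ?_) (tendsto_id.congr' ?_)
  · filter_upwards [eventually_ge_atTop r] with y hy
    exact (h y (hy.trans (le_abs_self y))).symm
  · filter_upwards [eventually_le_atBot (-r)] with y hy
    exact (h y ((le_neg.1 hy).trans (neg_le_abs y))).symm

namespace GraphFoliation

variable (W : GraphFoliation)

/-- The derivative of the height in the leaf label: area density in the coordinates
`(x, Y)`. -/
noncomputable def density (p : ℝ × ℝ) : ℝ := fderiv ℝ W.height p (0, 1)

/-- The area per unit of label between the abscissas `0` and `p.1`, at the leaf `p.2`. -/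
noncomputable def mass (p : ℝ × ℝ) : ℝ := ∫ t in 0..p.1, W.density (t, p.2)

/-- The mean height of the leaf labelled by `Y`, which is the height of the circle it is
straightened to. -/
noncomputable def meanHeight (Y : ℝ) : ℝ := ∫ t in 0..1, W.height (t, Y)

/-- The mass normalized to have degree one: the abscissa, after straightening, of the point of the
leaf `p.2` above `p.1`. -/
noncomputable def angle (p : ℝ × ℝ) : ℝ := W.mass p / W.mass (1, p.2)

lemma density_pos (p : ℝ × ℝ) : 0 < W.density p := W.fderiv_pos p

lemma contDiff_density : ContDiff ℝ ∞ W.density :=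
  (W.contDiff.fderiv_right le_rfl).clm_apply contDiff_const

lemma continuous_density_left (Y : ℝ) : Continuous fun t => W.density (t, Y) :=
  W.contDiff_density.continuous.comp (by fun_prop)

lemma differentiable_height : Differentiable ℝ W.height := W.contDiff.differentiable (by simp)

lemma hasDerivAt_height (x Y : ℝ) :
    HasDerivAt (fun Y => W.height (x, Y)) (W.density (x, Y)) Y :=
  hasDerivAt_partial_snd (W.differentiable_height _)

lemma strictMono_height (x : ℝ) : StrictMono fun Y => W.height (x, Y) :=
  strictMono_of_hasDerivAt_pos (W.hasDerivAt_height x) fun _ => W.density_pos _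

lemma periodic_density (Y : ℝ) : Periodic (fun t => W.density (t, Y)) 1 := fun x => by
  have h := W.hasDerivAt_height (x + 1) Y
  simp only [W.periodic] at h
  exact h.unique (W.hasDerivAt_height x Y)

lemma hasDerivAt_mass (x Y : ℝ) : HasDerivAt (fun t => W.mass (t, Y)) (W.density (x, Y)) x :=
  ((W.continuous_density_left Y).integral_hasStrictDerivAt 0 x).hasDerivAt

lemma mass_zero (Y : ℝ) : W.mass (0, Y) = 0 := intervalIntegral.integral_same

lemma strictMono_mass (Y : ℝ) : StrictMono fun x => W.mass (x, Y) :=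
  strictMono_of_hasDerivAt_pos (fun x => W.hasDerivAt_mass x Y) fun _ => W.density_pos _

lemma mass_one_pos (Y : ℝ) : 0 < W.mass (1, Y) :=
  (W.mass_zero Y).symm.trans_lt (W.strictMono_mass Y one_pos)

lemma mass_add_one (x Y : ℝ) : W.mass (x + 1, Y) = W.mass (x, Y) + W.mass (1, Y) := by
  have h_int (a b : ℝ) := (W.continuous_density_left Y).intervalIntegrable (μ := volume) a b
  simpa [mass] using (W.periodic_density Y).intervalIntegral_add_eq_add 0 x h_int

lemma contDiff_mass : ContDiff ℝ ∞ W.mass := by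
  -- Rescaling to the fixed interval `[0, 1]` moves the variable endpoint into the integrand.
  have hmass : W.mass = fun p => p.1 * ∫ u in 0..1, W.density (p.1 * u, p.2) := by
    ext p
    simpa [mass] using (intervalIntegral.mul_integral_comp_mul_left (a := 0) (b := 1)
      (f := fun t => W.density (t, p.2)) (c := p.1)).symm
  rw [hmass]
  exact contDiff_fst.mul (contDiff_intervalIntegral
    (f := fun q : (ℝ × ℝ) × ℝ => W.density (q.1.1 * q.2, q.1.2))
    (W.contDiff_density.comp (by fun_prop)) 0 1)

lemma contDiff_height_swap : ContDiff ℝ ∞ fun p : ℝ × ℝ => W.height (p.2, p.1) :=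
  W.contDiff.comp (by fun_prop)

lemma contDiff_meanHeight : ContDiff ℝ ∞ W.meanHeight :=
  contDiff_intervalIntegral W.contDiff_height_swap 0 1

lemma hasDerivAt_meanHeight (Y : ℝ) : HasDerivAt W.meanHeight (W.mass (1, Y)) Y := by
  have hsmooth : ContDiff ℝ 1 fun p : ℝ × ℝ => W.height (p.2, p.1) :=
    W.contDiff_height_swap.of_le (by simp)
  have hderiv := (hasFDerivAt_intervalIntegral_of_contDiff hsmooth 0 1 Y).hasDerivAt
  rw [ContinuousLinearMap.intervalIntegral_apply
    (((hsmooth.continuous_fderiv one_ne_zero).comp (by fun_prop)).clm_comp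
      continuous_const |>.intervalIntegrable _ _)] at hderiv
  refine hderiv.congr_deriv (intervalIntegral.integral_congr fun t _ => ?_)
  exact (hasDerivAt_partial_fst (hsmooth.differentiable one_ne_zero _)).unique
    (W.hasDerivAt_height t Y)

lemma strictMono_meanHeight : StrictMono W.meanHeight :=
  strictMono_of_hasDerivAt_pos W.hasDerivAt_meanHeight W.mass_one_pos

lemma contDiff_angle : ContDiff ℝ ∞ W.angle :=
  W.contDiff_mass.div
    (W.contDiff_mass.comp (by fun_prop : ContDiff ℝ ∞ fun p : ℝ × ℝ => ((1 : ℝ), p.2)))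
    fun p => (W.mass_one_pos p.2).ne'

lemma hasDerivAt_angle (x Y : ℝ) :
    HasDerivAt (fun t => W.angle (t, Y)) (W.density (x, Y) / W.mass (1, Y)) x :=
  (W.hasDerivAt_mass x Y).div_const (W.mass (1, Y))

lemma strictMono_angle (Y : ℝ) : StrictMono fun x => W.angle (x, Y) := fun _ _ h =>
  div_lt_div_of_pos_right (W.strictMono_mass Y h) (W.mass_one_pos Y)

lemma angle_zero (Y : ℝ) : W.angle (0, Y) = 0 := by simp [angle, mass_zero]

lemma angle_add_one (x Y : ℝ) : W.angle (x + 1, Y) = W.angle (x, Y) + 1 := by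
  simp only [angle, mass_add_one, add_div, div_self (W.mass_one_pos Y).ne']

/-- The angle along a leaf, as a lift of a circle homeomorphism. -/
noncomputable def angleLift (Y : ℝ) : CircleDeg1Lift where
  toFun x := W.angle (x, Y)
  monotone' := (W.strictMono_angle Y).monotone
  map_add_one' x := W.angle_add_one x Y

lemma surjective_angle (Y : ℝ) : Surjective fun x => W.angle (x, Y) :=
  (W.angleLift Y).continuous_iff_surjective.1 (W.contDiff_angle.continuous.comp (by fun_prop))

lemma abs_angle_sub_le_one (x Y : ℝ) : |W.angle (x, Y) - x| ≤ 1 := by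
  have hle : W.angle (x, Y) ≤ W.angle (0, Y) + ⌈x⌉ := (W.angleLift Y).map_le_of_map_zero x
  have hge : W.angle (0, Y) + ⌊x⌋ ≤ W.angle (x, Y) := (W.angleLift Y).le_map_of_map_zero x
  rw [angle_zero, zero_add] at hle hge
  rw [abs_sub_le_iff]
  constructor <;> linarith [Int.ceil_lt_add_one x, Int.sub_one_lt_floor x]

lemma surjective_height (x : ℝ) : Surjective fun Y => W.height (x, Y) :=
  let ⟨_, _, hid⟩ := W.exists_eq_id
  surjective_of_eq_id (W.contDiff.continuous.comp (by fun_prop)) (hid x)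

lemma meanHeight_eq_self {δ Y : ℝ} (hid : ∀ x Y, 1 - δ ≤ |Y| → W.height (x, Y) = Y)
    (hY : 1 - δ ≤ |Y|) : W.meanHeight Y = Y := by
  simp [meanHeight, hid _ Y hY]

lemma density_eq_one {δ Y : ℝ} (hid : ∀ x Y, 1 - δ ≤ |Y| → W.height (x, Y) = Y)
    (hY : 1 - δ < |Y|) (x : ℝ) : W.density (x, Y) = 1 := by
  refine (W.hasDerivAt_height x Y).unique ((hasDerivAt_id Y).congr_of_eventuallyEq ?_)
  filter_upwards [continuous_abs.continuousAt.eventually (eventually_gt_nhds hY)] with Z hZ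
  exact hid x Z hZ.le

lemma angle_eq_self {δ Y : ℝ} (hid : ∀ x Y, 1 - δ ≤ |Y| → W.height (x, Y) = Y)
    (hY : 1 - δ < |Y|) (x : ℝ) : W.angle (x, Y) = x := by
  simp [angle, mass, W.density_eq_one hid hY]

lemma surjective_meanHeight : Surjective W.meanHeight :=
  let ⟨_, _, hid⟩ := W.exists_eq_id
  surjective_of_eq_id W.contDiff_meanHeight.continuous fun _ => W.meanHeight_eq_self hid

/-- The coordinates `(x, Y)`, with `Y` the label of the leaf, of the point `(x, height (x, Y))`. -/
noncomputable def graphMap : ℝ × ℝ ≃ ℝ × ℝ :=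
  Equiv.ofBijective (fun p => (p.1, W.height p)) <| by
    refine ⟨?_, fun ⟨x, y⟩ => ?_⟩
    · rintro ⟨x, Y⟩ ⟨x', Y'⟩ h
      obtain ⟨rfl, hY⟩ := Prod.mk.inj h
      exact congrArg (Prod.mk x) ((W.strictMono_height x).injective hY)
    · obtain ⟨Y, rfl⟩ := W.surjective_height x y
      exact ⟨(x, Y), rfl⟩

/-- The coordinates `(x, Y)` of the point of the circle at height `meanHeight Y` that is the image
of the point of the leaf `Y` above `x`. -/
noncomputable def circleMap : ℝ × ℝ ≃ ℝ × ℝ :=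
  Equiv.ofBijective (fun p => (W.angle p, W.meanHeight p.2)) <| by
    refine ⟨?_, fun ⟨x, y⟩ => ?_⟩
    · rintro ⟨x, Y⟩ ⟨x', Y'⟩ h
      obtain ⟨hx, hY⟩ := Prod.mk.inj h
      obtain rfl : Y = Y' := W.strictMono_meanHeight.injective hY
      exact congrArg (·, Y) ((W.strictMono_angle Y).injective hx)
    · obtain ⟨Y, rfl⟩ := W.surjective_meanHeight y
      obtain ⟨X, rfl⟩ := W.surjective_angle Y x
      exact ⟨(X, Y), rfl⟩

/-- The diffeomorphism of the cylinder sending each leaf to the circle at its mean height. -/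
noncomputable def straighten : ℝ × ℝ ≃ ℝ × ℝ := W.graphMap.symm.trans W.circleMap

lemma circleMap_apply (p : ℝ × ℝ) : W.circleMap p = (W.angle p, W.meanHeight p.2) := rfl

lemma straighten_apply_height (x Y : ℝ) :
    W.straighten (x, W.height (x, Y)) = (W.angle (x, Y), W.meanHeight Y) := by
  have hsymm : W.graphMap.symm (x, W.height (x, Y)) = (x, Y) := W.graphMap.symm_apply_apply (x, Y)
  rw [straighten, Equiv.trans_apply, hsymm, circleMap_apply]

lemma contDiff_graphMap : ContDiff ℝ ∞ W.graphMap := contDiff_fst.prodMk W.contDiff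

lemma contDiff_circleMap : ContDiff ℝ ∞ W.circleMap :=
  W.contDiff_angle.prodMk (W.contDiff_meanHeight.comp contDiff_snd)

lemma det_fderiv_graphMap (p : ℝ × ℝ) : (fderiv ℝ W.graphMap p).det = W.density p := by
  have hx : HasDerivAt (fun t => W.graphMap (t, p.2)) (1, fderiv ℝ W.height p (1, 0)) p.1 :=
    (hasDerivAt_id _).prodMk (hasDerivAt_partial_fst (W.differentiable_height _))
  have hY : HasDerivAt (fun t => W.graphMap (p.1, t)) (0, W.density p) p.2 :=
    (hasDerivAt_const _ _).prodMk (W.hasDerivAt_height _ _)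
  have hdet := det_fderiv_of_hasDerivAt_partial
    (W.contDiff_graphMap.differentiable (by simp) _) hx hY
  simpa using hdet

lemma det_fderiv_circleMap (p : ℝ × ℝ) : (fderiv ℝ W.circleMap p).det = W.density p := by
  have hx : HasDerivAt (fun t => W.circleMap (t, p.2))
      (W.density p / W.mass (1, p.2), 0) p.1 :=
    (W.hasDerivAt_angle _ _).prodMk (hasDerivAt_const _ (W.meanHeight p.2))
  have hY : HasDerivAt (fun t => W.circleMap (p.1, t))
      (fderiv ℝ W.angle p (0, 1), W.mass (1, p.2)) p.2 :=
    (hasDerivAt_partial_snd (W.contDiff_angle.differentiable (by simp) _)).prodMk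
      (W.hasDerivAt_meanHeight _)
  have hdet := det_fderiv_of_hasDerivAt_partial
    (W.contDiff_circleMap.differentiable (by simp) _) hx hY
  simpa [div_mul_cancel₀ _ (W.mass_one_pos p.2).ne'] using hdet

lemma contDiff_graphMap_symm : ContDiff ℝ ∞ W.graphMap.symm :=
  contDiff_symm_of_det_fderiv_ne_zero W.contDiff_graphMap (by simp) fun p =>
    (W.det_fderiv_graphMap p).trans_ne (W.density_pos p).ne'

lemma contDiff_circleMap_symm : ContDiff ℝ ∞ W.circleMap.symm :=
  contDiff_symm_of_det_fderiv_ne_zero W.contDiff_circleMap (by simp) fun p =>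
    (W.det_fderiv_circleMap p).trans_ne (W.density_pos p).ne'

lemma straighten_add_one (x y : ℝ) :
    W.straighten (x + 1, y) = W.straighten (x, y) + (1, 0) := by
  obtain ⟨Y, rfl⟩ : ∃ Y, W.height (x, Y) = y := W.surjective_height x y
  have hx : W.height (x, Y) = W.height (x + 1, Y) := (W.periodic x Y).symm
  rw [straighten_apply_height, hx, straighten_apply_height, angle_add_one, Prod.mk_add_mk, add_zero]

lemma abs_straighten_fst_sub_le_one (x y : ℝ) : |(W.straighten (x, y)).1 - x| ≤ 1 := by
  obtain ⟨Y, rfl⟩ : ∃ Y, W.height (x, Y) = y := W.surjective_height x y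
  rw [straighten_apply_height]
  exact W.abs_angle_sub_le_one x Y

lemma isCylinderDiffeo_straighten : IsCylinderDiffeo 1 W.straighten where
  contDiff := W.contDiff_circleMap.comp W.contDiff_graphMap_symm
  contDiff_symm := W.contDiff_graphMap.comp W.contDiff_circleMap_symm
  measurePreserving := measurePreserving_symm_trans_of_abs_det_fderiv_eq volume
    (W.contDiff_graphMap.differentiable (by simp)) W.contDiff_graphMap_symm.continuous.measurable
    (W.contDiff_circleMap.differentiable (by simp)) fun p => by
      rw [det_fderiv_graphMap, det_fderiv_circleMap]
  map_add := W.straighten_add_one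
  exists_eq_id := by
    obtain ⟨δ, hδ, hid⟩ := W.exists_eq_id
    refine ⟨δ / 2, half_pos hδ, fun x y hy => ?_⟩
    have hy' : 1 - δ < |y| := by linarith
    have happly := W.straighten_apply_height x y
    rwa [hid x y hy'.le, W.angle_eq_self hid hy', W.meanHeight_eq_self hid hy'.le] at happly

lemma straighten_snd_mem_Icc {x y a b : ℝ} (ha : W.height (x, a) ≤ y)
    (hb : y ≤ W.height (x, b)) :
    (W.straighten (x, y)).2 ∈ Icc (W.meanHeight a) (W.meanHeight b) := by
  obtain ⟨Y, rfl⟩ : ∃ Y, W.height (x, Y) = y := W.surjective_height x y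
  rw [straighten_apply_height]
  exact ⟨W.strictMono_meanHeight.monotone ((W.strictMono_height x).le_iff_le.1 ha),
    W.strictMono_meanHeight.monotone ((W.strictMono_height x).le_iff_le.1 hb)⟩

end GraphFoliation

/-- An increasing diffeomorphism of the line that is the identity near and below `-1` and the
translation by `-drop` near and above `1`. For `drop` close to `2` it squeezes `[-1, 1]` to a
short interval. -/
structure Flattening where
  toFun : ℝ → ℝ
  drop : ℝ
  drop_nonneg : 0 ≤ drop
  contDiff : ContDiff ℝ ∞ toFun
  deriv_pos : ∀ y, 0 < deriv toFun y
  exists_eq : ∃ δ ∈ Ioc (0 : ℝ) (1 / 2),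
    (∀ y ≤ -(1 - δ), toFun y = y) ∧ ∀ y ≥ 1 - δ, toFun y = y - drop

lemma exists_flattening {η : ℝ} (hη : 0 < η) : ∃ g : Flattening, 2 - η ≤ g.drop := by
  obtain ⟨δ, hδ, hδ_lt, hδη⟩ : ∃ δ : ℝ, 0 < δ ∧ δ < 1 / 2 ∧ 6 * δ ≤ η :=
    ⟨min (1 / 4) (η / 6), by positivity, by linarith [min_le_left (1 / 4) (η / 6)],
      by linarith [min_le_right (1 / 4) (η / 6)]⟩
  let b : ContDiffBump (0 : ℝ) := ⟨1 - 2 * δ, 1 - δ, by linarith, by linarith⟩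
  have hsupp : support b = Ioo (-(1 - δ)) (1 - δ) := by
    rw [b.support_eq, Real.ball_eq_Ioo, zero_sub, zero_add]
  have hb_int : 2 * (1 - 2 * δ) ≤ ∫ t, b t := by
    have hball := b.measure_closedBall_le_integral volume
    rwa [Real.volume_real_closedBall b.rIn_pos.le] at hball
  have hderiv (y : ℝ) :
      HasDerivAt (fun y => y - (1 - δ) * ∫ t in -1..y, b t) (1 - (1 - δ) * b y) y :=
    (hasDerivAt_id y).sub
      ((b.continuous.integral_hasStrictDerivAt (-1) y).hasDerivAt.const_mul (1 - δ))
  have hdrop : 2 - η ≤ (1 - δ) * ∫ t, b t := by nlinarith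
  refine ⟨⟨fun y => y - (1 - δ) * ∫ t in -1..y, b t, (1 - δ) * ∫ t, b t, ?_, ?_, fun y => ?_,
    δ, ⟨hδ, hδ_lt.le⟩, fun y hy => ?_, fun y hy => ?_⟩, hdrop⟩
  · exact mul_nonneg (by linarith) (integral_nonneg fun _ => b.nonneg)
  · refine contDiff_infty_iff_deriv.2 ⟨fun y => (hderiv y).differentiableAt, ?_⟩
    rw [funext fun y => (hderiv y).deriv]
    exact contDiff_const.sub (contDiff_const.mul b.contDiff)
  · rw [(hderiv y).deriv]
    nlinarith [b.le_one (x := y)]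
  · have hzero : ∫ t in -1..y, b t = ∫ _ in -1..y, (0 : ℝ) :=
      intervalIntegral.integral_congr fun t ht => notMem_support.1 fun hbt => by
        rw [hsupp] at hbt
        exact (hbt.1.trans_le (ht.2.trans (max_le (by linarith) hy))).false
    simp [hzero]
  · rw [intervalIntegral.integral_eq_integral_of_support_subset]
    exact hsupp.trans_subset fun t ht => ⟨by linarith [ht.1], ht.2.le.trans hy⟩

namespace Flattening

variable (g : Flattening)

lemma strictMono : StrictMono g.toFun := strictMono_of_deriv_pos g.deriv_pos

lemma apply_neg_one : g.toFun (-1) = -1 := by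
  obtain ⟨δ, hδ, hleft, -⟩ := g.exists_eq
  exact hleft _ (by linarith [hδ.1])

lemma apply_one : g.toFun 1 = 1 - g.drop := by
  obtain ⟨δ, hδ, -, hright⟩ := g.exists_eq
  exact hright _ (by linarith [hδ.1])

lemma drop_le_two : g.drop ≤ 2 := by
  have hlt := g.strictMono (show (-1 : ℝ) < 1 by norm_num)
  rw [apply_neg_one, apply_one] at hlt
  linarith

/-- The height function with a steep step: it is flat away from the curve `4 * Y = cos (2 * π * x)`
and climbs by `g.drop` across it, within a vertical distance of order `κ`. -/
noncomputable def stepHeight (κ : ℝ) (p : ℝ × ℝ) : ℝ :=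
  g.toFun p.2 + g.drop * Real.smoothTransition ((4 * p.2 - Real.cos (2 * Real.pi * p.1)) / κ)

lemma contDiff_stepHeight (κ : ℝ) : ContDiff ℝ ∞ (g.stepHeight κ) :=
  (g.contDiff.comp contDiff_snd).add
    (contDiff_const.mul (Real.smoothTransition.contDiff.comp (by fun_prop)))

lemma fderiv_stepHeight_pos {κ : ℝ} (hκ : 0 < κ) (p : ℝ × ℝ) :
    0 < fderiv ℝ (g.stepHeight κ) p (0, 1) := by
  set u : ℝ := (4 * p.2 - Real.cos (2 * Real.pi * p.1)) / κ
  have hg : HasDerivAt g.toFun (deriv g.toFun p.2) p.2 :=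
    (g.contDiff.differentiable (by simp) _).hasDerivAt
  have hstep : HasDerivAt Real.smoothTransition (deriv Real.smoothTransition u) u :=
    (Real.smoothTransition.contDiff.differentiable one_ne_zero _).hasDerivAt
  have hlin : HasDerivAt (fun Y => (4 * Y - Real.cos (2 * Real.pi * p.1)) / κ) (4 * 1 / κ) p.2 :=
    (((hasDerivAt_id _).const_mul 4).sub_const _).div_const _
  have hcomp : HasDerivAt
      (fun Y => Real.smoothTransition ((4 * Y - Real.cos (2 * Real.pi * p.1)) / κ))
      (deriv Real.smoothTransition u * (4 * 1 / κ)) p.2 :=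
    HasDerivAt.comp (h₂ := Real.smoothTransition) p.2 hstep hlin
  have hsum : HasDerivAt (fun Y => g.stepHeight κ (p.1, Y))
      (deriv g.toFun p.2 + g.drop * (deriv Real.smoothTransition u * (4 * 1 / κ))) p.2 :=
    hg.add (hcomp.const_mul g.drop)
  rw [(hasDerivAt_partial_snd ((g.contDiff_stepHeight κ).differentiable (by simp) p)).unique hsum]
  have hnonneg : 0 ≤ deriv Real.smoothTransition u := Real.smoothTransition.monotone.deriv_nonneg
  have := g.drop_nonneg
  have := g.deriv_pos p.2
  positivity

lemma stepHeight_of_le {κ x Y : ℝ} (hκ : 0 < κ) (hY : 4 * Y ≤ Real.cos (2 * Real.pi * x)) :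
    g.stepHeight κ (x, Y) = g.toFun Y := by
  have harg : (4 * Y - Real.cos (2 * Real.pi * x)) / κ ≤ 0 :=
    div_nonpos_of_nonpos_of_nonneg (by linarith) hκ.le
  simp [stepHeight, Real.smoothTransition.zero_of_nonpos harg]

lemma stepHeight_of_ge {κ x Y : ℝ} (hκ : 0 < κ) (hY : Real.cos (2 * Real.pi * x) + κ ≤ 4 * Y) :
    g.stepHeight κ (x, Y) = g.toFun Y + g.drop := by
  have harg : 1 ≤ (4 * Y - Real.cos (2 * Real.pi * x)) / κ := by
    rw [one_le_div hκ]
    linarith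
  simp [stepHeight, Real.smoothTransition.one_of_one_le harg]

/-- The foliation of the cylinder with height function `g.stepHeight κ`. -/
noncomputable def stepFoliation {κ : ℝ} (hκ : κ ∈ Ioc (0 : ℝ) 1) : GraphFoliation where
  height := g.stepHeight κ
  contDiff := g.contDiff_stepHeight κ
  periodic x Y := by simp only [stepHeight, mul_add, mul_one, Real.cos_add_two_pi]
  fderiv_pos := g.fderiv_stepHeight_pos hκ.1
  exists_eq_id := by
    obtain ⟨δ, hδ, hleft, hright⟩ := g.exists_eq
    refine ⟨δ, hδ.1, fun x Y hY => ?_⟩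
    have hcos_ge := Real.neg_one_le_cos (2 * Real.pi * x)
    have hcos_le := Real.cos_le_one (2 * Real.pi * x)
    rcases le_abs.1 hY with hY | hY
    · rw [g.stepHeight_of_ge hκ.1 (by linarith [hδ.2, hκ.2]), hright Y hY, sub_add_cancel]
    · rw [g.stepHeight_of_le hκ.1 (by linarith [hδ.2]), hleft Y (le_neg.1 hY)]

end Flattening

lemma integral_smoothTransition_step_le {f : ℝ → ℝ} (hf : Continuous f) {κ : ℝ} (hκ : 0 < κ)
    (a : ℝ) :
    ∫ t in 0..1, (Real.smoothTransition ((a + κ - f t) / κ) -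
        Real.smoothTransition ((a - f t) / κ)) ≤
      volume.real {t ∈ Icc (0 : ℝ) 1 | |f t - a| ≤ κ} := by
  set S : Set ℝ := {t | |f t - a| ≤ κ}
  have hS_meas : MeasurableSet S := (isClosed_le (by fun_prop) continuous_const).measurableSet
  have hvolume : ∫ t in Icc (0 : ℝ) 1, S.indicator 1 t =
      volume.real {t ∈ Icc (0 : ℝ) 1 | |f t - a| ≤ κ} := by
    rw [integral_indicator_one hS_meas, measureReal_restrict_apply hS_meas, inter_comm]
    rfl
  rw [← hvolume, intervalIntegral.integral_of_le zero_le_one, ← integral_Icc_eq_integral_Ioc]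
  refine integral_mono ?_ ((integrable_const 1).indicator hS_meas) fun t => ?_
  · have := Real.smoothTransition.continuous
    exact Continuous.integrableOn_Icc (by fun_prop)
  · by_cases ht : t ∈ S
    · rw [indicator_of_mem ht, Pi.one_apply]
      linarith [Real.smoothTransition.le_one ((a + κ - f t) / κ),
        Real.smoothTransition.nonneg ((a - f t) / κ)]
    · rw [indicator_of_notMem ht, sub_nonpos]
      rcases lt_abs.1 (lt_of_not_ge ht : κ < |f t - a|) with h | h
      · rw [Real.smoothTransition.zero_of_nonpos
          (div_nonpos_of_nonpos_of_nonneg (by linarith) hκ.le)]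
        exact Real.smoothTransition.nonneg _
      · rw [Real.smoothTransition.one_of_one_le (x := (a - f t) / κ)
          ((one_le_div hκ).2 (by linarith))]
        exact Real.smoothTransition.le_one _

lemma mem_Icc_arccos_of_abs_cos_sub_le {a κ t : ℝ} (ht : t ∈ Icc 0 Real.pi)
    (h : |Real.cos t - a| ≤ κ) : t ∈ Icc (Real.arccos (a + κ)) (Real.arccos (a - κ)) := by
  obtain ⟨hge, hle⟩ := abs_le.1 h
  rw [← Real.arccos_cos ht.1 ht.2]
  exact ⟨Real.antitone_arccos (by linarith), Real.antitone_arccos (by linarith)⟩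

lemma volume_real_abs_cos_sub_le (a κ : ℝ) (hκ : 0 ≤ κ) :
    volume.real {t ∈ Icc (0 : ℝ) 1 | |Real.cos (2 * Real.pi * t) - a| ≤ κ} ≤
      2 * ((Real.arccos (a - κ) - Real.arccos (a + κ)) / (2 * Real.pi)) := by
  set l := Real.arccos (a + κ) / (2 * Real.pi) with hl
  set u := Real.arccos (a - κ) / (2 * Real.pi) with hu
  have hlu : l ≤ u :=
    div_le_div_of_nonneg_right (Real.antitone_arccos (by linarith)) Real.two_pi_pos.le
  have hhalf (t : ℝ) (h0 : 0 ≤ t) (h1 : t ≤ 1 / 2)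
      (ht : |Real.cos (2 * Real.pi * t) - a| ≤ κ) : t ∈ Icc l u := by
    have hmem := mem_Icc_arccos_of_abs_cos_sub_le
      ⟨by positivity, by nlinarith [Real.pi_pos]⟩ ht
    rwa [mem_Icc, div_le_iff₀' Real.two_pi_pos, le_div_iff₀' Real.two_pi_pos]
  have hcover : {t ∈ Icc (0 : ℝ) 1 | |Real.cos (2 * Real.pi * t) - a| ≤ κ} ⊆
      Icc l u ∪ Icc (1 - u) (1 - l) := by
    rintro t ⟨⟨h0, h1⟩, ht⟩
    rcases le_total t (1 / 2) with hle | hge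
    · exact Or.inl (hhalf t h0 hle ht)
    · have hcos : Real.cos (2 * Real.pi * (1 - t)) = Real.cos (2 * Real.pi * t) := by
        rw [mul_sub, mul_one, Real.cos_two_pi_sub]
      obtain ⟨hl', hu'⟩ := hhalf (1 - t) (by linarith) (by linarith) (by rwa [hcos])
      exact Or.inr ⟨by linarith, by linarith⟩
  calc _ ≤ volume.real (Icc l u ∪ Icc (1 - u) (1 - l)) := measureReal_mono hcover
        (measure_union_lt_top measure_Icc_lt_top measure_Icc_lt_top).ne
    _ ≤ volume.real (Icc l u) + volume.real (Icc (1 - u) (1 - l)) := measureReal_union_le _ _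
    _ = 2 * ((Real.arccos (a - κ) - Real.arccos (a + κ)) / (2 * Real.pi)) := by
      rw [Real.volume_real_Icc_of_le hlu, Real.volume_real_Icc_of_le (by linarith), hl, hu]
      ring

lemma exists_volume_real_abs_cos_sub_le {w : ℝ} (hw : 0 < w) :
    ∃ κ ∈ Ioc (0 : ℝ) 1, ∀ a ∈ Icc (-1 : ℝ) 1,
      volume.real {t ∈ Icc (0 : ℝ) 1 | |Real.cos (2 * Real.pi * t) - a| ≤ κ} ≤ w := by
  obtain ⟨d, hd, harccos⟩ := Metric.uniformContinuousOn_iff_le.1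
    ((isCompact_Icc (a := (-2 : ℝ)) (b := 2)).uniformContinuousOn_of_continuous
      Real.continuous_arccos.continuousOn) w hw
  obtain ⟨κ, hκ, hκ_one, hκd⟩ : ∃ κ : ℝ, 0 < κ ∧ κ ≤ 1 ∧ 2 * κ ≤ d :=
    ⟨min 1 (d / 2), by positivity, min_le_left _ _, by linarith [min_le_right 1 (d / 2)]⟩
  refine ⟨κ, ⟨hκ, hκ_one⟩, fun a ha => (volume_real_abs_cos_sub_le a κ hκ.le).trans ?_⟩
  have hdist := harccos (a - κ) ⟨by linarith [ha.1], by linarith [ha.2]⟩ (a + κ)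
    ⟨by linarith [ha.1], by linarith [ha.2]⟩
    (by rw [Real.dist_eq, abs_le]; constructor <;> linarith)
  have hle := (le_abs_self _).trans hdist
  rw [← mul_div_assoc, div_le_iff₀ Real.two_pi_pos]
  nlinarith [Real.pi_gt_three]

namespace Flattening

variable (g : Flattening) {κ : ℝ} (hκ : κ ∈ Ioc (0 : ℝ) 1)

lemma meanHeight_stepFoliation_sub_le (a : ℝ) :
    (g.stepFoliation hκ).meanHeight ((a + κ) / 4) - (g.stepFoliation hκ).meanHeight (a / 4) ≤
      g.toFun ((a + κ) / 4) - g.toFun (a / 4) +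
        g.drop * volume.real {t ∈ Icc (0 : ℝ) 1 | |Real.cos (2 * Real.pi * t) - a| ≤ κ} := by
  have h_int (Y : ℝ) : IntervalIntegrable (fun t => g.stepHeight κ (t, Y)) volume 0 1 :=
    ((g.contDiff_stepHeight κ).continuous.comp (by fun_prop)).intervalIntegrable _ _
  have := Real.smoothTransition.continuous
  have hstep := integral_smoothTransition_step_le
    (f := fun t => Real.cos (2 * Real.pi * t)) (by fun_prop) hκ.1 a
  calc _ = ∫ t in 0..1, (g.toFun ((a + κ) / 4) - g.toFun (a / 4) + g.drop *
        (Real.smoothTransition ((a + κ - Real.cos (2 * Real.pi * t)) / κ) -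
          Real.smoothTransition ((a - Real.cos (2 * Real.pi * t)) / κ))) := by
        refine (intervalIntegral.integral_sub (h_int _) (h_int _)).symm.trans ?_
        refine intervalIntegral.integral_congr fun t _ => ?_
        simp only [stepHeight, mul_div_cancel₀ _ (four_ne_zero' ℝ)]
        ring
    _ = g.toFun ((a + κ) / 4) - g.toFun (a / 4) + g.drop * ∫ t in 0..1,
        (Real.smoothTransition ((a + κ - Real.cos (2 * Real.pi * t)) / κ) -
          Real.smoothTransition ((a - Real.cos (2 * Real.pi * t)) / κ)) := by
        rw [intervalIntegral.integral_add intervalIntegrable_const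
          (Continuous.intervalIntegrable (by fun_prop) _ _), intervalIntegral.integral_const_mul]
        simp
    _ ≤ _ := by
        gcongr
        exact g.drop_nonneg

lemma abs_stepFoliation_straighten_snd_sub_le {η x y y' : ℝ} (hη : 2 - η ≤ g.drop)
    (hy : y ∈ Icc (-1 + η) (1 - η)) (hy' : y' ∈ Icc (-1 + η) (1 - η)) :
    |((g.stepFoliation hκ).straighten (x, y)).2 - ((g.stepFoliation hκ).straighten (x, y')).2| ≤
      2 - g.drop + g.drop * volume.real
        {t ∈ Icc (0 : ℝ) 1 | |Real.cos (2 * Real.pi * t) - Real.cos (2 * Real.pi * x)| ≤ κ} := by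
  set a := Real.cos (2 * Real.pi * x)
  have ha_ge : -1 ≤ a := Real.neg_one_le_cos _
  have ha_le : a ≤ 1 := Real.cos_le_one _
  have hg_ge : -1 ≤ g.toFun (a / 4) :=
    g.apply_neg_one.symm.trans_le (g.strictMono.monotone (by linarith))
  have hg_le : g.toFun ((a + κ) / 4) ≤ 1 - g.drop :=
    (g.strictMono.monotone (by linarith [hκ.2])).trans_eq g.apply_one
  have hg_mono : g.toFun (a / 4) ≤ g.toFun ((a + κ) / 4) :=
    g.strictMono.monotone (by linarith [hκ.1])
  have hlow : (g.stepFoliation hκ).height (x, a / 4) ≤ -1 + η := by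
    refine (g.stepHeight_of_le hκ.1 (by linarith)).trans_le ?_
    linarith
  have hhigh : 1 - η ≤ (g.stepFoliation hκ).height (x, (a + κ) / 4) := by
    refine le_of_le_of_eq ?_ (g.stepHeight_of_ge hκ.1 (by linarith)).symm
    linarith
  have hmem {y : ℝ} (hy : y ∈ Icc (-1 + η) (1 - η)) :=
    (g.stepFoliation hκ).straighten_snd_mem_Icc (hlow.trans hy.1) (hy.2.trans hhigh)
  refine (Real.dist_le_of_mem_Icc (hmem hy) (hmem hy')).trans
    ((g.meanHeight_stepFoliation_sub_le hκ a).trans ?_)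
  linarith

end Flattening

lemma exists_isCylinderDiffeo_vertical_compression {η w : ℝ} (hη : 0 < η) (hw : 0 < w) :
    ∃ F, IsCylinderDiffeo 1 F ∧ (∀ z, |(F z).1 - z.1| ≤ 1) ∧
      ∀ x, ∀ y ∈ Icc (-1 + η) (1 - η), ∀ y' ∈ Icc (-1 + η) (1 - η),
        |(F (x, y)).2 - (F (x, y')).2| ≤ w := by
  obtain ⟨g, hg⟩ := exists_flattening (η := min η (w / 2)) (by positivity)
  obtain ⟨κ, hκ, hvol⟩ := exists_volume_real_abs_cos_sub_le (w := w / 4) (by positivity)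
  refine ⟨(g.stepFoliation hκ).straighten, (g.stepFoliation hκ).isCylinderDiffeo_straighten,
    fun z => (g.stepFoliation hκ).abs_straighten_fst_sub_le_one z.1 z.2, fun x y hy y' hy' => ?_⟩
  refine (g.abs_stepFoliation_straighten_snd_sub_le hκ
    (by linarith [min_le_left η (w / 2)]) hy hy').trans ?_
  have hcos := hvol _ ⟨Real.neg_one_le_cos (2 * Real.pi * x), Real.cos_le_one _⟩
  nlinarith [g.drop_nonneg, g.drop_le_two, min_le_right η (w / 2)]

/-- The horizontal dilation `(x, y) ↦ (c * x, y)` of the plane. -/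
noncomputable def horizontalDilation {c : ℝ} (hc : c ≠ 0) : (ℝ × ℝ) ≃L[ℝ] ℝ × ℝ :=
  (ContinuousLinearEquiv.smulLeft (Units.mk0 c hc)).prodCongr (ContinuousLinearEquiv.refl ℝ ℝ)

/-- The conjugate of `F` by a horizontal dilation, which turns a lift commuting with the rotation
by `1` into one commuting with the rotation by `1 / c`. -/
noncomputable def horizontalRescale {c : ℝ} (hc : c ≠ 0) (F : ℝ × ℝ ≃ ℝ × ℝ) : ℝ × ℝ ≃ ℝ × ℝ :=
  (horizontalDilation hc).symm.toEquiv.permCongr F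

lemma horizontalRescale_apply {c : ℝ} (hc : c ≠ 0) (F : ℝ × ℝ ≃ ℝ × ℝ) (x y : ℝ) :
    horizontalRescale hc F (x, y) = ((F (c * x, y)).1 / c, (F (c * x, y)).2) := by
  rw [div_eq_inv_mul]
  rfl

namespace IsCylinderDiffeo

variable {c : ℝ} {F : ℝ × ℝ ≃ ℝ × ℝ}

lemma eq_id_of_one_le_abs (hF : IsCylinderDiffeo c F) (x y : ℝ) (hy : 1 ≤ |y|) :
    F (x, y) = (x, y) := by
  obtain ⟨δ, hδ, hid⟩ := hF.exists_eq_id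
  exact hid x y (by linarith)

lemma natCast_mul (hF : IsCylinderDiffeo c F) (n : ℕ) : IsCylinderDiffeo (n * c) F where
  __ := hF
  map_add x y := by
    induction n with
    | zero => simp
    | succ n ih =>
      rw [Nat.cast_succ, add_one_mul, ← add_assoc, hF.map_add, ih]
      simp [add_assoc]

lemma horizontalRescale {a : ℝ} (hF : IsCylinderDiffeo a F) (hc : c ≠ 0) :
    IsCylinderDiffeo (a / c) (horizontalRescale hc F) where
  contDiff := (horizontalDilation hc).symm.contDiff.comp
    (hF.contDiff.comp (horizontalDilation hc).contDiff)
  contDiff_symm := (horizontalDilation hc).symm.contDiff.comp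
    (hF.contDiff_symm.comp (horizontalDilation hc).contDiff)
  measurePreserving := measurePreserving_linear_conj volume (horizontalDilation hc)
    hF.measurePreserving
  map_add x y := by
    simp only [horizontalRescale_apply, mul_add, mul_div_cancel₀ a hc, hF.map_add,
      Prod.fst_add, Prod.snd_add, Prod.mk_add_mk, add_div]
  exists_eq_id := by
    obtain ⟨δ, hδ, hid⟩ := hF.exists_eq_id
    refine ⟨δ, hδ, fun x y hy => ?_⟩
    rw [horizontalRescale_apply, hid _ _ hy, mul_div_cancel_left₀ x hc]

end IsCylinderDiffeo

lemma exists_isCylinderDiffeo_dist_lt {η d : ℝ} (hη : 0 < η) (hd : 0 < d) {q : ℕ} (hq : q ≠ 0) :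
    ∃ F, IsCylinderDiffeo (1 / q) F ∧ ∀ x, ∀ y ∈ Icc (-1 + η) (1 - η),
      ∀ y' ∈ Icc (-1 + η) (1 - η), dist (F (x, y)) (F (x, y')) < d := by
  obtain ⟨G, hG, hG_fst, hG_snd⟩ := exists_isCylinderDiffeo_vertical_compression hη (half_pos hd)
  obtain ⟨M, hM⟩ := exists_nat_gt (2 / d)
  have hM_pos : (0 : ℝ) < M := (by positivity : 0 < 2 / d).trans hM
  have hq_one : (1 : ℝ) ≤ q := by exact_mod_cast Nat.one_le_iff_ne_zero.2 hq
  have hN : 0 < (M * q : ℝ) := by positivity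
  refine ⟨horizontalRescale hN.ne' G, ?_, fun x y hy y' hy' => ?_⟩
  · have hF := (hG.horizontalRescale hN.ne').natCast_mul M
    rwa [mul_one_div, div_mul_cancel_left₀ hM_pos.ne', ← one_div] at hF
  · rw [horizontalRescale_apply, horizontalRescale_apply, Prod.dist_eq, max_lt_iff]
    refine ⟨?_, (hG_snd _ y hy y' hy').trans_lt (half_lt_self hd)⟩
    have hfst : |(G (M * q * x, y)).1 - (G (M * q * x, y')).1| ≤ 2 := by
      have h := abs_le.1 (hG_fst (M * q * x, y))
      have h' := abs_le.1 (hG_fst (M * q * x, y'))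
      rw [abs_le]
      constructor <;> linarith
    rw [Real.dist_eq, ← sub_div, abs_div, abs_of_pos hN, div_lt_iff₀ hN]
    rw [div_lt_iff₀' hd] at hM
    nlinarith

section Strip

lemma setIntegral_comp_of_map_add {E : Type*} [AddCommGroup E] [MeasurableSpace E]
    [MeasurableAdd E] {μ : Measure E} [μ.IsAddLeftInvariant] {v : E} {D : Set E}
    (hD : IsAddFundamentalDomain (AddSubgroup.zmultiples v) D μ) (hD_meas : MeasurableSet D)
    {K : E → E} (hK : MeasurePreserving K μ μ) (hKv : ∀ z, K (z + v) = K z + v)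
    {V : Type*} [NormedAddCommGroup V] [NormedSpace ℝ V] {f : E → V}
    (hf : AEStronglyMeasurable f μ) (hfv : Periodic f v) :
    ∫ z in D, f (K z) ∂μ = ∫ z in D, f z ∂μ := by
  have hK_displacement : Periodic (fun z => K z - z) v := fun z => by
    simp only [hKv, add_sub_add_right_eq_sub]
  have hK_vadd (g : AddSubgroup.zmultiples v) : Semiconj K (g +ᵥ ·) (g +ᵥ ·) := fun z => by
    have h := hK_displacement.map_vadd_zmultiples g z
    simp only [AddSubgroup.vadd_def, vadd_eq_add] at h ⊢
    rw [sub_eq_iff_eq_add.1 h]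
    abel
  have hK_preimage : IsAddFundamentalDomain (AddSubgroup.zmultiples v) (K ⁻¹' D) μ :=
    hD.preimage_of_equiv hK.quasiMeasurePreserving bijective_id hK_vadd
  have hfK : Periodic (f ∘ K) v := fun z => by
    rw [comp_apply, hKv, hfv, comp_apply]
  calc ∫ z in D, f (K z) ∂μ = ∫ z in K ⁻¹' D, f (K z) ∂μ :=
        hD.setIntegral_eq hK_preimage hfK.map_vadd_zmultiples
    _ = ∫ z in D, f z ∂μ := by
        rw [← setIntegral_map hD_meas (hK.map_eq.symm ▸ hf) hK.aemeasurable, hK.map_eq]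

lemma isAddFundamentalDomain_Ioc_prod_univ :
    IsAddFundamentalDomain (AddSubgroup.zmultiples ((1 : ℝ), (0 : ℝ)))
      (Ioc (0 : ℝ) 1 ×ˢ (univ : Set ℝ)) volume := by
  refine .mk' (measurableSet_Ioc.prod .univ).nullMeasurableSet fun z => ?_
  obtain ⟨n, hn, hn_unique⟩ := existsUnique_add_zsmul_mem_Ioc one_pos z.1 0
  refine ⟨⟨n • ((1 : ℝ), (0 : ℝ)), AddSubgroup.zsmul_mem_zmultiples _ _⟩, ?_, ?_⟩
  · simpa [AddSubgroup.vadd_def, add_comm] using hn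
  · rintro ⟨_, m, rfl⟩ hm
    obtain rfl : m = n := hn_unique m (by simpa [AddSubgroup.vadd_def, add_comm] using hm)
    rfl

lemma setIntegral_Ioc_prod_Icc {E : Type*} [NormedAddCommGroup E] [NormedSpace ℝ E]
    {g : ℝ × ℝ → E} (hg : Continuous g) {a b c d : ℝ} (hab : a ≤ b) (hcd : c ≤ d) :
    ∫ z in Ioc a b ×ˢ Icc c d, g z = ∫ s in c..d, ∫ t in a..b, g (t, s) := by
  have h_int : IntegrableOn (fun z => g z.swap) (Icc c d ×ˢ Ioc a b) (volume.prod volume) :=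
    ((hg.comp continuous_swap).continuousOn.integrableOn_compact
      (isCompact_Icc.prod isCompact_Icc)).mono_set (prod_mono_right Ioc_subset_Icc_self)
  simp only [intervalIntegral.integral_of_le hab, intervalIntegral.integral_of_le hcd,
    ← integral_Icc_eq_integral_Ioc (x := c)]
  rw [Measure.volume_eq_prod, ← setIntegral_prod_swap, setIntegral_prod _ h_int]
  rfl

/-- The strip `ℝ × [-1, 1]`, the universal cover of the cylinder `(ℝ/ℤ) × [-1, 1]`. -/
def strip : Set (ℝ × ℝ) := univ ×ˢ Icc (-1) 1

lemma measurableSet_strip : MeasurableSet strip := MeasurableSet.univ.prod measurableSet_Icc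

lemma eq_self_of_notMem_strip {K : ℝ × ℝ → ℝ × ℝ}
    (hid : ∀ x y, 1 ≤ |y| → K (x, y) = (x, y)) (z : ℝ × ℝ) (hz : z ∉ strip) : K z = z :=
  hid z.1 z.2 <| le_of_lt <| not_le.1 fun hy => hz ⟨mem_univ _, abs_le.1 hy⟩

lemma preimage_eq_self_of_injective {α : Type*} {f : α → α} (hf : Injective f) {s : Set α}
    (hid : ∀ z ∉ s, f z = z) : f ⁻¹' s = s := by
  ext z
  refine ⟨fun hfz => by_contra fun hz => hz (hid z hz ▸ hfz), fun hz => by_contra fun hfz => ?_⟩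
  have hfz_eq : f z = z := hf (hid _ hfz)
  exact hfz (mem_preimage.2 (hfz_eq.symm ▸ hz))

lemma preimage_strip {K : ℝ × ℝ → ℝ × ℝ} (hK : Injective K)
    (hid : ∀ x y : ℝ, 1 ≤ |y| → K (x, y) = (x, y)) : K ⁻¹' strip = strip :=
  preimage_eq_self_of_injective hK (eq_self_of_notMem_strip hid)

lemma setIntegral_Ioc_indicator_strip {V : Type*} [NormedAddCommGroup V] [NormedSpace ℝ V]
    {ψ : ℝ × ℝ → V} (hψ : Continuous ψ) :
    ∫ z in Ioc 0 1 ×ˢ univ, strip.indicator ψ z = ∫ s in -1..1, ∫ t in 0..1, ψ (t, s) := by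
  rw [setIntegral_indicator measurableSet_strip, strip, prod_inter_prod, inter_univ, univ_inter,
    setIntegral_Ioc_prod_Icc hψ zero_le_one (by norm_num)]

section MeasurePreserving

variable {K : ℝ × ℝ → ℝ × ℝ} (hK : MeasurePreserving K volume volume)
  (hK_add : ∀ x y, K (x + 1, y) = K (x, y) + (1, 0))
include hK hK_add

lemma setIntegral_Ioc_indicator_strip_comp {V : Type*} [NormedAddCommGroup V] [NormedSpace ℝ V]
    {φ : ℝ × ℝ → V} (hφ : Continuous φ) (hφ_add : ∀ x s, φ (x + 1, s) = φ (x, s)) :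
    ∫ z in Ioc 0 1 ×ˢ univ, strip.indicator φ (K z) =
      ∫ z in Ioc 0 1 ×ˢ univ, strip.indicator φ z := by
  have hperiodic : Periodic (strip.indicator φ) (1, 0) := fun ⟨x, y⟩ => by
    simp [indicator, strip, hφ_add]
  exact setIntegral_comp_of_map_add isAddFundamentalDomain_Ioc_prod_univ
    (measurableSet_Ioc.prod .univ) hK (fun ⟨x, y⟩ => by simpa using hK_add x y)
    (hφ.aestronglyMeasurable.indicator measurableSet_strip) hperiodic

variable (hK_id : ∀ x y, 1 ≤ |y| → K (x, y) = (x, y))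
include hK_id

lemma preimage_strip_ae_eq :
    K ⁻¹' strip =ᵐ[volume.restrict (Ioc 0 1 ×ˢ univ)] strip := by
  have hpre_meas : MeasurableSet (K ⁻¹' strip) := hK.measurable measurableSet_strip
  have hsubset : K ⁻¹' strip ⊆ strip := fun z hz => by_contra fun hz_notMem =>
    hz_notMem (eq_self_of_notMem_strip hK_id z hz_notMem ▸ hz)
  have hfinite : volume.restrict (Ioc 0 1 ×ˢ univ) strip ≠ ⊤ := by
    rw [Measure.restrict_apply measurableSet_strip, strip, prod_inter_prod, univ_inter, inter_univ,
      Measure.volume_eq_prod, Measure.prod_prod]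
    exact ENNReal.mul_ne_top measure_Ioc_lt_top.ne measure_Icc_lt_top.ne
  have hmass := setIntegral_Ioc_indicator_strip_comp hK hK_add
    (φ := fun _ => (1 : ℝ)) continuous_const fun _ _ => rfl
  have hpre_indicator : (fun z => strip.indicator (fun _ => (1 : ℝ)) (K z)) =
      (K ⁻¹' strip).indicator 1 := rfl
  rw [hpre_indicator, integral_indicator_one hpre_meas] at hmass
  have hmass_strip := hmass.trans (integral_indicator_one measurableSet_strip)
  exact ae_eq_of_subset_of_measure_ge hsubset
    ((measureReal_eq_measureReal_iff (measure_ne_top_of_subset hsubset hfinite) hfinite).1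
      hmass_strip).ge hpre_meas.nullMeasurableSet hfinite

lemma integral_cylinder_comp (hK_cont : Continuous K) {V : Type*} [NormedAddCommGroup V]
    [NormedSpace ℝ V] {φ : ℝ × ℝ → V} (hφ : Continuous φ)
    (hφ_add : ∀ x s, φ (x + 1, s) = φ (x, s)) :
    ∫ s in -1..1, ∫ t in 0..1, φ (K (t, s)) = ∫ s in -1..1, ∫ t in 0..1, φ (t, s) := by
  calc ∫ s in -1..1, ∫ t in 0..1, φ (K (t, s))
      = ∫ z in Ioc 0 1 ×ˢ univ, strip.indicator (φ ∘ K) z :=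
        (setIntegral_Ioc_indicator_strip (hφ.comp hK_cont)).symm
    _ = ∫ z in Ioc 0 1 ×ˢ univ, (K ⁻¹' strip).indicator (φ ∘ K) z :=
        integral_congr_ae (indicator_ae_eq_of_ae_eq_set (preimage_strip_ae_eq hK hK_add hK_id).symm)
    _ = ∫ z in Ioc 0 1 ×ˢ univ, strip.indicator φ z :=
        setIntegral_Ioc_indicator_strip_comp hK hK_add hφ hφ_add
    _ = ∫ s in -1..1, ∫ t in 0..1, φ (t, s) := setIntegral_Ioc_indicator_strip hφ

end MeasurePreserving

end Strip

lemma abs_sub_half_integral_le {I : ℝ → ℝ} (hI : Continuous I) {v e C η : ℝ} (hη : 0 ≤ η)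
    (hη_one : η ≤ 1) (hcore : ∀ y ∈ Icc (-1 + η) (1 - η), |v - I y| ≤ e)
    (hbound : ∀ y ∈ Icc (-1) 1, |v - I y| ≤ C) :
    |v - (1 / 2) * ∫ y in -1..1, I y| ≤ e + C * η := by
  have h_int (a b : ℝ) : IntervalIntegrable (fun y => v - I y) volume a b :=
    (continuous_const.sub hI).intervalIntegrable a b
  have he : 0 ≤ e := (abs_nonneg _).trans (hcore 0 ⟨by linarith, by linarith⟩)
  have hpiece {a b D : ℝ} (hab : a ≤ b) (h : ∀ y ∈ Icc a b, |v - I y| ≤ D) :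
      |∫ y in a..b, (v - I y)| ≤ D * (b - a) := by
    have hnorm := intervalIntegral.norm_integral_le_of_norm_le_const (f := fun y => v - I y)
      fun y hy => h y (Ioc_subset_Icc_self (uIoc_of_le hab ▸ hy))
    rwa [abs_of_nonneg (sub_nonneg.2 hab)] at hnorm
  have hsplit : 2 * (v - (1 / 2) * ∫ y in -1..1, I y) =
      (∫ y in -1..(-1 + η), (v - I y)) + (∫ y in (-1 + η)..(1 - η), (v - I y)) +
        ∫ y in (1 - η)..1, (v - I y) := by
    rw [intervalIntegral.integral_add_adjacent_intervals (h_int _ _) (h_int _ _),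
      intervalIntegral.integral_add_adjacent_intervals (h_int _ _) (h_int _ _),
      intervalIntegral.integral_sub intervalIntegrable_const (hI.intervalIntegrable _ _),
      intervalIntegral.integral_const, smul_eq_mul]
    ring
  have hbot := hpiece (a := -1) (b := -1 + η) (by linarith)
    fun y hy => hbound y ⟨hy.1, by linarith [hy.2]⟩
  have hmid := hpiece (a := -1 + η) (b := 1 - η) (by linarith) hcore
  have htop := hpiece (a := 1 - η) (b := 1) (by linarith)
    fun y hy => hbound y ⟨by linarith [hy.1], hy.2⟩
  have hsum := abs_add_three (∫ y in -1..(-1 + η), (v - I y))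
    (∫ y in (-1 + η)..(1 - η), (v - I y)) (∫ y in (1 - η)..1, (v - I y))
  rw [← hsplit, abs_mul, abs_two] at hsum
  nlinarith

lemma abs_integral_sub_integral_le {f g : ℝ → ℝ} (hf : Continuous f) (hg : Continuous g) {e : ℝ}
    (h : ∀ t, |f t - g t| ≤ e) : |(∫ t in 0..1, f t) - ∫ t in 0..1, g t| ≤ e := by
  rw [← intervalIntegral.integral_sub (hf.intervalIntegrable _ _) (hg.intervalIntegrable _ _)]
  simpa using intervalIntegral.norm_integral_le_of_norm_le_const (a := 0) (b := 1)
    (f := fun t => f t - g t) fun t _ => h t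

lemma IsCylinderDiffeo.abs_integral_circle_sub_le {F : ℝ × ℝ ≃ ℝ × ℝ} (hF : IsCylinderDiffeo 1 F)
    {η d e C : ℝ} (hη : 0 ≤ η) (hη_one : η ≤ 1)
    (hdist : ∀ x, ∀ y ∈ Icc (-1 + η) (1 - η), ∀ y' ∈ Icc (-1 + η) (1 - η),
      dist (F (x, y)) (F (x, y')) < d)
    {ψ : ℝ × ℝ → ℝ} (hψ : Continuous ψ) (hψ_add : ∀ x s, ψ (x + 1, s) = ψ (x, s))
    (hψ_close : ∀ a ∈ strip, ∀ b ∈ strip, dist a b < d → |ψ a - ψ b| ≤ e)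
    (hψ_osc : ∀ a ∈ strip, ∀ b ∈ strip, |ψ a - ψ b| ≤ C) {y : ℝ}
    (hy : y ∈ Icc (-1 + η) (1 - η)) :
    |(∫ t in 0..1, ψ (F (t, y))) - (1 / 2) * ∫ s in -1..1, ∫ t in 0..1, ψ (t, s)| ≤
      e + C * η := by
  have hF_cont : Continuous F := hF.contDiff.continuous
  have hcore {y : ℝ} (hy : y ∈ Icc (-1 + η) (1 - η)) : y ∈ Icc (-1) 1 :=
    ⟨by linarith [hy.1], by linarith [hy.2]⟩
  have hF_strip (t : ℝ) {s : ℝ} (hs : s ∈ Icc (-1) 1) : F (t, s) ∈ strip := by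
    rw [← mem_preimage, preimage_strip F.injective hF.eq_id_of_one_le_abs]
    exact ⟨mem_univ _, hs⟩
  have hcircle_cont : Continuous fun s => ∫ t in 0..1, ψ (F (t, s)) :=
    intervalIntegral.continuous_parametric_intervalIntegral_of_continuous' (by fun_prop) 0 1
  rw [← integral_cylinder_comp hF.measurePreserving hF.map_add hF.eq_id_of_one_le_abs hF_cont
    hψ hψ_add]
  refine abs_sub_half_integral_le hcircle_cont hη hη_one (fun s hs => ?_) fun s hs => ?_
  · exact abs_integral_sub_integral_le (by fun_prop) (by fun_prop) fun t =>
      hψ_close _ (hF_strip t (hcore hy)) _ (hF_strip t (hcore hs)) (hdist t y hy s hs)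
  · exact abs_integral_sub_integral_le (by fun_prop) (by fun_prop) fun t =>
      hψ_osc _ (hF_strip t (hcore hy)) _ (hF_strip t hs)

section Domination

lemma continuous_of_abs_sub_le {X : Type*} [TopologicalSpace X] {ρ : X × X → ℝ}
    (hρ : Continuous ρ) (hρ_diag : ∀ a, ρ (a, a) = 0) {ψ : X → ℝ}
    (hψ : ∀ a b, |ψ a - ψ b| ≤ ρ (a, b)) : Continuous ψ := by
  refine continuous_iff_continuousAt.2 fun b => tendsto_iff_dist_tendsto_zero.2 ?_
  have hρ_tendsto : Tendsto (fun a => ρ (a, b)) (𝓝 b) (𝓝 0) :=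
    hρ_diag b ▸ (hρ.comp (Continuous.prodMk_left b)).tendsto b
  exact squeeze_zero (fun _ => dist_nonneg) (fun a => hψ a b) hρ_tendsto

/-- The `1`-periodic functions whose increments are dominated by `ρ`. If `ρ` is continuous and
vanishes on the diagonal, they form an equicontinuous family on the cylinder. -/
def dominatedBy (ρ : (ℝ × ℝ) × (ℝ × ℝ) → ℝ) : Set (ℝ × ℝ → ℝ) :=
  {ψ | (∀ a b, |ψ a - ψ b| ≤ ρ (a, b)) ∧ ∀ x s, ψ (x + 1, s) = ψ (x, s)}

variable {ρ : (ℝ × ℝ) × (ℝ × ℝ) → ℝ} {ψ : ℝ × ℝ → ℝ}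

lemma map_sub_intCast_of_mem_dominatedBy (hψ : ψ ∈ dominatedBy ρ) (x s : ℝ) (n : ℤ) :
    ψ (x - n, s) = ψ (x, s) := by
  have hperiodic : Periodic (fun x => ψ (x, s)) 1 := fun x => hψ.2 x s
  simpa only [mul_one] using (hperiodic.int_mul n).sub_eq x

variable (hρ : Continuous ρ)
include hρ

lemma exists_forall_abs_sub_le_of_mem_dominatedBy :
    ∃ C > 0, ∀ ψ ∈ dominatedBy ρ, ∀ a ∈ strip, ∀ b ∈ strip, |ψ a - ψ b| ≤ C := by
  have hK : IsCompact (Icc (0 : ℝ) 1 ×ˢ Icc (-1 : ℝ) 1) := isCompact_Icc.prod isCompact_Icc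
  obtain ⟨C, hC⟩ := (hK.prod hK).exists_bound_of_continuousOn hρ.continuousOn
  refine ⟨max C 1, by positivity, fun ψ hψ a ha b hb => le_max_of_le_left ?_⟩
  have hfract (x : ℝ) : x - ⌊x⌋ ∈ Icc (0 : ℝ) 1 := ⟨Int.fract_nonneg x, (Int.fract_lt_one x).le⟩
  calc |ψ a - ψ b| = |ψ (a.1 - ⌊a.1⌋, a.2) - ψ (b.1 - ⌊b.1⌋, b.2)| := by
        rw [map_sub_intCast_of_mem_dominatedBy hψ, map_sub_intCast_of_mem_dominatedBy hψ]
    _ ≤ ρ ((a.1 - ⌊a.1⌋, a.2), (b.1 - ⌊b.1⌋, b.2)) := hψ.1 _ _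
    _ ≤ C := (le_abs_self _).trans (hC _ ⟨⟨hfract _, ha.2⟩, hfract _, hb.2⟩)

lemma exists_dist_lt_imp_abs_sub_le_of_mem_dominatedBy (hρ_diag : ∀ a, ρ (a, a) = 0) {e : ℝ}
    (he : 0 < e) :
    ∃ d > 0, ∀ ψ ∈ dominatedBy ρ, ∀ a ∈ strip, ∀ b ∈ strip, dist a b < d → |ψ a - ψ b| ≤ e := by
  have hK : IsCompact (Icc (-1 : ℝ) 2 ×ˢ Icc (-1 : ℝ) 1) := isCompact_Icc.prod isCompact_Icc
  obtain ⟨d, hd, hρd⟩ := Metric.uniformContinuousOn_iff_le.1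
    ((hK.prod hK).uniformContinuousOn_of_continuous hρ.continuousOn) e he
  refine ⟨min d 1, by positivity, fun ψ hψ a ha b hb hab => ?_⟩
  set a' : ℝ × ℝ := (a.1 - ⌊a.1⌋, a.2)
  set b' : ℝ × ℝ := (b.1 - ⌊a.1⌋, b.2)
  have hdist : dist a' b' = dist a b := by
    rw [Prod.dist_eq, Prod.dist_eq, dist_sub_right]
  have habs : |a'.1 - b'.1| ≤ 1 := by
    rw [sub_sub_sub_cancel_right]
    exact (le_max_left _ _).trans (hab.le.trans (min_le_right _ _))
  have hfract : a'.1 ∈ Icc (0 : ℝ) 1 := ⟨Int.fract_nonneg a.1, (Int.fract_lt_one a.1).le⟩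
  have ha' : a' ∈ Icc (-1 : ℝ) 2 ×ˢ Icc (-1 : ℝ) 1 :=
    ⟨⟨by linarith [hfract.1], by linarith [hfract.2]⟩, ha.2⟩
  have hb' : b' ∈ Icc (-1 : ℝ) 2 ×ˢ Icc (-1 : ℝ) 1 :=
    ⟨⟨by linarith [hfract.1, (abs_le.1 habs).2], by linarith [hfract.2, (abs_le.1 habs).1]⟩, hb.2⟩
  have hclose : dist (ρ (a', b')) (ρ (a', a')) ≤ e :=
    hρd (a', b') ⟨ha', hb'⟩ (a', a') ⟨ha', ha'⟩ (by
      rw [Prod.dist_eq, dist_self, max_eq_right dist_nonneg, dist_comm, hdist]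
      exact hab.le.trans (min_le_left _ _))
  rw [hρ_diag, dist_zero_right] at hclose
  calc |ψ a - ψ b| = |ψ a' - ψ b'| := by
        rw [map_sub_intCast_of_mem_dominatedBy hψ, map_sub_intCast_of_mem_dominatedBy hψ]
    _ ≤ ρ (a', b') := hψ.1 _ _
    _ ≤ e := (le_abs_self _).trans hclose

lemma exists_isCylinderDiffeo_equidistributing (hρ_diag : ∀ a, ρ (a, a) = 0) {ε η : ℝ}
    (hε : 0 < ε) (hη : 0 < η) {q : ℕ} (hq : q ≠ 0) :
    ∃ F, IsCylinderDiffeo (1 / q) F ∧ ∀ y ∈ Icc (-1 + η) (1 - η), ∀ ψ ∈ dominatedBy ρ,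
      |(∫ t in 0..1, ψ (F (t, y))) - (1 / 2) * ∫ s in -1..1, ∫ t in 0..1, ψ (t, s)| ≤ ε := by
  obtain ⟨C, hC, hosc⟩ := exists_forall_abs_sub_le_of_mem_dominatedBy hρ
  obtain ⟨d, hd, hclose⟩ :=
    exists_dist_lt_imp_abs_sub_le_of_mem_dominatedBy hρ hρ_diag (half_pos hε)
  obtain ⟨η', hη', hη'_one, hη'_le, hη'_C⟩ : ∃ η' > 0, η' ≤ 1 ∧ η' ≤ η ∧ C * η' ≤ ε / 2 :=
    ⟨min η (min 1 (ε / 2 / C)), by positivity, min_le_of_right_le (min_le_left _ _),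
      min_le_left _ _, (le_div_iff₀' hC).1 (min_le_of_right_le (min_le_right _ _))⟩
  obtain ⟨F, hF, hF_dist⟩ := exists_isCylinderDiffeo_dist_lt hη' hd hq
  have hq_real : (q : ℝ) ≠ 0 := Nat.cast_ne_zero.2 hq
  have hF_one : IsCylinderDiffeo 1 F := by
    simpa only [mul_one_div_cancel hq_real] using hF.natCast_mul q
  refine ⟨F, hF, fun y hy ψ hψ => ?_⟩
  have h := hF_one.abs_integral_circle_sub_le hη'.le hη'_one hF_dist
    (continuous_of_abs_sub_le hρ hρ_diag hψ.1) hψ.2 (hclose ψ hψ) (hosc ψ hψ)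
    (Icc_subset_Icc (by linarith) (by linarith) hy)
  linarith

end Domination

lemma continuous_euclDist : Continuous fun p : (ℝ × ℝ) × (ℝ × ℝ) => euclDist p.1 p.2 := by
  unfold euclDist
  fun_prop

lemma euclDist_self (a : ℝ × ℝ) : euclDist a a = 0 := by
  simp [euclDist]

lemma exists_isCylinderDiffeo_equidistributing_comp {H : ℝ × ℝ → ℝ × ℝ} (hH : Continuous H)
    (hH_add : ∀ x y, H (x + 1, y) = H (x, y) + (1, 0)) {ε η : ℝ} (hε : 0 < ε) (hη : 0 < η)
    {q : ℕ} (hq : q ≠ 0) :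
    ∃ Ht, IsCylinderDiffeo (1 / q) Ht ∧ ∀ y ∈ Icc (-1 + η) (1 - η), ∀ φ : ℝ × ℝ → ℝ,
      (∀ a b, |φ a - φ b| ≤ euclDist a b) → (∀ x s, φ (x + 1, s) = φ (x, s)) →
        |(∫ t in 0..1, φ (H (Ht (t, y)))) -
          (1 / 2) * ∫ s in -1..1, ∫ t in 0..1, φ (H (t, s))| ≤ ε := by
  obtain ⟨Ht, hHt, hequi⟩ := exists_isCylinderDiffeo_equidistributing
    (ρ := fun p => euclDist (H p.1) (H p.2)) (continuous_euclDist.comp (hH.prodMap hH))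
    (fun a => euclDist_self (H a)) hε hη hq
  refine ⟨Ht, hHt, fun y hy φ hφ hφ_add => hequi y hy (φ ∘ H) ⟨fun a b => hφ _ _, fun x s => ?_⟩⟩
  rw [comp_apply, comp_apply, hH_add]
  rcases H (x, s) with ⟨u, v⟩
  simpa using hφ_add u v

theorem compose_with_equidistribution_map_general {H : ℝ × ℝ → ℝ × ℝ} (hH : Continuous H)
    (hH_vol : MeasurePreserving H volume volume)
    (hH_add : ∀ x y, H (x + 1, y) = H (x, y) + (1, 0))
    (hH_id : ∀ x y, 1 ≤ |y| → H (x, y) = (x, y)) {ε η : ℝ} (hε : 0 < ε) (hη : 0 < η)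
    {q : ℕ} (hq : q ≠ 0) :
    ∃ Ht, IsCylinderDiffeo (1 / q) Ht ∧ ∀ y ∈ Icc (-1 + η) (1 - η), ∀ φ : ℝ × ℝ → ℝ,
      (∀ a b, |φ a - φ b| ≤ euclDist a b) → (∀ x s, φ (x + 1, s) = φ (x, s)) →
        |(∫ t in 0..1, φ (H (Ht (t, y)))) -
          (1 / 2) * ∫ s in -1..1, ∫ t in 0..1, φ (t, s)| ≤ ε := by
  obtain ⟨Ht, hHt, hequi⟩ := exists_isCylinderDiffeo_equidistributing_comp hH hH_add hε hη hq
  refine ⟨Ht, hHt, fun y hy φ hφ hφ_add => ?_⟩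
  rw [← integral_cylinder_comp hH_vol hH_add hH_id hH
    (continuous_of_abs_sub_le continuous_euclDist euclDist_self hφ) hφ_add]
  exact hequi y hy φ hφ hφ_add

end EquidistributingMap

/-- **The key construction step in Proposition 3.2.** Let `H` be (the lift of) an area-preserving
homeomorphism of the cylinder equal to the identity on the boundary. For every `ε > 0` and
`q ≥ 1`, there is a `C^∞`, Lebesgue measure-preserving diffeomorphism `H̃` commuting with
translation by `(1/q, 0)` and equal to the identity near the boundary, such that the composition
`Ĥ = H ∘ H̃` sends the uniform measure of every horizontal circle at height
`y ∈ [−1+ε/8, 1−ε/8]` to a measure `ε/8`-close to the normalized area measure of the cylinder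
in the Kantorovich distance (tested on 1-periodic 1-Lipschitz functions). -/
theorem compose_with_equidistribution_map
    (H : ℝ × ℝ ≃ₜ ℝ × ℝ)
    (hHvol : MeasurePreserving H volume volume)
    (hHper : ∀ x y : ℝ, H (x + 1, y) = H (x, y) + ((1 : ℝ), (0 : ℝ)))
    (hHid : ∀ x y : ℝ, 1 ≤ |y| → H (x, y) = (x, y))
    (ε : ℝ) (hε : 0 < ε) (q : ℕ) (hq : 1 ≤ q) :
    ∃ Ht : ℝ × ℝ ≃ ℝ × ℝ,
      ContDiff ℝ (⊤ : ℕ∞) ⇑Ht ∧ ContDiff ℝ (⊤ : ℕ∞) ⇑Ht.symm ∧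
      MeasurePreserving Ht volume volume ∧
      (∀ x y : ℝ, Ht (x + 1 / q, y) = Ht (x, y) + ((1 / q : ℝ), (0 : ℝ))) ∧
      (∃ δ > 0, ∀ x y : ℝ, 1 - δ ≤ |y| → Ht (x, y) = (x, y)) ∧
      ∀ y ∈ Set.Icc (-1 + ε / 8) (1 - ε / 8), ∀ φ : ℝ × ℝ → ℝ,
        (∀ a b : ℝ × ℝ, |φ a - φ b| ≤ euclDist a b) →
        (∀ x s : ℝ, φ (x + 1, s) = φ (x, s)) →
        |(∫ t in (0 : ℝ)..1, φ (H (Ht (t, y)))) -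
            (1 / 2) * ∫ s in (-1 : ℝ)..1, ∫ t in (0 : ℝ)..1, φ (t, s)| ≤ ε / 8 := by
  obtain ⟨Ht, hHt, hequi⟩ := compose_with_equidistribution_map_general H.continuous hHvol hHper
    hHid (by positivity : 0 < ε / 8) (by positivity : 0 < ε / 8) (Nat.one_le_iff_ne_zero.1 hq)
  exact ⟨Ht, hHt.contDiff, hHt.contDiff_symm, hHt.measurePreserving, hHt.map_add,
    hHt.exists_eq_id, hequi⟩
end
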